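/- (Theorem 1.2, part 1) Let d ≥ 3 and 1 ≤ m ≤ d−2. Assume λ > 0 satisfies χ(λ) := e^λ (m/(d+1) + (1 − m/(d+1)) q(d+1−m)) < 1. Then there is a constant c depending only on d such that for every u > 0, limsup_{N→∞} sup_{j∈ℤ, A∈A^j_m} |A|^{−1} log E[exp(λ Σ_{x∈A} 1{H_x ≤ D^j_{uN^{d−1}}})] ≤ c u (e^λ − 1)/(1 − χ(λ)). -/

import Mathlib

open MeasureTheory Filter
open scoped ENNReal Classical

namespace DiscCyl

/-- The lattice `ℤ^{d+1}`. -/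
abbrev Lat (d : ℕ) := Fin (d + 1) → ℤ

/-- The discrete cylinder `E = (ℤ/Nℤ)^d × ℤ`. -/
abbrev Cyl (d N : ℕ) := (Fin d → ZMod N) × ℤ

instance (N : ℕ) : MeasurableSpace (ZMod N) := ⊤

instance (N : ℕ) : Countable (ZMod N) := by
  cases N with
  | zero => exact inferInstanceAs (Countable ℤ)
  | succ n => exact inferInstanceAs (Countable (Fin (n + 1)))

/-- The canonical projection `π_E : ℤ^{d+1} → E`. -/
def projE (d N : ℕ) (v : Lat d) : Cyl d N :=
  (fun i => (v i.castSucc : ZMod N), v (Fin.last d))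

/-- The `2(d+1)` unit vectors `±e_i` of `ℤ^{d+1}`. -/
def unitVecs (d : ℕ) : Finset (Lat d) :=
  Finset.image (fun p : Fin (d + 1) × Bool => Pi.single p.1 (if p.2 then (1 : ℤ) else -1))
    Finset.univ

/-- One-step transition probability of simple random walk on the cylinder:
each of the `2(d+1)` unit moves of `ℤ^{d+1}` is taken with probability `1/(2(d+1))`
and projected to `E`. -/
noncomputable def stepProb (d N : ℕ) (x y : Cyl d N) : ℝ≥0∞ :=
  (((unitVecs d).filter fun e => x + projE d N e = y).card : ℝ≥0∞) / (2 * (d + 1))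

/-- `Pl` is the family of laws (indexed by the starting point) of simple random walk
on the cylinder `E = (ℤ/Nℤ)^d × ℤ`. -/
def IsCylRW (d N : ℕ) (Pl : Cyl d N → Measure (ℕ → Cyl d N)) : Prop :=
  (∀ x, IsProbabilityMeasure (Pl x)) ∧
    ∀ (x : Cyl d N) (n : ℕ) (γ : ℕ → Cyl d N),
      Pl x {ω | ∀ i ≤ n, ω i = γ i} =
        (if γ 0 = x then 1 else 0) * ∏ i ∈ Finset.range n, stepProb d N (γ i) (γ (i + 1))

/-- The lattice `ℤ^ν`. -/
abbrev ZLat (ν : ℕ) := Fin ν → ℤ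

/-- Unit vectors of `ℤ^ν`. -/
def zUnitVecs (ν : ℕ) : Set (ZLat ν) :=
  {v | ∃ i, v = Pi.single i 1 ∨ v = Pi.single i (-1)}

/-- One-step transition probability of simple random walk on `ℤ^ν`. -/
noncomputable def zStep (ν : ℕ) (x y : ZLat ν) : ℝ≥0∞ :=
  if y - x ∈ zUnitVecs ν then (2 * ν : ℝ≥0∞)⁻¹ else 0

/-- `Ql` is the family of laws of simple random walk on `ℤ^ν`. -/
def IsLatRW (ν : ℕ) (Ql : ZLat ν → Measure (ℕ → ZLat ν)) : Prop :=
  (∀ x, IsProbabilityMeasure (Ql x)) ∧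
    ∀ (x : ZLat ν) (n : ℕ) (γ : ℕ → ZLat ν),
      Ql x {ω | ∀ i ≤ n, ω i = γ i} =
        (if γ 0 = x then 1 else 0) * ∏ i ∈ Finset.range n, zStep ν (γ i) (γ (i + 1))

/-- `q(ν)`: the return probability to the origin of simple random walk on `ℤ^ν`. -/
noncomputable def retProb (ν : ℕ) (Ql : ZLat ν → Measure (ℕ → ZLat ν)) : ℝ :=
  ((Ql 0) {ω | ∃ n : ℕ, 1 ≤ n ∧ ω n = 0}).toReal

/-- Entrance time `H_U` (with value `⊤` if `U` is never entered). -/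
noncomputable def entT {X : Type*} (U : Set X) (ω : ℕ → X) : ℕ∞ :=
  sInf {t : ℕ∞ | ∃ n : ℕ, ω n ∈ U ∧ t = n}

/-- Exit time `T_U`. -/
noncomputable def exitT {X : Type*} (U : Set X) (ω : ℕ → X) : ℕ∞ :=
  entT Uᶜ ω

/-- `after t f ω = t + f (θ_t ω)`, with value `⊤` when `t = ⊤`. -/
noncomputable def after {X : Type*} (t : ℕ∞) (f : (ℕ → X) → ℕ∞) (ω : ℕ → X) : ℕ∞ :=
  t.recTopCoe ⊤ fun m => (m : ℕ∞) + f fun k => ω (k + m)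

/-- The block `C_j = (ℤ/Nℤ)^d × ([(j-3/4)N, (j+3/4)N] ∩ ℤ)`. -/
def Cblk (d N : ℕ) (j : ℤ) : Set (Cyl d N) :=
  {x | ((j : ℝ) - 3 / 4) * N ≤ (x.2 : ℝ) ∧ (x.2 : ℝ) ≤ ((j : ℝ) + 3 / 4) * N}

/-- The block `B_j = (ℤ/Nℤ)^d × [(j-1)N, (j+1)N]`. -/
def Bblk (d N : ℕ) (j : ℤ) : Set (Cyl d N) :=
  {x | (j - 1) * (N : ℤ) ≤ x.2 ∧ x.2 ≤ (j + 1) * (N : ℤ)}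

/-- The block `B̃_j = (ℤ/Nℤ)^d × [(j-2)N+1, (j+2)N-1]`. -/
def Btl (d N : ℕ) (j : ℤ) : Set (Cyl d N) :=
  {x | (j - 2) * (N : ℤ) + 1 ≤ x.2 ∧ x.2 ≤ (j + 2) * (N : ℤ) - 1}

/-- `D^j_1`: time of the first departure from `B̃_j` after the first return to `B_j`. -/
noncomputable def oneExc (d N : ℕ) (j : ℤ) (ω : ℕ → Cyl d N) : ℕ∞ :=
  after (entT (Bblk d N j) ω) (exitT (Btl d N j)) ω

/-- `D^j_k`: time of the `k`-th departure from `B̃_j` (after successive returns to `B_j`). -/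
noncomputable def DD (d N : ℕ) (j : ℤ) : ℕ → (ℕ → Cyl d N) → ℕ∞
  | 0, _ => 0
  | k + 1, ω => after (DD d N j k ω) (oneExc d N j) ω

/-- The law `P` of the walk with initial distribution uniform on `B_0`. -/
noncomputable def lawP (d N : ℕ) (Pl : Cyl d N → Measure (ℕ → Cyl d N)) :
    Measure (ℕ → Cyl d N) :=
  ((N : ℝ≥0∞) ^ d * (2 * N + 1))⁻¹ •
    Measure.sum fun x : Cyl d N => if x ∈ Bblk d N 0 then Pl x else 0

/-- Nearest-neighbour adjacency on the cylinder. -/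
def adj (d N : ℕ) (x y : Cyl d N) : Prop :=
  x ≠ y ∧ ∃ e ∈ unitVecs d, y = x + projE d N e

/-- `x` and `y` are connected by a nearest-neighbour path inside `S`. -/
def connIn (d N : ℕ) (S : Set (Cyl d N)) (x y : Cyl d N) : Prop :=
  Relation.ReflTransGen (fun a b => a ∈ S ∧ b ∈ S ∧ adj d N a b) x y

/-- `S` is a connected set. -/
def IsConnIn (d N : ℕ) (S : Set (Cyl d N)) : Prop :=
  ∀ x ∈ S, ∀ y ∈ S, connIn d N S x y

/-- The boundary `∂U`. -/
def bdry (d N : ℕ) (U : Set (Cyl d N)) : Set (Cyl d N) :=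
  {x | x ∉ U ∧ ∃ y ∈ U, adj d N x y}

/-- `ℓ^∞`-norm on `ℤ^{d+1}`. -/
def linf {d : ℕ} (v : Lat d) : ℕ := Finset.univ.sup fun i => (v i).natAbs

/-- `ℓ^∞`-distance induced on the cylinder. -/
noncomputable def cylDist (d N : ℕ) (x y : Cyl d N) : ℕ :=
  sInf {r : ℕ | ∃ v : Lat d, projE d N v = y - x ∧ linf v = r}

/-- `S` has `ℓ^∞`-diameter at least `L`. -/
def diamGE (d N : ℕ) (S : Set (Cyl d N)) (L : ℕ) : Prop :=
  ∃ x ∈ S, ∃ y ∈ S, L ≤ cylDist d N x y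

/-- `X_{[0,n]}`: the set of points visited up to time `n`. -/
def ran {X : Type*} (ω : ℕ → X) (n : ℕ) : Set X := {y | ∃ i ≤ n, ω i = y}

/-- The set of points visited up to the (possibly infinite) time `t`. -/
def ranE {X : Type*} (ω : ℕ → X) (t : ℕ∞) : Set X :=
  {y | ∃ i : ℕ, (i : ℕ∞) ≤ t ∧ ω i = y}

/-- `L_m`: projections to `E` of `m`-dimensional affine coordinate lattices of `ℤ^{d+1}`. -/
def Lcoll (d N m : ℕ) : Set (Set (Cyl d N)) :=
  {F | ∃ I : Finset (Fin (d + 1)), I.card = m ∧ ∃ y : Lat d,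
      F = (fun v => projE d N (y + v)) '' {v : Lat d | ∀ i ∉ I, v i = 0}}

/-- `A^j_m`: nonempty subsets of `C_j` contained in some `F ∈ L_m`. -/
def Adm (d N : ℕ) (j : ℤ) (m : ℕ) : Set (Finset (Cyl d N)) :=
  {A | A.Nonempty ∧ ↑A ⊆ Cblk d N j ∧ ∃ F ∈ Lcoll d N m, (↑A : Set (Cyl d N)) ⊆ F}

/-- The segment `{x + k·e : 0 ≤ k ≤ L}` (addition via `π_E`). -/
def segment (d N : ℕ) (x : Cyl d N) (e : Lat d) (L : ℕ) : Set (Cyl d N) :=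
  {y | ∃ k : ℕ, k ≤ L ∧ y = x + projE d N ((k : ℤ) • e)}

/-- The event `V_{K,j,t}` (with `k = ⌊t⌋` excursions). -/
def Vev (d N : ℕ) (K : ℝ) (j : ℤ) (k : ℕ) : Set (ℕ → Cyl d N) :=
  {ω | ∀ x ∈ Cblk d N j, ∀ e ∈ unitVecs d, ∃ i : ℕ, (i : ℝ) < Real.sqrt N ∧
      ∀ l : ℕ, i ≤ l → l ≤ i + ⌊K * Real.log N⌋₊ →
        x + projE d N ((l : ℤ) • e) ∉ ranE ω (DD d N j k ω)}

/-- The event `U_{K,j,t}` (with `k = ⌊t⌋` excursions). -/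
def Uev (d N : ℕ) (K : ℝ) (j : ℤ) (k : ℕ) : Set (ℕ → Cyl d N) :=
  {ω | ∀ F ∈ Lcoll d N 2, ∀ n : ℕ, (n : ℕ∞) ≤ DD d N j k ω →
      ∀ O₁ O₂ : Set (Cyl d N),
        O₁ ⊆ (F ∩ Cblk d N j) \ ran ω n → O₂ ⊆ (F ∩ Cblk d N j) \ ran ω n →
        IsConnIn d N O₁ → IsConnIn d N O₂ →
        diamGE d N O₁ ⌊K * Real.log N⌋₊ → diamGE d N O₂ ⌊K * Real.log N⌋₊ →
        ∀ p ∈ O₁, ∀ q ∈ O₂, connIn d N ((F ∩ Cblk d N j) \ ran ω n) p q}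

/-- A (finite) set `S` disconnects the cylinder. -/
def Disconnects (d N : ℕ) (S : Set (Cyl d N)) : Prop :=
  S.Finite ∧ ∃ M₀ : ℕ, ∀ M : ℕ, M₀ ≤ M → ∀ x y : Cyl d N,
    (M : ℤ) ≤ x.2 → y.2 ≤ -(M : ℤ) → ¬ connIn d N Sᶜ x y

/-- The disconnection time `T_N`. -/
noncomputable def discT (d N : ℕ) (ω : ℕ → Cyl d N) : ℕ∞ :=
  sInf {t : ℕ∞ | ∃ n : ℕ, Disconnects d N (ran ω n) ∧ t = n}

/-- `r ≤ t` for `t : ℕ∞` and a real threshold `r` (trivially true when `t = ⊤`). -/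
def geReal (t : ℕ∞) (r : ℝ) : Prop := ∀ n : ℕ, t = (n : ℕ∞) → r ≤ n

/-- `r < t` for `t : ℕ∞` and a real threshold `r` (trivially true when `t = ⊤`). -/
def gtReal (t : ℕ∞) (r : ℝ) : Prop := ∀ n : ℕ, t = (n : ℕ∞) → r < n

/-- `φ_j(z) = E_z[exp(λ Σ_{x∈A} 1{H_x < T_{B̃_j}})]`. -/
noncomputable def phi (d N : ℕ) (Pl : Cyl d N → Measure (ℕ → Cyl d N)) (j : ℤ) (lam : ℝ)
    (A : Finset (Cyl d N)) (z : Cyl d N) : ℝ :=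
  ∫ ω, Real.exp (lam * ∑ x ∈ A, if entT {x} ω < exitT (Btl d N j) ω then (1 : ℝ) else 0)
    ∂(Pl z)

/-- `‖φ_j‖_∞`. -/
noncomputable def phiSup (d N : ℕ) (Pl : Cyl d N → Measure (ℕ → Cyl d N)) (j : ℤ) (lam : ℝ)
    (A : Finset (Cyl d N)) : ℝ :=
  ⨆ z : Cyl d N, phi d N Pl j lam A z

/-- `q_N = sup {P_z[H_F < T_{B̃_j}] : F ∈ L_m, z ∈ ∂F}`. -/
noncomputable def qNval (d N m : ℕ) (Pl : Cyl d N → Measure (ℕ → Cyl d N)) (j : ℤ) : ℝ :=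
  sSup {r : ℝ | ∃ F ∈ Lcoll d N m, ∃ z ∈ bdry d N F,
      r = ((Pl z) {ω | entT F ω < exitT (Btl d N j) ω}).toReal}

/-- The times `τ_k`: `τ_0` is the entrance time of `(ℤ/Nℤ)^d × Nℤ`, and `τ_{k+1}` is the
first time after `τ_k` at which the vertical component has moved by exactly `N`. -/
noncomputable def tauT (d N : ℕ) : ℕ → (ℕ → Cyl d N) → ℕ∞
  | 0, ω => entT {x : Cyl d N | (N : ℤ) ∣ x.2} ω
  | k + 1, ω =>
      (tauT d N k ω).recTopCoe ⊤ fun m =>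
        sInf {t : ℕ∞ | ∃ n : ℕ, m < n ∧ ((ω n).2 - (ω m).2).natAbs = N ∧ t = n}

/-- `*`-adjacency on `ℤ²`. -/
def starAdj (x y : ℤ × ℤ) : Prop :=
  x ≠ y ∧ (x.1 - y.1).natAbs ≤ 1 ∧ (x.2 - y.2).natAbs ≤ 1

/-!
If `h ≥ 1` is superharmonic in `B̃_j` and its mean over the neighbours of each `x ∈ A` is at most
`e^{-λ} h(x)`, then `h(X_n)` multiplied by `e^λ` for each point of `A` visited before time `n` is a
supermartingale during an excursion. If moreover `h ≤ 1 + ε` on the boundary of `B_j`,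
where all excursions but the first begin, then each of these multiplies the exponential moment by at
most `1 + ε`.

Take `h = 1 + κ G_A`, where `G_A` is the sum over `A` of a Green function of the cylinder given by
its Fourier modes in the torus directions. The boundary of `B_j` is at height at least `N / 4` from
`A`, so that `ε = O(κ |A| N^{1-d})`, and the `u N^{d-1}` excursions contribute `O(κ u |A|)` to the
logarithm. The condition on `A` holds for `κ = (e^λ - 1) / (1 - χ(λ))` as soon as
`G_A ≤ 1 + χ(λ) / (e^λ - 1)` on `A`. By the hypothesis `χ(λ) < 1` this bound lies strictly above the
Green function `1 / ((1 - m / (d + 1)) (1 - q(d + 1 - m)))` of an `m`-dimensional coordinate plane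
in `ℤ^{d+1}`, and `G_A` exceeds the latter by arbitrarily little: the first `n` steps of the lazy
walk lift to `ℤ^{d+1}` when `n < N`, and the remaining ones contribute an error, controlled by
Fourier modes, that is small for large `n` because a plane of codimension at least three is
transient.
-/

/-! ### Markov families on path space -/

section MarkovFamily

variable {X : Type*}

/-- The path that visits `x` first and then follows `ω`. -/
def consPath (x : X) (ω : ℕ → X) : ℕ → X
  | 0 => x
  | n + 1 => ω n

/-- The event that a path agrees with `γ` up to time `n` (included). -/
def prefixEvent (n : ℕ) (γ : ℕ → X) : Set (ℕ → X) := {ω | ∀ i ≤ n, ω i = γ i}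

/-- The family of all `prefixEvent n γ` with `n ≥ k`. -/
def prefixEvents (X : Type*) (k : ℕ) : Set (Set (ℕ → X)) :=
  {S | ∃ n ≥ k, ∃ γ : ℕ → X, S = prefixEvent n γ}

lemma isPiSystem_prefixEvents (X : Type*) (k : ℕ) : IsPiSystem (prefixEvents X k) := by
  rintro _ ⟨n, hn, γ, rfl⟩ _ ⟨n', -, γ', rfl⟩ ⟨ω₀, hγ, hγ'⟩
  refine ⟨max n n', hn.trans (le_max_left _ _), ω₀, Set.ext fun ω => ⟨?_, fun h => ?_⟩⟩
  · rintro ⟨h, h'⟩ i hi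
    rcases le_max_iff.1 hi with hi | hi
    · rw [h i hi, hγ i hi]
    · rw [h' i hi, hγ' i hi]
  · exact ⟨fun i hi => by rw [h i (le_max_of_le_left hi), hγ i hi],
      fun i hi => by rw [h i (le_max_of_le_right hi), hγ' i hi]⟩

lemma setOf_apply_mem_eq_iUnion_prefixEvent {i n : ℕ} (hi : i ≤ n) (s : Set X) :
    {ω : ℕ → X | ω i ∈ s} = ⋃ g : {g : Fin (n + 1) → X // g (Fin.ofNat (n + 1) i) ∈ s},
      prefixEvent n (g.1 ∘ Fin.ofNat (n + 1)) := by
  have val_ofNat : ∀ l ≤ n, ((Fin.ofNat (n + 1) l : Fin (n + 1)) : ℕ) = l := fun l hl =>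
    Nat.mod_eq_of_lt (Nat.lt_succ_of_le hl)
  ext ω
  simp only [Set.mem_iUnion, Set.mem_ofPred_eq]
  constructor
  · intro h
    exact ⟨⟨fun l => ω l, by simpa only [val_ofNat i hi] using h⟩,
      fun l hl => by simp only [Function.comp_apply, val_ofNat l hl]⟩
  · rintro ⟨⟨g, hg⟩, h⟩
    rwa [h i hi]

variable [MeasurableSpace X]

lemma measurable_consPath (x : X) : Measurable (consPath x) := by
  refine measurable_pi_lambda _ fun n => ?_
  cases n with
  | zero => exact measurable_const
  | succ n => exact measurable_pi_apply n

variable [MeasurableSingletonClass X]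

lemma measurableSet_prefixEvent (n : ℕ) (γ : ℕ → X) : MeasurableSet (prefixEvent n γ) := by
  simp only [prefixEvent, Set.ofPred_forall]
  exact .iInter fun i => .iInter fun _ => measurable_pi_apply i (measurableSet_singleton _)

lemma generateFrom_prefixEvents (X : Type*) [MeasurableSpace X] [MeasurableSingletonClass X]
    [Countable X] (k : ℕ) :
    (MeasurableSpace.pi : MeasurableSpace (ℕ → X)) =
      MeasurableSpace.generateFrom (prefixEvents X k) := by
  apply le_antisymm
  · refine iSup_le fun i => ?_
    rintro _ ⟨s, -, rfl⟩
    have hpre : (fun ω : ℕ → X => ω i) ⁻¹' s = {ω | ω i ∈ s} := rfl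
    rw [hpre, setOf_apply_mem_eq_iUnion_prefixEvent (le_max_left i k)]
    refine @MeasurableSet.iUnion _ _ (_) _ _ fun g => ?_
    exact MeasurableSpace.measurableSet_generateFrom ⟨_, le_max_right _ _, _, rfl⟩
  · refine MeasurableSpace.generateFrom_le ?_
    rintro _ ⟨n, -, γ, rfl⟩
    exact measurableSet_prefixEvent n γ

lemma measure_eq_of_prefixEvent [Countable X] (k : ℕ) {μ ν : Measure (ℕ → X)}
    [IsFiniteMeasure μ]
    (h : ∀ n ≥ k, ∀ γ : ℕ → X, μ (prefixEvent n γ) = ν (prefixEvent n γ)) : μ = ν := by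
  refine Measure.ext_of_generateFrom_of_cover_subset (S := prefixEvents X k)
    (T := Set.range fun g : Fin (k + 1) → X => prefixEvent k (g ∘ Fin.ofNat (k + 1)))
    (generateFrom_prefixEvents X k) (isPiSystem_prefixEvents X k) ?_ (Set.countable_range _) ?_ ?_
    ?_
  · rintro _ ⟨g, rfl⟩
    exact ⟨k, le_rfl, _, rfl⟩
  · rw [Set.sUnion_range, Set.eq_univ_iff_forall]
    intro ω
    have hω : ω ∈ {ω : ℕ → X | ω k ∈ Set.univ} := Set.mem_univ _
    rw [setOf_apply_mem_eq_iUnion_prefixEvent le_rfl, Set.mem_iUnion] at hω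
    exact Set.mem_iUnion.2 ⟨_, hω.choose_spec⟩
  · exact fun _ _ => measure_ne_top _ _
  · rintro _ ⟨n, hn, γ, rfl⟩
    exact h n hn γ

/-- `L x`, for `x : X`, is the law of the Markov chain started at `x` with transition
probabilities `p`, described through the probabilities of its finite paths. -/
structure IsMarkovFamily (p : X → X → ℝ≥0∞) (L : X → Measure (ℕ → X)) : Prop where
  isProbabilityMeasure : ∀ x, IsProbabilityMeasure (L x)
  prefixEvent_eq : ∀ x n γ, L x (prefixEvent n γ) =
    (if γ 0 = x then 1 else 0) * ∏ i ∈ Finset.range n, p (γ i) (γ (i + 1))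

namespace IsMarkovFamily

variable {p : X → X → ℝ≥0∞} {L : X → Measure (ℕ → X)}

lemma map_consPath_prefixEvent (h : IsMarkovFamily p L) (x y : X) (n : ℕ) (γ : ℕ → X) :
    (L y).map (consPath x) (prefixEvent (n + 1) γ) =
      if y = γ 1 then
        (if γ 0 = x then 1 else 0) * ∏ i ∈ Finset.range n, p (γ (i + 1)) (γ (i + 1 + 1))
      else 0 := by
  rw [Measure.map_apply (measurable_consPath x) (measurableSet_prefixEvent _ _)]
  by_cases h0 : γ 0 = x
  · have hpre : consPath x ⁻¹' prefixEvent (n + 1) γ = prefixEvent n fun i => γ (i + 1) := by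
      ext ω
      refine ⟨fun hω i hi => hω (i + 1) (by omega), fun hω i hi => ?_⟩
      cases i with
      | zero => exact h0.symm
      | succ i => exact hω i (by omega)
    simp only [hpre, h.prefixEvent_eq, h0, if_true, one_mul, zero_add, eq_comm (a := y)]
    split_ifs <;> simp
  · have hpre : consPath x ⁻¹' prefixEvent (n + 1) γ = ∅ :=
      Set.eq_empty_of_forall_notMem fun ω hω => h0 (hω 0 (Nat.zero_le _)).symm
    simp [hpre, h0]

theorem eq_sum_map_consPath [Countable X] (h : IsMarkovFamily p L) (x : X) :
    L x = Measure.sum fun y => p x y • (L y).map (consPath x) := by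
  have := h.isProbabilityMeasure x
  refine measure_eq_of_prefixEvent 1 fun n hn γ => ?_
  obtain ⟨n, rfl⟩ := Nat.exists_eq_add_of_le' hn
  rw [Measure.sum_apply _ (measurableSet_prefixEvent _ _), h.prefixEvent_eq,
    Finset.prod_range_succ']
  simp only [Measure.smul_apply, h.map_consPath_prefixEvent, smul_eq_mul, mul_ite, mul_zero,
    tsum_ite_eq]
  split_ifs with h0
  · simp [h0, mul_comm]
  · simp

lemma ae_apply_zero_eq (h : IsMarkovFamily p L) (x : X) : ∀ᵐ ω ∂(L x), ω 0 = x := by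
  have := h.isProbabilityMeasure x
  have hx := h.prefixEvent_eq x 0 fun _ => x
  simp only [if_true, Finset.range_zero, Finset.prod_empty, mul_one] at hx
  filter_upwards [(mem_ae_iff_prob_eq_one (measurableSet_prefixEvent _ _)).2 hx] with ω hω
  exact hω 0 le_rfl

end IsMarkovFamily

end MarkovFamily

/-! ### Nearest-neighbour walks on abelian groups -/

section NbrMean

variable {ι E : Type*} [AddCommGroup E] {e : ι → E} {f g : E → ℝ} {z : E}

/-- The neighbours of `z` for the directions `e` are the points `z + e i` and `z - e i`. -/
def IsNbr (e : ι → E) (z w : E) : Prop := ∃ i, w = z + e i ∨ w = z - e i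

lemma isNbr_add (e : ι → E) (z : E) (i : ι) : IsNbr e z (z + e i) := ⟨i, Or.inl rfl⟩

lemma isNbr_sub (e : ι → E) (z : E) (i : ι) : IsNbr e z (z - e i) := ⟨i, Or.inr rfl⟩

variable [Fintype ι]

/-- The mean of `f` over the neighbours of `z`, counted with multiplicity. -/
noncomputable def nbrMean (e : ι → E) (f : E → ℝ) (z : E) : ℝ :=
  (∑ i, (f (z + e i) + f (z - e i))) / (2 * Fintype.card ι)

/-- The transition probabilities of the walk that jumps to a uniformly chosen neighbour. -/
noncomputable def nbrStep (e : ι → E) (x y : E) : ℝ≥0∞ :=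
  (∑ i, ((if y = x + e i then 1 else 0) + if y = x - e i then 1 else 0)) / (2 * Fintype.card ι)

lemma nbrMean_mono (h : ∀ w, IsNbr e z w → f w ≤ g w) : nbrMean e f z ≤ nbrMean e g z := by
  refine div_le_div_of_nonneg_right (Finset.sum_le_sum fun i _ => ?_) (by positivity)
  exact add_le_add (h _ (isNbr_add e z i)) (h _ (isNbr_sub e z i))

lemma nbrMean_add (e : ι → E) (f g : E → ℝ) (z : E) :
    nbrMean e (fun w => f w + g w) z = nbrMean e f z + nbrMean e g z := by
  simp only [nbrMean, ← add_div, ← Finset.sum_add_distrib]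
  congr 1
  exact Finset.sum_congr rfl fun i _ => by ring

lemma nbrMean_const_mul (e : ι → E) (c : ℝ) (f : E → ℝ) (z : E) :
    nbrMean e (fun w => c * f w) z = c * nbrMean e f z := by
  simp only [nbrMean, ← mul_add, ← Finset.mul_sum, mul_div_assoc]

lemma nbrMean_sum {κ : Type*} (e : ι → E) (s : Finset κ) (f : κ → E → ℝ) (z : E) :
    nbrMean e (fun w => ∑ k ∈ s, f k w) z = ∑ k ∈ s, nbrMean e (f k) z := by
  simp only [nbrMean, ← Finset.sum_add_distrib, ← Finset.sum_div]
  rw [Finset.sum_comm]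

lemma nbrMean_const [Nonempty ι] (e : ι → E) (c : ℝ) (z : E) : nbrMean e (fun _ => c) z = c := by
  have : (Fintype.card ι : ℝ) ≠ 0 := Nat.cast_ne_zero.2 Fintype.card_ne_zero
  simp only [nbrMean, Finset.sum_const, Finset.card_univ, nsmul_eq_mul]
  field_simp
  ring

lemma nbrMean_comp_sub_right (e : ι → E) (f : E → ℝ) (x z : E) :
    nbrMean e (fun w => f (w - x)) z = nbrMean e f (z - x) := by
  simp only [nbrMean, add_sub_right_comm, sub_right_comm]

lemma ofReal_nbrMean [Nonempty ι] (hf : ∀ w, IsNbr e z w → 0 ≤ f w) :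
    ENNReal.ofReal (nbrMean e f z) =
      (∑ i, (ENNReal.ofReal (f (z + e i)) + ENNReal.ofReal (f (z - e i)))) /
        (2 * Fintype.card ι) := by
  have hadd i := hf _ (isNbr_add e z i)
  have hsub i := hf _ (isNbr_sub e z i)
  rw [nbrMean, ENNReal.ofReal_div_of_pos (by have := Fintype.card_pos (α := ι); positivity),
    ENNReal.ofReal_sum_of_nonneg fun i _ => add_nonneg (hadd i) (hsub i),
    ENNReal.ofReal_mul zero_le_two]
  simp only [ENNReal.ofReal_add (hadd _) (hsub _), ENNReal.ofReal_ofNat, ENNReal.ofReal_natCast]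

lemma tsum_nbrStep_mul (e : ι → E) (x : E) (Φ : E → ℝ≥0∞) :
    ∑' y, nbrStep e x y * Φ y =
      (∑ i, (Φ (x + e i) + Φ (x - e i))) / (2 * Fintype.card ι) := by
  simp only [nbrStep, div_eq_mul_inv, Finset.sum_mul, add_mul, ite_mul, one_mul, zero_mul]
  rw [Summable.tsum_finsetSum fun _ _ => ENNReal.summable]
  refine Finset.sum_congr rfl fun i _ => ?_
  rw [ENNReal.tsum_add, tsum_ite_eq, tsum_ite_eq, mul_comm, mul_comm (Φ (x - e i))]

end NbrMean

namespace IsMarkovFamily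

variable {ι E : Type*} [Fintype ι] [AddCommGroup E] [Countable E] [MeasurableSpace E]
  [MeasurableSingletonClass E] {e : ι → E} {L : E → Measure (ℕ → E)}

lemma lintegral_le_ofReal_nbrMean [Nonempty ι] (h : IsMarkovFamily (nbrStep e) L) (x : E)
    (F : (ℕ → E) → ℝ≥0∞) (φ : E → ℝ) (hφ : ∀ w, IsNbr e x w → 0 ≤ φ w)
    (hF : ∀ w, IsNbr e x w → ∫⁻ ω, F (consPath x ω) ∂(L w) ≤ ENNReal.ofReal (φ w)) :
    ∫⁻ ω, F ω ∂(L x) ≤ ENNReal.ofReal (nbrMean e φ x) := by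
  calc ∫⁻ ω, F ω ∂(L x)
      = ∑' y, nbrStep e x y * ∫⁻ ω, F ω ∂((L y).map (consPath x)) := by
        conv_lhs => rw [h.eq_sum_map_consPath x, lintegral_sum_measure]
        simp only [lintegral_smul_measure, smul_eq_mul]
    _ ≤ ∑' y, nbrStep e x y * ∫⁻ ω, F (consPath x ω) ∂(L y) := by
        exact ENNReal.tsum_le_tsum fun y => mul_le_mul_right (lintegral_map_le F (consPath x)) _
    _ ≤ ENNReal.ofReal (nbrMean e φ x) := by
        rw [tsum_nbrStep_mul, ofReal_nbrMean hφ]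
        gcongr with i
        · exact hF _ (isNbr_add e x i)
        · exact hF _ (isNbr_sub e x i)

lemma real_apply_eq_nbrMean (h : IsMarkovFamily (nbrStep e) L) (x : E) {S : Set (ℕ → E)}
    (hS : MeasurableSet S) :
    (L x).real S = nbrMean e (fun y => (L y).real (consPath x ⁻¹' S)) x := by
  have := h.isProbabilityMeasure
  have hsum : L x S = ∑' y, nbrStep e x y * L y (consPath x ⁻¹' S) := by
    conv_lhs => rw [h.eq_sum_map_consPath x, Measure.sum_apply _ hS]
    simp only [Measure.smul_apply, Measure.map_apply (measurable_consPath x) hS, smul_eq_mul]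
  rw [measureReal_def, hsum, tsum_nbrStep_mul, ENNReal.toReal_div, ENNReal.toReal_sum (by simp)]
  simp [nbrMean, measureReal_def, ENNReal.toReal_add]

end IsMarkovFamily

section HitProb

variable {E : Type*} [MeasurableSpace E]

/-- The probability that the walk started at `y` ever visits `a`. -/
noncomputable def hitProb (L : E → Measure (ℕ → E)) (a y : E) : ℝ := (L y).real {ω | ∃ n, ω n = a}

variable [MeasurableSingletonClass E]

lemma measurableSet_exists_ge_apply_eq (m : ℕ) (a : E) :
    MeasurableSet {ω : ℕ → E | ∃ n ≥ m, ω n = a} := by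
  simp only [Set.ofPred_exists, Set.ofPred_and]
  exact .iUnion fun n => .inter (.const _)
    (measurable_pi_apply (X := fun _ : ℕ => E) n (measurableSet_singleton a))

lemma measurableSet_exists_apply_eq (a : E) : MeasurableSet {ω : ℕ → E | ∃ n, ω n = a} := by
  simpa using measurableSet_exists_ge_apply_eq 0 a

variable {ι : Type*} [Fintype ι] [AddCommGroup E] {e : ι → E} {L : E → Measure (ℕ → E)}

lemma hitProb_self (h : IsMarkovFamily (nbrStep e) L) (a : E) : hitProb L a a = 1 := by
  have := h.isProbabilityMeasure a
  rw [hitProb, measureReal_def, (mem_ae_iff_prob_eq_one (measurableSet_exists_apply_eq a)).1,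
    ENNReal.toReal_one]
  filter_upwards [h.ae_apply_zero_eq a] with ω hω using ⟨0, hω⟩

variable [Countable E]

lemma nbrMean_hitProb_of_ne (h : IsMarkovFamily (nbrStep e) L) {a y : E} (hy : y ≠ a) :
    nbrMean e (hitProb L a) y = hitProb L a y := by
  have hpre : consPath y ⁻¹' {ω | ∃ n, ω n = a} = {ω | ∃ n, ω n = a} := by
    ext ω
    refine ⟨fun ⟨n, hn⟩ => ?_, fun ⟨n, hn⟩ => ⟨n + 1, hn⟩⟩
    cases n with
    | zero => exact absurd hn hy
    | succ n => exact ⟨n, hn⟩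
  simp only [hitProb, h.real_apply_eq_nbrMean y (measurableSet_exists_apply_eq a), hpre]
  rfl

lemma nbrMean_hitProb_self (h : IsMarkovFamily (nbrStep e) L) (a : E) :
    nbrMean e (hitProb L a) a = (L a).real {ω | ∃ n ≥ 1, ω n = a} := by
  have hpre : consPath a ⁻¹' {ω | ∃ n ≥ 1, ω n = a} = {ω | ∃ n, ω n = a} := by
    ext ω
    refine ⟨fun ⟨n, hn, hω⟩ => ?_, fun ⟨n, hω⟩ => ⟨n + 1, Nat.le_add_left 1 n, hω⟩⟩
    obtain ⟨m, rfl⟩ := Nat.exists_eq_add_of_le' hn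
    exact ⟨m, hω⟩
  simp only [h.real_apply_eq_nbrMean a (measurableSet_exists_ge_apply_eq 1 a), hpre]
  rfl

end HitProb

/-! ### The walks on the lattice and on the cylinder -/

section Directions

/-- The coordinate directions of `ℤ^ν`. -/
def latDir (ν : ℕ) (i : Fin ν) : ZLat ν := Pi.single i 1

/-- The coordinate directions of the cylinder. -/
def cylDir (d N : ℕ) (i : Fin (d + 1)) : Cyl d N := projE d N (latDir (d + 1) i)

/-- The unit vector `± e_i` of `ℤ^n`, the sign being given by the Boolean. -/
def signedUnit {n : ℕ} (p : Fin n × Bool) : Fin n → ℤ := Pi.single p.1 (if p.2 then 1 else -1)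

lemma signedUnit_injective (n : ℕ) : Function.Injective (signedUnit (n := n)) := by
  rintro ⟨i, a⟩ ⟨j, b⟩ h
  have hi := congrFun h i
  by_cases hij : i = j
  · subst hij
    cases a <;> cases b <;> simp [signedUnit] at hi ⊢
  · rw [signedUnit, signedUnit, Pi.single_eq_same, Pi.single_eq_of_ne hij] at hi
    cases a <;> simp at hi

lemma sum_signedUnit {M : Type*} [AddCommMonoid M] {n : ℕ} (f : (Fin n → ℤ) → M) :
    ∑ p, f (signedUnit p) = ∑ i, (f (latDir n i) + f (-latDir n i)) := by
  simp [Fintype.sum_prod_type, signedUnit, latDir, Pi.single_neg]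

lemma projE_sub (d N : ℕ) (v w : Lat d) : projE d N (v - w) = projE d N v - projE d N w := by
  ext <;> simp [projE]

lemma projE_neg (d N : ℕ) (v : Lat d) : projE d N (-v) = -projE d N v := by ext <;> simp [projE]

lemma stepProb_eq_nbrStep (d N : ℕ) : stepProb d N = nbrStep (cylDir d N) := by
  ext x y
  have hunit : unitVecs d = Finset.univ.image signedUnit := rfl
  have hcard : (((unitVecs d).filter fun v => x + projE d N v = y).card : ℝ≥0∞) =
      ∑ p : Fin (d + 1) × Bool, if y = x + projE d N (signedUnit p) then 1 else 0 := by
    rw [hunit, Finset.card_filter, Finset.sum_image (signedUnit_injective (d + 1)).injOn]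
    simp only [Nat.cast_sum, Nat.cast_ite, Nat.cast_one, Nat.cast_zero, eq_comm]
  rw [stepProb, hcard, sum_signedUnit fun v => if y = x + projE d N v then (1 : ℝ≥0∞) else 0]
  simp only [nbrStep, cylDir, projE_neg, sub_eq_add_neg, Fintype.card_fin, Nat.cast_add,
    Nat.cast_one]
  exact congrArg (· / _) (Finset.sum_congr rfl fun i _ => by congr)

lemma mem_zUnitVecs {ν : ℕ} {v : ZLat ν} : v ∈ zUnitVecs ν ↔ ∃ p, signedUnit p = v := by
  constructor
  · rintro ⟨i, rfl | rfl⟩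
    exacts [⟨(i, true), rfl⟩, ⟨(i, false), rfl⟩]
  · rintro ⟨⟨i, b⟩, rfl⟩
    cases b
    exacts [⟨i, Or.inr rfl⟩, ⟨i, Or.inl rfl⟩]

lemma zStep_eq_nbrStep (ν : ℕ) : zStep ν = nbrStep (latDir ν) := by
  ext x y
  have hsum : (∑ p, if y - x = signedUnit p then (1 : ℝ≥0∞) else 0) =
      if y - x ∈ zUnitVecs ν then 1 else 0 := by
    rw [← Finset.sum_image (f := fun v => if y - x = v then (1 : ℝ≥0∞) else 0)
      (signedUnit_injective ν).injOn, Finset.sum_ite_eq]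
    simp only [Finset.mem_image, Finset.mem_univ, true_and, mem_zUnitVecs]
  rw [sum_signedUnit fun v => if y - x = v then (1 : ℝ≥0∞) else 0] at hsum
  simp only [sub_eq_iff_eq_add', ← sub_eq_add_neg] at hsum
  have hstep : zStep ν x y = (if y - x ∈ zUnitVecs ν then 1 else 0) / (2 * ν) := by
    rw [zStep]
    split_ifs <;> simp
  rw [hstep, ← hsum, nbrStep, Fintype.card_fin]
  congr!

instance (N : ℕ) : MeasurableSingletonClass (ZMod N) := ⟨fun _ => trivial⟩

lemma IsCylRW.isMarkovFamily {d N : ℕ} {Pl : Cyl d N → Measure (ℕ → Cyl d N)}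
    (h : IsCylRW d N Pl) : IsMarkovFamily (nbrStep (cylDir d N)) Pl := by
  refine ⟨h.1, fun x n γ => ?_⟩
  rw [← stepProb_eq_nbrStep, prefixEvent, h.2 x n γ]
  congr

lemma IsLatRW.isMarkovFamily {ν : ℕ} {Q : ZLat ν → Measure (ℕ → ZLat ν)} (h : IsLatRW ν Q) :
    IsMarkovFamily (nbrStep (latDir ν)) Q := by
  refine ⟨h.1, fun x n γ => ?_⟩
  rw [← zStep_eq_nbrStep, prefixEvent, h.2 x n γ]
  congr

end Directions

/-! ### The maximum principle -/

section MaximumPrinciple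

variable {ι E : Type*} [Fintype ι] [AddCommGroup E] {e : ι → E} {f : E → ℝ}

lemma eq_of_le_nbrMean {z : E} (hz : f z ≤ nbrMean e f z) (hmax : ∀ w, IsNbr e z w → f w ≤ f z)
    (i : ι) : f (z + e i) = f z := by
  have : Nonempty ι := ⟨i⟩
  by_contra hne
  have hlt : nbrMean e f z < nbrMean e (fun _ => f z) z := by
    refine div_lt_div_of_pos_right (Finset.sum_lt_sum (fun k _ => ?_) ⟨i, Finset.mem_univ i, ?_⟩) ?_
    · exact add_le_add (hmax _ (isNbr_add e z k)) (hmax _ (isNbr_sub e z k))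
    · exact add_lt_add_of_lt_of_le ((hmax _ (isNbr_add e z i)).lt_of_ne hne)
        (hmax _ (isNbr_sub e z i))
    · have := Fintype.card_pos (α := ι)
      positivity
  rw [nbrMean_const] at hlt
  exact hlt.not_ge hz

theorem nonpos_of_le_nbrMean {i : ι} (hi : ¬ IsOfFinAddOrder (e i)) {S : Set E} (hS : S.Finite)
    (hf : ∀ z ∈ S, f z ≤ nbrMean e f z) (hb : ∀ z ∈ S, ∀ w, IsNbr e z w → w ∉ S → f w ≤ 0) :
    ∀ z ∈ S, f z ≤ 0 := by
  intro z hz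
  obtain ⟨z₀, hz₀, hmax⟩ := Set.exists_max_image S f hS ⟨z, hz⟩
  refine (hmax z hz).trans (not_lt.1 fun hpos => ?_)
  have hnbr : ∀ w ∈ S, f w = f z₀ → ∀ w', IsNbr e w w' → f w' ≤ f w := fun w hw hfw w' hw' => by
    by_cases h : w' ∈ S
    · exact hfw ▸ hmax w' h
    · exact (hb w hw w' hw' h).trans (hfw ▸ hpos.le)
  have hray : ∀ n : ℕ, z₀ + n • e i ∈ S ∧ f (z₀ + n • e i) = f z₀ := fun n => by
    induction n with
    | zero => simpa using hz₀
    | succ n ih =>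
      rw [succ_nsmul, ← add_assoc]
      have heq := (eq_of_le_nbrMean (hf _ ih.1) (hnbr _ ih.1 ih.2) i).trans ih.2
      exact ⟨by_contra fun h => (hb _ ih.1 _ (isNbr_add e _ i) h).not_gt (heq ▸ hpos), heq⟩
  have hinj : Function.Injective fun n : ℕ => z₀ + n • e i :=
    (add_right_injective z₀).comp (injective_nsmul_iff_not_isOfFinAddOrder.2 hi)
  exact Set.infinite_of_injective_forall_mem hinj (fun n => (hray n).1) hS

end MaximumPrinciple

section Height

variable {d N : ℕ} {z w : Cyl d N}

lemma cylDir_snd (d N : ℕ) (i : Fin (d + 1)) :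
    (cylDir d N i).2 = if i = Fin.last d then 1 else 0 := by
  simp [cylDir, projE, latDir, Pi.single_apply, eq_comm]

lemma not_isOfFinAddOrder_cylDir_last (d N : ℕ) : ¬ IsOfFinAddOrder (cylDir d N (Fin.last d)) := by
  intro h
  have := (AddMonoidHom.snd (Fin d → ZMod N) ℤ).isOfFinAddOrder h
  rw [AddMonoidHom.coe_snd, cylDir_snd, if_pos rfl] at this
  exact one_ne_zero ((isOfFinAddOrder_iff_eq_zero _).1 this)

lemma abs_snd_sub_le_one_of_isNbr (h : IsNbr (cylDir d N) z w) : |w.2 - z.2| ≤ 1 := by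
  obtain ⟨i, rfl | rfl⟩ := h <;> simp only [Prod.snd_add, Prod.snd_sub, cylDir_snd] <;>
    split_ifs <;> simp

lemma nbrMean_comp_snd (d N : ℕ) (f : ℤ → ℝ) (z : Cyl d N) :
    nbrMean (cylDir d N) (fun w => f w.2) z =
      (f (z.2 + 1) + f (z.2 - 1) + 2 * d * f z.2) / (2 * (d + 1)) := by
  simp only [nbrMean, Prod.snd_add, Prod.snd_sub, cylDir_snd, Fin.sum_univ_castSucc,
    Fin.castSucc_ne_last, if_true, if_false, add_zero, sub_zero, Finset.sum_const,
    Finset.card_univ, Fintype.card_fin, nsmul_eq_mul, Nat.cast_add, Nat.cast_one]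
  ring

lemma nbrMean_abs_snd_sub {a : ℤ} (hz : z.2 ≠ a) :
    nbrMean (cylDir d N) (fun w => |(w.2 : ℝ) - a|) z = |(z.2 : ℝ) - a| := by
  rw [nbrMean_comp_snd d N fun s => |(s : ℝ) - a|]
  push_cast
  rw [div_eq_iff (by positivity)]
  rcases lt_or_gt_of_ne hz with h | h
  · have : (z.2 : ℝ) + 1 ≤ a := by exact_mod_cast h
    rw [abs_of_nonpos, abs_of_nonpos, abs_of_nonpos] <;> linarith
  · have : (a : ℝ) + 1 ≤ z.2 := by exact_mod_cast h
    rw [abs_of_nonneg, abs_of_nonneg, abs_of_nonneg] <;> linarith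

lemma finite_setOf_abs_snd_sub_le (d N : ℕ) [NeZero N] (a : ℤ) (r : ℝ) :
    {z : Cyl d N | |(z.2 : ℝ) - a| ≤ r}.Finite := by
  refine (Set.finite_univ.prod (Set.finite_Icc (a - ⌊r⌋) (a + ⌊r⌋))).subset fun z hz => ?_
  have hle : |z.2 - a| ≤ ⌊r⌋ := Int.le_floor.2 (by push_cast; exact hz)
  rw [abs_le] at hle
  exact ⟨Set.mem_univ _, by linarith, by linarith⟩

-- The function `|height - a|` is harmonic off the level `a` and tends to infinity, so that
-- the maximum principle applies to `f - δ |height - a|` for every `δ > 0`.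
theorem nonpos_of_le_nbrMean_of_level_subset [NeZero N] {f : Cyl d N → ℝ} {K : Set (Cyl d N)}
    {a : ℤ} (hK : ∀ z, z.2 = a → z ∈ K) (hf : ∀ z ∉ K, f z ≤ nbrMean (cylDir d N) f z)
    (hf1 : ∀ z, f z ≤ 1) (hf0 : ∀ z ∈ K, f z ≤ 0) (z : Cyl d N) : f z ≤ 0 := by
  have hbound : ∀ δ > 0, f z ≤ δ * |(z.2 : ℝ) - a| := fun δ hδ => by
    set S : Set (Cyl d N) := {w | w ∉ K ∧ |(w.2 : ℝ) - a| ≤ δ⁻¹}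
    let g : Cyl d N → ℝ := fun w => f w + -δ * |(w.2 : ℝ) - a|
    have hgS : ∀ w ∉ S, g w ≤ 0 := fun w hw => by
      by_cases hwK : w ∈ K
      · linarith [hf0 w hwK, mul_nonneg hδ.le (abs_nonneg ((w.2 : ℝ) - a))]
      · have : δ⁻¹ < |(w.2 : ℝ) - a| := not_le.1 fun h => hw ⟨hwK, h⟩
        linarith [hf1 w, (inv_lt_iff_one_lt_mul₀' hδ).1 this]
    have hg : ∀ w ∈ S, g w ≤ nbrMean (cylDir d N) g w := fun w hw => by
      rw [nbrMean_add, nbrMean_const_mul, nbrMean_abs_snd_sub fun h => hw.1 (hK w h)]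
      linarith [hf w hw.1]
    have hgz : g z ≤ 0 := by
      by_cases hz : z ∈ S
      · exact nonpos_of_le_nbrMean (not_isOfFinAddOrder_cylDir_last d N)
          ((finite_setOf_abs_snd_sub_le d N a δ⁻¹).subset fun w hw => hw.2) hg
          (fun _ _ w _ hw => hgS w hw) z hz
      · exact hgS z hz
    linarith
  have hlim : Tendsto (fun δ : ℝ => δ * |(z.2 : ℝ) - a|) (nhdsWithin 0 (Set.Ioi 0)) (nhds 0) := by
    have := (continuous_mul_const |(z.2 : ℝ) - a|).tendsto 0
    rw [zero_mul] at this
    exact this.mono_left nhdsWithin_le_nhds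
  exact ge_of_tendsto hlim (eventually_mem_nhdsWithin.mono hbound)

end Height

/-! ### Entrance times and excursions -/

section EntranceTimes

variable {X : Type*} {U : Set X} {ω : ℕ → X}

lemma entT_le_coe_iff {n : ℕ} : entT U ω ≤ n ↔ ∃ i ≤ n, ω i ∈ U := by
  refine ⟨fun h => ?_, fun ⟨i, hi, hU⟩ => sInf_le_of_le ⟨i, hU, rfl⟩ (Nat.cast_le.2 hi)⟩
  by_contra! hU
  have hlt : ((n + 1 : ℕ) : ℕ∞) ≤ entT U ω := by
    refine le_sInf ?_
    rintro _ ⟨i, hi, rfl⟩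
    exact Nat.cast_le.2 (not_le.1 fun hin => hU i hin hi)
  exact absurd (Nat.cast_le.1 (hlt.trans h)) (by omega)

lemma entT_eq_zero (h : ω 0 ∈ U) : entT U ω = 0 :=
  nonpos_iff_eq_zero.1 (entT_le_coe_iff.2 ⟨0, le_rfl, h⟩)

lemma entT_consPath {x : X} (h : x ∉ U) : entT U (consPath x ω) = entT U ω + 1 := by
  refine eq_of_forall_ge_iff fun t => ?_
  induction t using ENat.recTopCoe with
  | top => simp
  | coe n =>
    cases n with
    | zero =>
      rw [entT_le_coe_iff]
      simpa [consPath] using h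
    | succ n =>
      rw [Nat.cast_succ, ENat.add_le_add_iff_right ENat.one_ne_top, ← Nat.cast_succ,
        entT_le_coe_iff, entT_le_coe_iff]
      refine ⟨fun ⟨i, hi, hU⟩ => ?_, fun ⟨i, hi, hU⟩ => ⟨i + 1, by omega, hU⟩⟩
      cases i with
      | zero => exact absurd hU h
      | succ i => exact ⟨i, by omega, hU⟩

lemma after_zero (f : (ℕ → X) → ℕ∞) (ω : ℕ → X) : after 0 f ω = f ω := zero_add _

lemma after_consPath (t : ℕ∞) (f : (ℕ → X) → ℕ∞) (x : X) (ω : ℕ → X) :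
    after (t + 1) f (consPath x ω) = after t f ω + 1 := by
  induction t using ENat.recTopCoe with
  | top => rfl
  | coe m => exact add_right_comm (m : ℕ∞) 1 _

lemma after_after (t : ℕ∞) (f g : (ℕ → X) → ℕ∞) (ω : ℕ → X) :
    after (after t f ω) g ω = after t (fun ω' => after (f ω') g ω') ω := by
  induction t using ENat.recTopCoe with
  | top => rfl
  | coe m =>
    change after (m + f fun k => ω (k + m)) g ω =
      m + after (f fun k => ω (k + m)) g fun k => ω (k + m)
    generalize f (fun k => ω (k + m)) = s
    induction s using ENat.recTopCoe with
    | top => rfl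
    | coe l =>
      change ((m + l : ℕ) : ℕ∞) + g (fun k => ω (k + (m + l))) =
        m + (l + g fun k => ω (k + l + m))
      simp only [Nat.cast_add, add_assoc, add_comm l m]

instance : BorelSpace ℕ∞ := ⟨borel_eq_top_of_countable.symm⟩

variable [MeasurableSpace X]

lemma measurable_entT (hU : MeasurableSet U) : Measurable (entT U) := by
  refine measurable_of_Iic fun t => ?_
  induction t using ENat.recTopCoe with
  | top => simp
  | coe n =>
    have hpre : entT U ⁻¹' Set.Iic (n : ℕ∞) = ⋃ i ≤ n, {ω | ω i ∈ U} := by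
      ext ω
      simp [entT_le_coe_iff]
    rw [hpre]
    exact .iUnion fun i => .iUnion fun _ => measurable_pi_apply i hU

lemma measurable_after {t f : (ℕ → X) → ℕ∞} (ht : Measurable t) (hf : Measurable f) :
    Measurable fun ω => after (t ω) f ω := by
  have h : Measurable fun p : (ℕ → X) × ℕ∞ => after p.2 f p.1 := by
    refine measurable_from_prod_countable_left fun s => ?_
    induction s using ENat.recTopCoe with
    | top => exact measurable_const
    | coe m =>
      have hshift : Measurable fun ω : ℕ → X => fun k => ω (k + m) :=
        measurable_pi_lambda _ fun k => measurable_pi_apply _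
      exact (measurable_from_top (f := fun s : ℕ∞ => (m : ℕ∞) + s)).comp (hf.comp hshift)
  exact h.comp (measurable_id.prodMk ht)

end EntranceTimes

section Excursions

variable {d N : ℕ} {j : ℤ}

/-- The end of the excursion in `B̃_j` under way at time `0`, followed by `k` further excursions:
the analogue of `DD d N j k` for a path that starts inside `B̃_j`. -/
noncomputable def exitThenDD (d N : ℕ) (j : ℤ) (k : ℕ) (ω : ℕ → Cyl d N) : ℕ∞ :=
  after (exitT (Btl d N j) ω) (DD d N j k) ω

lemma DD_succ (d N : ℕ) (j : ℤ) (k : ℕ) (ω : ℕ → Cyl d N) :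
    DD d N j (k + 1) ω = after (oneExc d N j ω) (DD d N j k) ω := by
  induction k generalizing ω with
  | zero =>
    change after 0 (oneExc d N j) ω = _
    rw [after_zero]
    generalize oneExc d N j ω = t
    induction t using ENat.recTopCoe with
    | top => rfl
    | coe m => rfl
  | succ k ih =>
    change after (DD d N j (k + 1) ω) (oneExc d N j) ω = _
    rw [ih, after_after]
    rfl

variable {k : ℕ} {x : Cyl d N} {ω : ℕ → Cyl d N}

lemma DD_succ_of_mem (h : ω 0 ∈ Bblk d N j) : DD d N j (k + 1) ω = exitThenDD d N j k ω := by
  rw [DD_succ, oneExc, entT_eq_zero h, after_zero, exitThenDD]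

lemma DD_succ_consPath (h : x ∉ Bblk d N j) :
    DD d N j (k + 1) (consPath x ω) = DD d N j (k + 1) ω + 1 := by
  rw [DD_succ, DD_succ, oneExc, entT_consPath h, after_consPath, after_consPath, oneExc]

lemma exitThenDD_consPath (h : x ∈ Btl d N j) :
    exitThenDD d N j k (consPath x ω) = exitThenDD d N j k ω + 1 := by
  rw [exitThenDD, exitT, entT_consPath (Set.notMem_compl_iff.2 h), after_consPath, exitThenDD,
    exitT]

lemma exitThenDD_of_notMem (h : ω 0 ∉ Btl d N j) : exitThenDD d N j k ω = DD d N j k ω := by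
  rw [exitThenDD, exitT, entT_eq_zero h, after_zero]

lemma measurable_DD (d N : ℕ) (j : ℤ) (k : ℕ) : Measurable (DD d N j k) := by
  induction k with
  | zero => exact measurable_const
  | succ k ih =>
    exact measurable_after ih (measurable_after (measurable_entT (Set.to_countable _).measurableSet)
      (measurable_entT (Set.to_countable _).measurableSet))

lemma measurable_exitThenDD (d N : ℕ) (j : ℤ) (k : ℕ) : Measurable (exitThenDD d N j k) :=
  measurable_after (measurable_entT (Set.to_countable _).measurableSet) (measurable_DD d N j k)

variable [NeZero N] {Pl : Cyl d N → Measure (ℕ → Cyl d N)}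

lemma IsMarkovFamily.ae_ne_top (hP : IsMarkovFamily (nbrStep (cylDir d N)) Pl)
    {T : (ℕ → Cyl d N) → ℕ∞} (hT : Measurable T) {K : Set (Cyl d N)} {a : ℤ}
    (hK : ∀ z, z.2 = a → z ∈ K) (hTcons : ∀ x ∉ K, ∀ ω, T (consPath x ω) = T ω + 1)
    (hTK : ∀ x ∈ K, ∀ᵐ ω ∂(Pl x), T ω ≠ ⊤) (x : Cyl d N) : ∀ᵐ ω ∂(Pl x), T ω ≠ ⊤ := by
  have := hP.isProbabilityMeasure
  have hmeas : MeasurableSet {ω | T ω = ⊤} := hT (measurableSet_singleton ⊤)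
  suffices h : (Pl x).real {ω | T ω = ⊤} ≤ 0 by
    rw [ae_iff]
    simpa using (measureReal_eq_zero_iff).1 (h.antisymm measureReal_nonneg)
  refine nonpos_of_le_nbrMean_of_level_subset (f := fun y => (Pl y).real {ω | T ω = ⊤}) hK
    (fun y hy => ?_) (fun y => measureReal_le_one) (fun y hy => ?_) x
  · have hpre : consPath y ⁻¹' {ω | T ω = ⊤} = {ω | T ω = ⊤} := by
      ext ω
      simp [hTcons y hy]
    rw [hP.real_apply_eq_nbrMean y hmeas, hpre]
  · have := ae_iff.1 (hTK y hy)
    simp only [not_not] at this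
    simp [measureReal_def, this]

theorem IsMarkovFamily.ae_DD_ne_top (hP : IsMarkovFamily (nbrStep (cylDir d N)) Pl) (j : ℤ)
    (k : ℕ) : ∀ x, ∀ᵐ ω ∂(Pl x), DD d N j k ω ≠ ⊤ := by
  induction k with
  | zero => exact fun x => .of_forall fun _ => ENat.zero_ne_top
  | succ k ih =>
    have hexit : ∀ x, ∀ᵐ ω ∂(Pl x), exitThenDD d N j k ω ≠ ⊤ := by
      refine hP.ae_ne_top (measurable_exitThenDD d N j k) (K := (Btl d N j)ᶜ)
        (a := (j + 2) * N) (fun z hz hzB => by have := hzB.2; omega)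
        (fun x hx ω => exitThenDD_consPath (Set.notMem_compl_iff.1 hx)) fun x hx => ?_
      filter_upwards [hP.ae_apply_zero_eq x, ih x] with ω hω h
      rwa [exitThenDD_of_notMem (hω ▸ hx)]
    refine hP.ae_ne_top (measurable_DD d N j (k + 1)) (K := Bblk d N j) (a := j * N)
      (fun z hz => ?_) (fun x hx ω => DD_succ_consPath hx) fun x hx => ?_
    · constructor <;> rw [hz] <;> nlinarith
    · filter_upwards [hP.ae_apply_zero_eq x, hexit x] with ω hω h
      rwa [DD_succ_of_mem (hω ▸ hx)]

end Excursions

/-! ### Exponential moments of the number of visited points -/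

section VisitedCount

variable {X : Type*} {A : Finset X} {lam : ℝ} {n : ℕ}

/-- The number of points of `A` visited before time `n` and not after time `t`. Truncating at `n`
permits an induction on time. -/
noncomputable def visitedCount (A : Finset X) (n : ℕ) (t : ℕ∞) (ω : ℕ → X) : ℝ :=
  ∑ y ∈ A, if ∃ i : ℕ, i < n ∧ (i : ℕ∞) ≤ t ∧ ω i = y then 1 else 0

/-- The exponential of `lam` times `visitedCount A n t`, as an extended nonnegative number. -/
noncomputable def expVisited (lam : ℝ) (A : Finset X) (n : ℕ) (t : ℕ∞) (ω : ℕ → X) : ℝ≥0∞ :=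
  ENNReal.ofReal (Real.exp (lam * visitedCount A n t ω))

lemma visitedCount_consPath_le (A : Finset X) (n : ℕ) (t : ℕ∞) (x : X) (ω : ℕ → X) :
    visitedCount A (n + 1) (t + 1) (consPath x ω) ≤
      (if x ∈ A then 1 else 0) + visitedCount A n t ω := by
  rw [← Finset.sum_ite_eq A x fun _ => (1 : ℝ), visitedCount, visitedCount,
    ← Finset.sum_add_distrib]
  refine Finset.sum_le_sum fun y _ => ?_
  by_cases hxy : x = y
  · rw [if_pos hxy]
    split_ifs <;> norm_num
  · rw [if_neg hxy, zero_add]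
    have himp : (∃ i : ℕ, i < n + 1 ∧ (i : ℕ∞) ≤ t + 1 ∧ consPath x ω i = y) →
        ∃ i : ℕ, i < n ∧ (i : ℕ∞) ≤ t ∧ ω i = y := by
      rintro ⟨_ | i, hi, hit, hy⟩
      · exact absurd hy hxy
      · rw [Nat.cast_succ, ENat.add_le_add_iff_right ENat.one_ne_top] at hit
        exact ⟨i, by omega, hit, hy⟩
    split_ifs with h₁ h₂
    · exact le_rfl
    · exact absurd (himp h₁) h₂
    · exact zero_le_one
    · exact le_rfl

lemma expVisited_consPath_le (hlam : 0 ≤ lam) (A : Finset X) (n : ℕ) (t : ℕ∞) (x : X)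
    (ω : ℕ → X) :
    expVisited lam A (n + 1) (t + 1) (consPath x ω) ≤
      ENNReal.ofReal (Real.exp (if x ∈ A then lam else 0)) * expVisited lam A n t ω := by
  rw [expVisited, expVisited, ← ENNReal.ofReal_mul (Real.exp_pos _).le, ← Real.exp_add]
  refine ENNReal.ofReal_le_ofReal (Real.exp_le_exp.2 ?_)
  refine (mul_le_mul_of_nonneg_left (visitedCount_consPath_le A n t x ω) hlam).trans_eq ?_
  rw [mul_add, mul_ite, mul_one, mul_zero]

lemma expVisited_zero (lam : ℝ) (A : Finset X) (t : ℕ∞) (ω : ℕ → X) :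
    expVisited lam A 0 t ω = 1 := by
  simp [expVisited, visitedCount]

lemma expVisited_time_zero {ω : ℕ → X} (h : ω 0 ∉ A) : expVisited lam A n 0 ω = 1 := by
  have hcount : visitedCount A n 0 ω = 0 := by
    refine Finset.sum_eq_zero fun y hy => if_neg ?_
    rintro ⟨i, -, hi, rfl⟩
    obtain rfl : i = 0 := by simpa using hi
    exact h hy
  simp [expVisited, hcount]

lemma measurable_expVisited [MeasurableSpace X] [MeasurableSingletonClass X] (lam : ℝ)
    (A : Finset X) (n : ℕ) {T : (ℕ → X) → ℕ∞} (hT : Measurable T) :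
    Measurable fun ω => expVisited lam A n (T ω) ω := by
  have hcount : Measurable fun ω => visitedCount A n (T ω) ω := by
    refine Finset.measurable_sum _ fun y _ => Measurable.ite ?_ measurable_const measurable_const
    have hset : {ω : ℕ → X | ∃ i : ℕ, i < n ∧ (i : ℕ∞) ≤ T ω ∧ ω i = y} =
        ⋃ i < n, T ⁻¹' Set.Ici (i : ℕ∞) ∩ (fun ω => ω i) ⁻¹' {y} := by
      ext ω
      simp [and_left_comm]
    rw [hset]
    exact .iUnion fun i => .iUnion fun _ => (hT measurableSet_Ici).inter
      (measurable_pi_apply i (measurableSet_singleton y))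
  exact (Real.measurable_exp.comp (hcount.const_mul lam)).ennreal_ofReal

end VisitedCount

section Supersolution

variable {d N : ℕ} {j : ℤ} {x y : Cyl d N}

/-- The block `B̃_j` together with its outer boundary. -/
def BtlClosure (d N : ℕ) (j : ℤ) : Set (Cyl d N) :=
  {x | (j - 2) * (N : ℤ) ≤ x.2 ∧ x.2 ≤ (j + 2) * (N : ℤ)}

lemma Bblk_subset_BtlClosure (d N : ℕ) (j : ℤ) : Bblk d N j ⊆ BtlClosure d N j := by
  rintro x ⟨h₁, h₂⟩
  constructor <;> nlinarith

lemma Bblk_subset_Btl [NeZero N] : Bblk d N j ⊆ Btl d N j := by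
  have hN : (0 : ℤ) < N := Nat.cast_pos.2 (NeZero.pos N)
  rintro x ⟨h₁, h₂⟩
  constructor <;> nlinarith

lemma mem_BtlClosure_of_isNbr (hx : x ∈ Btl d N j) (h : IsNbr (cylDir d N) x y) :
    y ∈ BtlClosure d N j := by
  obtain ⟨h₁, h₂⟩ := hx
  have := abs_le.1 (abs_snd_sub_le_one_of_isNbr h)
  constructor <;> omega

lemma snd_eq_of_isNbr_of_mem_Bblk (hx : x ∉ Bblk d N j) (h : IsNbr (cylDir d N) x y)
    (hy : y ∈ Bblk d N j) : y.2 = (j - 1) * N ∨ y.2 = (j + 1) * N := by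
  obtain ⟨h₁, h₂⟩ := hy
  have := abs_le.1 (abs_snd_sub_le_one_of_isNbr h)
  by_contra!
  exact hx ⟨by omega, by omega⟩

/-- A function `h` that is at least `1` around `B̃_j`, at most `1 + ε` on the boundary of `B_j`,
superharmonic in `B̃_j`, and that keeps decreasing in mean on `A` when every visit to `A` is
rewarded by a factor `e^lam`. -/
structure IsExcursionSupersolution (d N : ℕ) (j : ℤ) (A : Finset (Cyl d N)) (lam ε : ℝ)
    (h : Cyl d N → ℝ) : Prop where
  subset_Bblk : ∀ z ∈ A, z ∈ Bblk d N j
  one_le : ∀ z ∈ BtlClosure d N j, 1 ≤ h z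
  nbrMean_le : ∀ z ∈ Btl d N j, nbrMean (cylDir d N) h z ≤ h z
  exp_mul_nbrMean_le : ∀ z ∈ A, Real.exp lam * nbrMean (cylDir d N) h z ≤ h z
  le_one_add : ∀ z : Cyl d N, z.2 = (j - 1) * N ∨ z.2 = (j + 1) * N → h z ≤ 1 + ε

namespace IsExcursionSupersolution

variable {A : Finset (Cyl d N)} {lam ε : ℝ} {h : Cyl d N → ℝ}
  {Pl : Cyl d N → Measure (ℕ → Cyl d N)} {n k : ℕ}

lemma exp_ite_mul_nbrMean_le (H : IsExcursionSupersolution d N j A lam ε h) (hx : x ∈ Btl d N j) :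
    Real.exp (if x ∈ A then lam else 0) * nbrMean (cylDir d N) h x ≤ h x := by
  split_ifs with hxA
  · exact H.exp_mul_nbrMean_le x hxA
  · rw [Real.exp_zero, one_mul]
    exact H.nbrMean_le x hx

lemma lintegral_expVisited_succ_outside_le (H : IsExcursionSupersolution d N j A lam ε h)
    (hP : IsMarkovFamily (nbrStep (cylDir d N)) Pl) (hlam : 0 ≤ lam) (hε : 0 ≤ ε)
    (hout : ∀ y ∉ Bblk d N j, ∫⁻ ω, expVisited lam A n (DD d N j (k + 1) ω) ω ∂(Pl y) ≤
      ENNReal.ofReal ((1 + ε) ^ (k + 1)))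
    (hin : ∀ y ∈ BtlClosure d N j, ∫⁻ ω, expVisited lam A n (exitThenDD d N j k ω) ω ∂(Pl y) ≤
      ENNReal.ofReal (h y * (1 + ε) ^ k)) (hx : x ∉ Bblk d N j) :
    ∫⁻ ω, expVisited lam A (n + 1) (DD d N j (k + 1) ω) ω ∂(Pl x) ≤
      ENNReal.ofReal ((1 + ε) ^ (k + 1)) := by
  have hxA : x ∉ A := fun hxA => hx (H.subset_Bblk x hxA)
  rw [← nbrMean_const (cylDir d N) ((1 + ε) ^ (k + 1)) x]
  refine hP.lintegral_le_ofReal_nbrMean x _ _ (fun _ _ => by positivity) fun y hy => ?_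
  calc ∫⁻ ω, expVisited lam A (n + 1) (DD d N j (k + 1) (consPath x ω)) (consPath x ω) ∂(Pl y)
      ≤ ∫⁻ ω, expVisited lam A n (DD d N j (k + 1) ω) ω ∂(Pl y) := by
        refine lintegral_mono fun ω => ?_
        rw [DD_succ_consPath hx]
        simpa [hxA] using expVisited_consPath_le hlam A n (DD d N j (k + 1) ω) x ω
    _ ≤ ENNReal.ofReal ((1 + ε) ^ (k + 1)) := by
        by_cases hyB : y ∈ Bblk d N j
        · calc ∫⁻ ω, expVisited lam A n (DD d N j (k + 1) ω) ω ∂(Pl y)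
              = ∫⁻ ω, expVisited lam A n (exitThenDD d N j k ω) ω ∂(Pl y) := by
                refine lintegral_congr_ae ?_
                filter_upwards [hP.ae_apply_zero_eq y] with ω hω
                rw [DD_succ_of_mem (hω ▸ hyB)]
            _ ≤ ENNReal.ofReal (h y * (1 + ε) ^ k) := hin y (Bblk_subset_BtlClosure d N j hyB)
            _ ≤ ENNReal.ofReal ((1 + ε) ^ (k + 1)) := by
                rw [pow_succ']
                gcongr
                exact H.le_one_add y (snd_eq_of_isNbr_of_mem_Bblk hx hy hyB)
        · exact hout y hyB

lemma lintegral_expVisited_succ_inside_le (H : IsExcursionSupersolution d N j A lam ε h)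
    (hP : IsMarkovFamily (nbrStep (cylDir d N)) Pl) (hlam : 0 ≤ lam) (hε : 0 ≤ ε)
    (hin : ∀ y ∈ BtlClosure d N j, ∫⁻ ω, expVisited lam A n (exitThenDD d N j k ω) ω ∂(Pl y) ≤
      ENNReal.ofReal (h y * (1 + ε) ^ k)) (hx : x ∈ Btl d N j) :
    ∫⁻ ω, expVisited lam A (n + 1) (exitThenDD d N j k ω) ω ∂(Pl x) ≤
      ENNReal.ofReal (h x * (1 + ε) ^ k) := by
  set r : ℝ := Real.exp (if x ∈ A then lam else 0)
  have hpos : ∀ y, IsNbr (cylDir d N) x y → 0 ≤ h y := fun y hy =>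
    zero_le_one.trans (H.one_le y (mem_BtlClosure_of_isNbr hx hy))
  have hle : nbrMean (cylDir d N) (fun y => r * (1 + ε) ^ k * h y) x ≤ h x * (1 + ε) ^ k := by
    rw [nbrMean_const_mul, mul_right_comm]
    gcongr
    exact H.exp_ite_mul_nbrMean_le hx
  refine (hP.lintegral_le_ofReal_nbrMean x _ _ (fun y hy => ?_) fun y hy => ?_).trans
    (ENNReal.ofReal_le_ofReal hle)
  · have := hpos y hy
    positivity
  · calc ∫⁻ ω, expVisited lam A (n + 1) (exitThenDD d N j k (consPath x ω)) (consPath x ω) ∂(Pl y)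
        ≤ ∫⁻ ω, ENNReal.ofReal r * expVisited lam A n (exitThenDD d N j k ω) ω ∂(Pl y) := by
          refine lintegral_mono fun ω => ?_
          rw [exitThenDD_consPath hx]
          convert expVisited_consPath_le hlam A n _ x ω
      _ ≤ ENNReal.ofReal r * ENNReal.ofReal (h y * (1 + ε) ^ k) := by
          rw [lintegral_const_mul' _ _ ENNReal.ofReal_ne_top]
          gcongr
          exact hin y (mem_BtlClosure_of_isNbr hx hy)
      _ = ENNReal.ofReal (r * (1 + ε) ^ k * h y) := by
          rw [← ENNReal.ofReal_mul (Real.exp_pos _).le, mul_comm (h y), mul_assoc]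

theorem lintegral_expVisited_le [NeZero N] (H : IsExcursionSupersolution d N j A lam ε h)
    (hP : IsMarkovFamily (nbrStep (cylDir d N)) Pl) (hlam : 0 ≤ lam) (hε : 0 ≤ ε) (n : ℕ) :
    (∀ k, ∀ x ∉ Bblk d N j, ∫⁻ ω, expVisited lam A n (DD d N j k ω) ω ∂(Pl x) ≤
      ENNReal.ofReal ((1 + ε) ^ k)) ∧
    ∀ k, ∀ x ∈ BtlClosure d N j, ∫⁻ ω, expVisited lam A n (exitThenDD d N j k ω) ω ∂(Pl x) ≤
      ENNReal.ofReal (h x * (1 + ε) ^ k) := by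
  have := hP.isProbabilityMeasure
  have one_le_pow : ∀ k, 1 ≤ (1 + ε) ^ k := fun k => one_le_pow₀ (by linarith)
  have pow_le : ∀ k, ∀ x ∈ BtlClosure d N j, (1 + ε) ^ k ≤ h x * (1 + ε) ^ k := fun k x hx =>
    le_mul_of_one_le_left (by positivity) (H.one_le x hx)
  induction n with
  | zero =>
    simp only [expVisited_zero, lintegral_one, measure_univ, ENNReal.one_le_ofReal]
    exact ⟨fun k _ _ => one_le_pow k, fun k x hx => (one_le_pow k).trans (pow_le k x hx)⟩
  | succ n ih =>
    have hout : ∀ k, ∀ x ∉ Bblk d N j,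
        ∫⁻ ω, expVisited lam A (n + 1) (DD d N j k ω) ω ∂(Pl x) ≤ ENNReal.ofReal ((1 + ε) ^ k) := by
      intro k x hx
      cases k with
      | zero =>
        have hone : ∀ᵐ ω ∂(Pl x), expVisited lam A (n + 1) (DD d N j 0 ω) ω = 1 := by
          filter_upwards [hP.ae_apply_zero_eq x] with ω hω
          exact expVisited_time_zero fun hA => hx (hω ▸ H.subset_Bblk _ hA)
        simp [lintegral_congr_ae hone]
      | succ k => exact H.lintegral_expVisited_succ_outside_le hP hlam hε (ih.1 _) (ih.2 k) hx
    refine ⟨hout, fun k x hx => ?_⟩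
    by_cases hxB : x ∈ Btl d N j
    · exact H.lintegral_expVisited_succ_inside_le hP hlam hε (ih.2 k) hxB
    · have hDD : ∀ᵐ ω ∂(Pl x), expVisited lam A (n + 1) (exitThenDD d N j k ω) ω =
          expVisited lam A (n + 1) (DD d N j k ω) ω := by
        filter_upwards [hP.ae_apply_zero_eq x] with ω hω
        rw [exitThenDD_of_notMem (hω ▸ hxB)]
      rw [lintegral_congr_ae hDD]
      exact (hout k x fun h => hxB (Bblk_subset_Btl h)).trans
        (ENNReal.ofReal_le_ofReal (pow_le k x hx))

end IsExcursionSupersolution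

end Supersolution

section HitCount

variable {d N : ℕ} {j : ℤ} {A : Finset (Cyl d N)} {lam ε : ℝ} {h : Cyl d N → ℝ} {k : ℕ}

/-- The number of points of `A` entered by the end of the `k`-th excursion. -/
noncomputable def hitCount (j : ℤ) (A : Finset (Cyl d N)) (k : ℕ) (ω : ℕ → Cyl d N) : ℝ :=
  ∑ x ∈ A, if entT {x} ω ≤ DD d N j k ω then 1 else 0

lemma measurable_hitCount (j : ℤ) (A : Finset (Cyl d N)) (k : ℕ) : Measurable (hitCount j A k) :=
  Finset.measurable_sum _ fun y _ => Measurable.ite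
    (measurableSet_le (measurable_entT (measurableSet_singleton y)) (measurable_DD d N j k))
    measurable_const measurable_const

lemma eventually_visitedCount_eq_hitCount (A : Finset (Cyl d N)) {ω : ℕ → Cyl d N}
    (hω : DD d N j k ω ≠ ⊤) :
    ∀ᶠ n in atTop, visitedCount A n (DD d N j k ω) ω = hitCount j A k ω := by
  rw [hitCount]
  lift DD d N j k ω to ℕ using hω with t
  filter_upwards [eventually_gt_atTop t] with n hn
  refine Finset.sum_congr rfl fun y _ => ?_
  have hiff : (∃ i : ℕ, i < n ∧ (i : ℕ∞) ≤ t ∧ ω i = y) ↔ entT {y} ω ≤ t := by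
    rw [entT_le_coe_iff]
    simp only [Nat.cast_le, Set.mem_singleton_iff]
    exact ⟨fun ⟨i, _, hi, hy⟩ => ⟨i, hi, hy⟩, fun ⟨i, hi, hy⟩ => ⟨i, by omega, hi, hy⟩⟩
  simp only [hiff]

variable [NeZero N] {Pl : Cyl d N → Measure (ℕ → Cyl d N)}

lemma lintegral_exp_hitCount_le (hP : IsMarkovFamily (nbrStep (cylDir d N)) Pl) (x : Cyl d N)
    {C : ℝ≥0∞} (hC : ∀ n, ∫⁻ ω, expVisited lam A n (DD d N j k ω) ω ∂(Pl x) ≤ C) :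
    ∫⁻ ω, ENNReal.ofReal (Real.exp (lam * hitCount j A k ω)) ∂(Pl x) ≤ C := by
  calc ∫⁻ ω, ENNReal.ofReal (Real.exp (lam * hitCount j A k ω)) ∂(Pl x)
      = ∫⁻ ω, liminf (fun n => expVisited lam A n (DD d N j k ω) ω) atTop ∂(Pl x) := by
        refine lintegral_congr_ae ?_
        filter_upwards [hP.ae_DD_ne_top j k x] with ω hω
        refine (Tendsto.liminf_eq (tendsto_const_nhds.congr' ?_)).symm
        filter_upwards [eventually_visitedCount_eq_hitCount A hω] with n hn
        rw [expVisited, hn]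
    _ ≤ liminf (fun n => ∫⁻ ω, expVisited lam A n (DD d N j k ω) ω ∂(Pl x)) atTop :=
        lintegral_liminf_le fun n => measurable_expVisited lam A n (measurable_DD d N j k)
    _ ≤ C := liminf_le_of_le (by isBoundedDefault) fun b hb =>
        let ⟨n, hn⟩ := hb.exists
        hn.trans (hC n)

lemma IsExcursionSupersolution.lintegral_exp_hitCount_succ_le
    (H : IsExcursionSupersolution d N j A lam ε h)
    (hP : IsMarkovFamily (nbrStep (cylDir d N)) Pl) (hlam : 0 ≤ lam) (hε : 0 ≤ ε) (k : ℕ)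
    (x : Cyl d N) :
    ∫⁻ ω, ENNReal.ofReal (Real.exp (lam * hitCount j A (k + 1) ω)) ∂(Pl x) ≤
      ENNReal.ofReal ((if x ∈ Bblk d N j then h x else 1) * (1 + ε) ^ (k + 1)) := by
  refine lintegral_exp_hitCount_le hP x fun n => ?_
  split_ifs with hx
  · have hxcl := Bblk_subset_BtlClosure d N j hx
    have hDD : ∀ᵐ ω ∂(Pl x), expVisited lam A n (DD d N j (k + 1) ω) ω =
        expVisited lam A n (exitThenDD d N j k ω) ω := by
      filter_upwards [hP.ae_apply_zero_eq x] with ω hω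
      rw [DD_succ_of_mem (hω ▸ hx)]
    rw [lintegral_congr_ae hDD]
    refine ((H.lintegral_expVisited_le hP hlam hε n).2 k x hxcl).trans
      (ENNReal.ofReal_le_ofReal ?_)
    have := H.one_le x hxcl
    gcongr <;> linarith
  · rw [one_mul]
    exact (H.lintegral_expVisited_le hP hlam hε n).1 (k + 1) x hx

lemma lintegral_lawP_le {F : (ℕ → Cyl d N) → ℝ≥0∞} {g : Cyl d N → ℝ} {M : ℝ}
    (hF : ∀ x, ∫⁻ ω, F ω ∂(Pl x) ≤ ENNReal.ofReal (g x)) (hg : ∀ x, 0 ≤ g x)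
    (hM : ∀ a : ℤ, ∑ y : Fin d → ZMod N, g (y, a) ≤ (N : ℝ) ^ d * M) :
    ∫⁻ ω, F ω ∂(lawP d N Pl) ≤ ENNReal.ofReal M := by
  set S : Finset (Cyl d N) := Finset.univ ×ˢ Finset.Icc (-(N : ℤ)) N with hS
  have mem_S : ∀ x, x ∈ S ↔ x ∈ Bblk d N 0 := fun x => by simp [S, Bblk]
  have hN : (0 : ℝ) < N := Nat.cast_pos.2 (NeZero.pos N)
  have hpos : (0 : ℝ) < (N : ℝ) ^ d * (2 * N + 1) := by positivity
  have hcard : ((N : ℝ≥0∞) ^ d * (2 * N + 1)) = ENNReal.ofReal ((N : ℝ) ^ d * (2 * N + 1)) := by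
    rw [← ENNReal.ofReal_natCast N, ← ENNReal.ofReal_ofNat, ← ENNReal.ofReal_one,
      ← ENNReal.ofReal_pow hN.le, ← ENNReal.ofReal_mul zero_le_two,
      ← ENNReal.ofReal_add (by positivity) zero_le_one, ← ENNReal.ofReal_mul (by positivity)]
  have hsum : ∑' x, ∫⁻ ω, F ω ∂(if x ∈ Bblk d N 0 then Pl x else 0) ≤
      ENNReal.ofReal (∑ x ∈ S, g x) := by
    rw [tsum_eq_sum (s := S) fun x hx => by rw [if_neg (mt (mem_S x).2 hx), lintegral_zero_measure],
      ENNReal.ofReal_sum_of_nonneg fun x _ => hg x]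
    refine Finset.sum_le_sum fun x hx => ?_
    rw [if_pos ((mem_S x).1 hx)]
    exact hF x
  have hsumle : ∑ x ∈ S, g x ≤ (N : ℝ) ^ d * (2 * N + 1) * M := by
    rw [hS, Finset.sum_product_right]
    refine (Finset.sum_le_card_nsmul _ _ _ fun a _ => hM a).trans_eq ?_
    rw [Int.card_Icc, show ((N : ℤ) + 1 - -(N : ℤ)).toNat = 2 * N + 1 by omega, nsmul_eq_mul]
    push_cast
    ring
  rw [lawP, lintegral_smul_measure, lintegral_sum_measure, smul_eq_mul, hcard,
    ← ENNReal.div_eq_inv_mul]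
  refine ENNReal.div_le_of_le_mul ?_
  rw [mul_comm, ← ENNReal.ofReal_mul hpos.le]
  exact hsum.trans (ENNReal.ofReal_le_ofReal hsumle)

theorem IsExcursionSupersolution.integral_exp_hitCount_le
    (H : IsExcursionSupersolution d N j A lam ε h)
    (hP : IsMarkovFamily (nbrStep (cylDir d N)) Pl) (hlam : 0 ≤ lam) (hε : 0 ≤ ε) (k : ℕ)
    {δ : ℝ} (hδ : 0 ≤ δ) (hh : ∀ a : ℤ, (j - 1) * (N : ℤ) ≤ a → a ≤ (j + 1) * (N : ℤ) →
      ∑ y : Fin d → ZMod N, h (y, a) ≤ (N : ℝ) ^ d * (1 + δ)) :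
    ∫ ω, Real.exp (lam * hitCount j A (k + 1) ω) ∂(lawP d N Pl) ≤
      (1 + δ) * (1 + ε) ^ (k + 1) := by
  have hmeas : Measurable fun ω => Real.exp (lam * hitCount j A (k + 1) ω) :=
    Real.measurable_exp.comp ((measurable_hitCount j A (k + 1)).const_mul lam)
  rw [integral_eq_lintegral_of_nonneg_ae (.of_forall fun ω => (Real.exp_pos _).le)
    hmeas.aestronglyMeasurable]
  refine ENNReal.toReal_le_of_le_ofReal (by positivity) ?_
  refine lintegral_lawP_le (H.lintegral_exp_hitCount_succ_le hP hlam hε k) (fun x => ?_)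
    fun a => ?_
  · have : 0 ≤ if x ∈ Bblk d N j then h x else 1 := by
      split_ifs with hx
      · exact zero_le_one.trans (H.one_le x (Bblk_subset_BtlClosure d N j hx))
      · exact zero_le_one
    positivity
  · rw [← Finset.sum_mul, ← mul_assoc]
    gcongr
    by_cases ha : (j - 1) * (N : ℤ) ≤ a ∧ a ≤ (j + 1) * (N : ℤ)
    · have hmem : ∀ y : Fin d → ZMod N, (y, a) ∈ Bblk d N j := fun _ => ha
      simpa only [if_pos (hmem _)] using hh a ha.1 ha.2
    · have hmem : ∀ y : Fin d → ZMod N, (y, a) ∉ Bblk d N j := fun _ => ha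
      simp only [if_neg (hmem _), Finset.sum_const, Finset.card_univ, Fintype.card_pi, ZMod.card,
        Finset.prod_const, Fintype.card_fin, nsmul_eq_mul, mul_one, Nat.cast_pow]
      exact le_mul_of_one_le_right (by positivity) (by linarith)

end HitCount

/-! ### Cosines on the torus -/

section TorusCos

variable {N : ℕ}

/-- The real character `cos(2πky/N)` of `ℤ/Nℤ`, used to diagonalise the walk on the torus. -/
noncomputable def torusCos [NeZero N] (k y : ZMod N) : ℝ := (ZMod.stdAddChar (k * y)).re

lemma torusCos_comm [NeZero N] (k y : ZMod N) : torusCos k y = torusCos y k := by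
  rw [torusCos, torusCos, mul_comm]

lemma abs_torusCos_le_one [NeZero N] (k y : ZMod N) : |torusCos k y| ≤ 1 :=
  (Complex.abs_re_le_norm _).trans (AddChar.norm_apply _ _).le

lemma torusCos_zero_left [NeZero N] (y : ZMod N) : torusCos 0 y = 1 := by
  simp [torusCos]

lemma torusCos_add_one_add_torusCos_sub_one [NeZero N] (k y : ZMod N) :
    torusCos k (y + 1) + torusCos k (y - 1) = 2 * torusCos k 1 * torusCos k y := by
  unfold torusCos
  rw [mul_add, mul_sub, sub_eq_add_neg, AddChar.map_add_eq_mul, AddChar.map_add_eq_mul,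
    AddChar.map_neg_eq_conj]
  simp only [Complex.mul_re, Complex.conj_re, Complex.conj_im]
  ring

lemma sum_torusCos_left [NeZero N] (y : ZMod N) :
    ∑ k : ZMod N, torusCos k y = if y = 0 then (N : ℝ) else 0 := by
  have h := AddChar.sum_mulShift y (ZMod.isPrimitive_stdAddChar N)
  unfold torusCos
  rw [← Complex.re_sum, h, ZMod.card]
  split_ifs <;> simp

lemma sum_torusCos_right [NeZero N] (k : ZMod N) :
    ∑ y : ZMod N, torusCos k y = if k = 0 then (N : ℝ) else 0 := by
  rw [← sum_torusCos_left]
  exact Finset.sum_congr rfl fun y _ => torusCos_comm _ _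

/-- The distance from `k` to `0` in the cycle `ℤ/Nℤ`. -/
def torusNorm (k : ZMod N) : ℕ := k.valMinAbs.natAbs

lemma two_mul_torusNorm_le [NeZero N] (k : ZMod N) : 2 * torusNorm k ≤ N := by
  have : torusNorm k ≤ N / 2 := ZMod.natAbs_valMinAbs_le k
  omega

lemma torusNorm_pos {k : ZMod N} (h : k ≠ 0) : 0 < torusNorm k :=
  Int.natAbs_pos.2 fun hk => h ((ZMod.valMinAbs_eq_zero k).1 hk)

lemma torusCos_one_right [NeZero N] (k : ZMod N) :
    torusCos k 1 = Real.cos (2 * (Real.pi * torusNorm k / N)) := by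
  have harg : 2 * (Real.pi : ℂ) * Complex.I * (k.valMinAbs : ℂ) / (N : ℂ) =
      ((2 * (Real.pi * (k.valMinAbs : ℝ) / N) : ℝ) : ℂ) * Complex.I := by
    push_cast
    ring
  have hcos : torusCos k 1 = Real.cos (2 * (Real.pi * (k.valMinAbs : ℝ) / N)) := by
    rw [torusCos, mul_one]
    conv_lhs => rw [← ZMod.coe_valMinAbs k]
    rw [ZMod.stdAddChar_coe, harg, Complex.exp_ofReal_mul_I_re]
  have hnorm : (torusNorm k : ℝ) = |(k.valMinAbs : ℝ)| := by
    rw [torusNorm, Nat.cast_natAbs, Int.cast_abs]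
  rw [hcos, hnorm, ← Real.cos_abs]
  simp only [abs_mul, abs_div, Nat.abs_ofNat, abs_of_pos Real.pi_pos, Nat.abs_cast]

lemma eight_mul_torusNorm_sq_div_le_one_sub_torusCos [NeZero N] (k : ZMod N) :
    8 * (torusNorm k : ℝ) ^ 2 / N ^ 2 ≤ 1 - torusCos k 1 := by
  have hN : (0 : ℝ) < N := Nat.cast_pos.2 (NeZero.pos N)
  have hle : 2 * (torusNorm k : ℝ) ≤ N := mod_cast two_mul_torusNorm_le k
  set θ := Real.pi * torusNorm k / N with hθ
  have hθ_le : θ ≤ Real.pi / 2 := by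
    rw [hθ, div_le_iff₀ hN]
    nlinarith [Real.pi_pos]
  have hsin : 2 * torusNorm k / N ≤ Real.sin θ := by
    have := Real.mul_le_sin (x := θ) (by positivity) hθ_le
    rwa [show 2 / Real.pi * θ = 2 * torusNorm k / N by rw [hθ]; field_simp] at this
  calc 8 * (torusNorm k : ℝ) ^ 2 / N ^ 2 = 2 * (2 * torusNorm k / N : ℝ) ^ 2 := by ring
    _ ≤ 2 * Real.sin θ ^ 2 := by gcongr
    _ = 1 - torusCos k 1 := by
        rw [torusCos_one_right, Real.cos_two_mul, Real.cos_sq']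
        ring

lemma sum_comp_torusNorm_le [NeZero N] {φ : ℕ → ℝ} (hφ : ∀ v, 0 ≤ φ v) :
    ∑ k : ZMod N, φ (torusNorm k) ≤ 2 * ∑ v ∈ Finset.range (N + 1), φ v := by
  have hval : ∑ k : ZMod N, (φ k.val + φ (N - k.val)) =
      ∑ v ∈ Finset.range N, (φ v + φ (N - v)) :=
    Finset.sum_bij (fun k _ => k.val) (fun k _ => Finset.mem_range.2 (ZMod.val_lt k))
      (fun _ _ _ _ h => ZMod.val_injective N h)
      (fun b hb => ⟨b, Finset.mem_univ _, ZMod.val_cast_of_lt (Finset.mem_range.1 hb)⟩)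
      fun _ _ => rfl
  calc ∑ k : ZMod N, φ (torusNorm k) ≤ ∑ k : ZMod N, (φ k.val + φ (N - k.val)) := by
        refine Finset.sum_le_sum fun k _ => ?_
        rw [torusNorm, ZMod.valMinAbs_natAbs_eq_min]
        rcases min_choice k.val (N - k.val) with h | h <;> rw [h]
        exacts [le_add_of_nonneg_right (hφ _), le_add_of_nonneg_left (hφ _)]
    _ ≤ ∑ v ∈ Finset.range (N + 1), (φ v + φ (N - v)) := by
        rw [hval]
        exact Finset.sum_le_sum_of_subset_of_nonneg (Finset.range_mono N.le_succ)
          fun v _ _ => add_nonneg (hφ _) (hφ _)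
    _ = 2 * ∑ v ∈ Finset.range (N + 1), φ v := by
        have := Finset.sum_range_reflect φ (N + 1)
        rw [Nat.add_sub_cancel] at this
        rw [Finset.sum_add_distrib, this, two_mul]

end TorusCos

/-! ### A Green function of the cylinder -/

section Modes

variable {d N : ℕ} [NeZero N]

/-- The eigenvalue of the unnormalised Laplacian of the torus at the frequency `ξ`. -/
noncomputable def modeEnergy (ξ : Fin d → ZMod N) : ℝ := ∑ i, (1 - torusCos (ξ i) 1)

/-- The eigenfunction of the Laplacian of the torus at the frequency `ξ`. -/
noncomputable def modeCos (ξ y : Fin d → ZMod N) : ℝ := ∏ i, torusCos (ξ i) (y i)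

lemma abs_modeCos_le_one (ξ y : Fin d → ZMod N) : |modeCos ξ y| ≤ 1 := by
  rw [modeCos, Finset.abs_prod]
  exact Finset.prod_le_one (fun _ _ => abs_nonneg _) fun i _ => abs_torusCos_le_one _ _

lemma modeCos_comm (ξ y : Fin d → ZMod N) : modeCos ξ y = modeCos y ξ :=
  Finset.prod_congr rfl fun _ _ => torusCos_comm _ _

lemma modeCos_zero_left (y : Fin d → ZMod N) : modeCos 0 y = 1 := by
  simp [modeCos, torusCos_zero_left]

lemma sum_modeCos_left (y : Fin d → ZMod N) :
    ∑ ξ, modeCos ξ y = if y = 0 then (N : ℝ) ^ d else 0 := by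
  simp only [modeCos]
  rw [← Fintype.prod_sum fun i k => torusCos k (y i)]
  simp only [sum_torusCos_left]
  split_ifs with hy
  · simp [hy]
  · obtain ⟨i, hi⟩ := Function.ne_iff.1 hy
    exact Finset.prod_eq_zero (Finset.mem_univ i) (if_neg hi)

lemma sum_modeCos_right (ξ : Fin d → ZMod N) :
    ∑ y, modeCos ξ y = if ξ = 0 then (N : ℝ) ^ d else 0 := by
  rw [← sum_modeCos_left]
  exact Finset.sum_congr rfl fun y _ => modeCos_comm _ _

lemma modeCos_add_single (ξ y : Fin d → ZMod N) (i : Fin d) (s : ZMod N) :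
    modeCos ξ (y + Pi.single i s) =
      torusCos (ξ i) (y i + s) * ∏ l ∈ Finset.univ.erase i, torusCos (ξ l) (y l) := by
  rw [modeCos, ← Finset.mul_prod_erase _ _ (Finset.mem_univ i), Pi.add_apply, Pi.single_eq_same]
  refine congrArg _ (Finset.prod_congr rfl fun l hl => ?_)
  rw [Pi.add_apply, Pi.single_eq_of_ne (Finset.ne_of_mem_erase hl), add_zero]

lemma modeCos_add_single_add_modeCos_sub_single (ξ y : Fin d → ZMod N) (i : Fin d) :
    modeCos ξ (y + Pi.single i 1) + modeCos ξ (y - Pi.single i 1) =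
      2 * torusCos (ξ i) 1 * modeCos ξ y := by
  rw [sub_eq_add_neg, ← Pi.single_neg, modeCos_add_single, modeCos_add_single, ← add_mul,
    ← sub_eq_add_neg, torusCos_add_one_add_torusCos_sub_one, mul_assoc,
    Finset.mul_prod_erase _ (fun l => torusCos (ξ l) (y l)) (Finset.mem_univ i), modeCos]

lemma one_sub_torusCos_nonneg (k y : ZMod N) : 0 ≤ 1 - torusCos k y :=
  sub_nonneg.2 (le_of_abs_le (abs_torusCos_le_one k y))

lemma eight_mul_torusNorm_sq_div_le_modeEnergy (ξ : Fin d → ZMod N) (i : Fin d) :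
    8 * (torusNorm (ξ i) : ℝ) ^ 2 / N ^ 2 ≤ modeEnergy ξ :=
  (eight_mul_torusNorm_sq_div_le_one_sub_torusCos (ξ i)).trans <|
    Finset.single_le_sum (f := fun i => 1 - torusCos (ξ i) 1)
      (fun l _ => one_sub_torusCos_nonneg (ξ l) 1) (Finset.mem_univ i)

lemma modeEnergy_nonneg (ξ : Fin d → ZMod N) : 0 ≤ modeEnergy ξ :=
  Finset.sum_nonneg fun l _ => one_sub_torusCos_nonneg (ξ l) 1

lemma modeEnergy_le (ξ : Fin d → ZMod N) : modeEnergy ξ ≤ 2 * d := by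
  have : modeEnergy ξ ≤ ∑ _i : Fin d, (2 : ℝ) := Finset.sum_le_sum fun l _ => by
    linarith [neg_le_of_abs_le (abs_torusCos_le_one (ξ l) 1)]
  simpa [mul_comm] using this

lemma modeEnergy_zero : modeEnergy (0 : Fin d → ZMod N) = 0 := by
  simp [modeEnergy, torusCos_zero_left]

lemma modeEnergy_pos {ξ : Fin d → ZMod N} (h : ξ ≠ 0) : 0 < modeEnergy ξ := by
  obtain ⟨i, hi⟩ := Function.ne_iff.1 h
  refine lt_of_lt_of_le ?_ (eight_mul_torusNorm_sq_div_le_modeEnergy ξ i)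
  have hN : (0 : ℝ) < N := Nat.cast_pos.2 (NeZero.pos N)
  have : (0 : ℝ) < torusNorm (ξ i) := Nat.cast_pos.2 (torusNorm_pos hi)
  positivity

/-- The function on the cylinder whose Fourier modes in the torus directions are the functions
`f ξ` of the height. -/
noncomputable def synth (f : (Fin d → ZMod N) → ℤ → ℝ) (w : Cyl d N) : ℝ :=
  ((N : ℝ) ^ d)⁻¹ * ∑ ξ, modeCos ξ w.1 * f ξ w.2

/-- The action of `nbrMean (cylDir d N)` on Fourier modes. -/
noncomputable def modeMean (f : (Fin d → ZMod N) → ℤ → ℝ) (ξ : Fin d → ZMod N) (a : ℤ) : ℝ :=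
  ((d - modeEnergy ξ) * f ξ a + (f ξ (a + 1) + f ξ (a - 1)) / 2) / (d + 1)

lemma cylDir_castSucc (d N : ℕ) (i : Fin d) : cylDir d N i.castSucc = (Pi.single i 1, 0) := by
  ext l
  · by_cases h : l = i <;> simp [cylDir, latDir, projE, Pi.single_apply, h]
  · simp [cylDir_snd, (Fin.castSucc_lt_last i).ne]

lemma cylDir_last (d N : ℕ) : cylDir d N (Fin.last d) = (0, 1) := by
  ext l
  · simp [cylDir, latDir, projE]
  · simp [cylDir_snd]

lemma nbrMean_modeCos_mul (f : (Fin d → ZMod N) → ℤ → ℝ) (ξ : Fin d → ZMod N) (w : Cyl d N) :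
    nbrMean (cylDir d N) (fun z => modeCos ξ z.1 * f ξ z.2) w =
      modeCos ξ w.1 * modeMean f ξ w.2 := by
  have henergy : ∑ i, torusCos (ξ i) 1 = d - modeEnergy ξ := by
    simp [modeEnergy, Finset.sum_sub_distrib]
  simp only [nbrMean, Fin.sum_univ_castSucc, cylDir_castSucc, cylDir_last, Prod.fst_add,
    Prod.snd_add, Prod.fst_sub, Prod.snd_sub, add_zero, sub_zero, ← add_mul,
    modeCos_add_single_add_modeCos_sub_single, Fintype.card_fin, Nat.cast_add, Nat.cast_one]
  rw [← Finset.sum_mul, ← Finset.sum_mul, ← Finset.mul_sum, henergy, modeMean]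
  field_simp

lemma nbrMean_synth (f : (Fin d → ZMod N) → ℤ → ℝ) :
    nbrMean (cylDir d N) (synth f) = synth (modeMean f) := by
  ext w
  unfold synth
  simp only [nbrMean_const_mul, nbrMean_sum, nbrMean_modeCos_mul]

/-- Half the difference of the roots of `r ^ 2 - 2 * (1 + modeEnergy ξ) * r + 1`. -/
noncomputable def modeGap (ξ : Fin d → ZMod N) : ℝ :=
  Real.sqrt (modeEnergy ξ ^ 2 + 2 * modeEnergy ξ)

/-- The smaller root of `r ^ 2 - 2 * (1 + modeEnergy ξ) * r + 1`, the rate of decay in the height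
of harmonic functions of frequency `ξ`. -/
noncomputable def modeRatio (ξ : Fin d → ZMod N) : ℝ := 1 + modeEnergy ξ - modeGap ξ

lemma modeGap_sq (ξ : Fin d → ZMod N) : modeGap ξ ^ 2 = modeEnergy ξ ^ 2 + 2 * modeEnergy ξ := by
  have := modeEnergy_nonneg ξ
  exact Real.sq_sqrt (by positivity)

lemma modeGap_nonneg (ξ : Fin d → ZMod N) : 0 ≤ modeGap ξ := Real.sqrt_nonneg _

lemma modeGap_pos {ξ : Fin d → ZMod N} (h : ξ ≠ 0) : 0 < modeGap ξ := by
  have := modeEnergy_pos h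
  exact Real.sqrt_pos.2 (by positivity)

lemma modeRatio_mul (ξ : Fin d → ZMod N) : modeRatio ξ * (1 + modeEnergy ξ + modeGap ξ) = 1 := by
  unfold modeRatio
  linear_combination -modeGap_sq ξ

lemma modeRatio_eq_inv (ξ : Fin d → ZMod N) : modeRatio ξ = (1 + modeEnergy ξ + modeGap ξ)⁻¹ :=
  eq_inv_of_mul_eq_one_left (modeRatio_mul ξ)

lemma modeRatio_pos (ξ : Fin d → ZMod N) : 0 < modeRatio ξ := by
  have := modeEnergy_nonneg ξ
  have := modeGap_nonneg ξ
  rw [modeRatio_eq_inv]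
  positivity

lemma modeRatio_sq_add_one (ξ : Fin d → ZMod N) :
    modeRatio ξ ^ 2 + 1 = 2 * (1 + modeEnergy ξ) * modeRatio ξ := by
  unfold modeRatio
  linear_combination modeGap_sq ξ

/-- The fundamental solution of the one-dimensional equation satisfied by the mode `ξ` of a Green
function. The zero mode is fixed by prescribing the height `C * N` at which it vanishes, the other
modes by decay at infinity. -/
noncomputable def modeGreen (C : ℝ) (ξ : Fin d → ZMod N) (a : ℤ) : ℝ :=
  if ξ = 0 then (d + 1) * (C * N - |(a : ℝ)|) else (d + 1) / modeGap ξ * modeRatio ξ ^ a.natAbs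

lemma abs_add_one_add_abs_sub_one (a : ℤ) :
    |((a + 1 : ℤ) : ℝ)| + |((a - 1 : ℤ) : ℝ)| = 2 * |(a : ℝ)| + if a = 0 then 2 else 0 := by
  have : |a + 1| + |a - 1| = 2 * |a| + if a = 0 then 2 else 0 := by
    simp only [abs_eq_max_neg]
    split_ifs <;> omega
  exact_mod_cast this

lemma modeGreen_sub_modeMean_of_eq_zero (C : ℝ) {ξ : Fin d → ZMod N} (hξ : ξ = 0) (a : ℤ) :
    modeGreen C ξ a - modeMean (modeGreen C) ξ a = if a = 0 then 1 else 0 := by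
  have henergy : modeEnergy ξ = 0 := hξ ▸ modeEnergy_zero
  have hrec := abs_add_one_add_abs_sub_one a
  simp only [modeMean, modeGreen, if_pos hξ, henergy, sub_zero]
  rw [sub_eq_iff_eq_add, ← sub_eq_iff_eq_add', eq_div_iff (by positivity)]
  split_ifs at hrec ⊢ <;> linear_combination ((d + 1 : ℝ) / 2) * hrec

lemma pow_natAbs_add_one_add_pow_natAbs_sub_one {r b : ℝ} (hr : r ^ 2 + 1 = b * r) {a : ℤ}
    (ha : a ≠ 0) : r ^ (a + 1).natAbs + r ^ (a - 1).natAbs = b * r ^ a.natAbs := by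
  obtain ⟨n, hn⟩ : ∃ n, a.natAbs = n + 1 := Nat.exists_eq_succ_of_ne_zero (Int.natAbs_ne_zero.2 ha)
  rw [hn]
  rcases ha.lt_or_gt with h | h
  · rw [show (a + 1).natAbs = n by omega, show (a - 1).natAbs = n + 2 by omega]
    linear_combination r ^ n * hr
  · rw [show (a + 1).natAbs = n + 2 by omega, show (a - 1).natAbs = n by omega]
    linear_combination r ^ n * hr

lemma modeGreen_sub_modeMean_of_ne_zero (C : ℝ) {ξ : Fin d → ZMod N} (hξ : ξ ≠ 0) (a : ℤ) :
    modeGreen C ξ a - modeMean (modeGreen C) ξ a = if a = 0 then 1 else 0 := by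
  have hgap : modeGap ξ ≠ 0 := (modeGap_pos hξ).ne'
  simp only [modeMean, modeGreen, if_neg hξ, ← mul_add]
  split_ifs with ha
  · subst ha
    simp only [zero_add, zero_sub, Int.natAbs_one, Int.natAbs_neg, pow_one, Int.natAbs_zero,
      pow_zero, modeRatio]
    field_simp
    ring
  · rw [pow_natAbs_add_one_add_pow_natAbs_sub_one (modeRatio_sq_add_one ξ) ha]
    field_simp
    ring

lemma modeGreen_sub_modeMean (C : ℝ) (ξ : Fin d → ZMod N) (a : ℤ) :
    modeGreen C ξ a - modeMean (modeGreen C) ξ a = if a = 0 then 1 else 0 := by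
  rcases eq_or_ne ξ 0 with hξ | hξ
  exacts [modeGreen_sub_modeMean_of_eq_zero C hξ a, modeGreen_sub_modeMean_of_ne_zero C hξ a]

/-- The function on the cylinder with Laplacian `-1_{0}` and modes `modeGreen C`. -/
noncomputable def cylGreen (C : ℝ) : Cyl d N → ℝ := synth (modeGreen C)

lemma cylGreen_sub_nbrMean (C : ℝ) (w : Cyl d N) :
    cylGreen C w - nbrMean (cylDir d N) (cylGreen C) w = if w = 0 then 1 else 0 := by
  have hN : (N : ℝ) ≠ 0 := Nat.cast_ne_zero.2 (NeZero.ne N)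
  simp only [cylGreen, nbrMean_synth, synth, ← mul_sub, ← Finset.sum_sub_distrib,
    modeGreen_sub_modeMean, ← Finset.sum_mul, sum_modeCos_left, Prod.ext_iff, Prod.fst_zero,
    Prod.snd_zero]
  split_ifs <;> simp_all

lemma sum_cylGreen (C : ℝ) (a : ℤ) :
    ∑ y : Fin d → ZMod N, cylGreen C (y, a) = (d + 1) * (C * N - |(a : ℝ)|) := by
  have hN : (N : ℝ) ≠ 0 := Nat.cast_ne_zero.2 (NeZero.ne N)
  simp only [cylGreen, synth, ← Finset.mul_sum]
  rw [Finset.sum_comm]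
  simp only [← Finset.sum_mul, sum_modeCos_right, ite_mul, zero_mul, Finset.sum_ite_eq',
    Finset.mem_univ, if_true, modeGreen]
  field_simp

end Modes

/-! ### The Green function far from its pole -/

section Far

variable {d N : ℕ} [NeZero N]

lemma four_mul_torusNorm_div_le_modeGap (ξ : Fin d → ZMod N) (i : Fin d) :
    4 * (torusNorm (ξ i) : ℝ) / N ≤ modeGap ξ := by
  refine Real.le_sqrt_of_sq_le ?_
  calc (4 * (torusNorm (ξ i) : ℝ) / N) ^ 2 = 2 * (8 * (torusNorm (ξ i) : ℝ) ^ 2 / N ^ 2) := by ring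
    _ ≤ 2 * modeEnergy ξ := by gcongr; exact eight_mul_torusNorm_sq_div_le_modeEnergy ξ i
    _ ≤ modeEnergy ξ ^ 2 + 2 * modeEnergy ξ := le_add_of_nonneg_left (sq_nonneg _)

lemma modeGap_le (ξ : Fin d → ZMod N) : modeGap ξ ≤ 2 * d + 1 := by
  have hratio := modeRatio_pos ξ
  rw [modeRatio] at hratio
  linarith [modeEnergy_le ξ]

lemma modeRatio_le_exp (ξ : Fin d → ZMod N) :
    modeRatio ξ ≤ Real.exp (-(modeGap ξ / (2 * d + 2))) := by
  have henergy := modeEnergy_nonneg ξ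
  have hgap := modeGap_nonneg ξ
  calc modeRatio ξ ≤ (1 + modeGap ξ)⁻¹ := by
        rw [modeRatio_eq_inv]
        gcongr
        linarith
    _ = 1 - modeGap ξ / (1 + modeGap ξ) := by field_simp; ring
    _ ≤ 1 - modeGap ξ / (2 * d + 2) := by
        gcongr 1 - modeGap ξ / ?_
        linarith [modeGap_le ξ]
    _ ≤ Real.exp (-(modeGap ξ / (2 * d + 2))) := Real.one_sub_le_exp_neg _

/-- The ratio of a geometric series dominating, per torus direction, the nonzero modes at height
at least `N / 4`. -/
noncomputable def farRatio (d : ℕ) : ℝ := Real.exp (-(1 / (d * (2 * d + 2))))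

/-- The constant bounding the nonzero modes at height at least `N / 4`. -/
noncomputable def farConst (d : ℕ) : ℝ := (d + 1) / 4 * (2 * (1 - farRatio d)⁻¹) ^ d

lemma farRatio_pos (d : ℕ) : 0 < farRatio d := Real.exp_pos _

lemma farRatio_lt_one (hd : 1 ≤ d) : farRatio d < 1 := by
  have : (0 : ℝ) < 1 / (d * (2 * d + 2)) := by positivity
  exact Real.exp_lt_one_iff.2 (neg_neg_of_pos this)

lemma farConst_nonneg (hd : 1 ≤ d) : 0 ≤ farConst d := by
  have : 0 ≤ (1 - farRatio d)⁻¹ := inv_nonneg.2 (sub_nonneg.2 (farRatio_lt_one hd).le)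
  unfold farConst
  positivity

lemma modeGreen_nonneg (C : ℝ) {ξ : Fin d → ZMod N} (hξ : ξ ≠ 0) (a : ℤ) : 0 ≤ modeGreen C ξ a := by
  have := modeGap_pos hξ
  have := modeRatio_pos ξ
  rw [modeGreen, if_neg hξ]
  positivity

omit [NeZero N] in
lemma prod_farRatio_pow_torusNorm (ξ : Fin d → ZMod N) :
    ∏ i, farRatio d ^ torusNorm (ξ i) =
      Real.exp (-((∑ i, (torusNorm (ξ i) : ℝ)) / (d * (2 * d + 2)))) := by
  simp only [farRatio, ← Real.exp_nat_mul]
  rw [← Real.exp_sum, Finset.sum_div, ← Finset.sum_neg_distrib]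
  exact congrArg _ (Finset.sum_congr rfl fun i _ => by ring)

lemma modeRatio_pow_natAbs_le_prod (hd : 1 ≤ d) (ξ : Fin d → ZMod N) {a : ℤ}
    (ha : (N : ℝ) ≤ 4 * a.natAbs) :
    modeRatio ξ ^ a.natAbs ≤ ∏ i, farRatio d ^ torusNorm (ξ i) := by
  have hN : (0 : ℝ) < N := Nat.cast_pos.2 (NeZero.pos N)
  have hgap := modeGap_nonneg ξ
  have hnorm i : (torusNorm (ξ i) : ℝ) ≤ a.natAbs * modeGap ξ := by
    have := (div_le_iff₀ hN).1 (four_mul_torusNorm_div_le_modeGap ξ i)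
    nlinarith
  have hsum : ∑ i, (torusNorm (ξ i) : ℝ) ≤ d * (a.natAbs * modeGap ξ) := by
    simpa using Finset.sum_le_sum fun i (_ : i ∈ Finset.univ) => hnorm i
  calc modeRatio ξ ^ a.natAbs ≤ Real.exp (-(modeGap ξ / (2 * d + 2))) ^ a.natAbs := by
        have := (modeRatio_pos ξ).le
        gcongr
        exact modeRatio_le_exp ξ
    _ = Real.exp (-(d * (a.natAbs * modeGap ξ) / (d * (2 * d + 2)))) := by
        rw [← Real.exp_nat_mul]
        congr 1
        field_simp
    _ ≤ ∏ i, farRatio d ^ torusNorm (ξ i) := by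
        rw [prod_farRatio_pow_torusNorm]
        gcongr

lemma modeGreen_le_prod_farRatio (hd : 1 ≤ d) (C : ℝ) {ξ : Fin d → ZMod N} (hξ : ξ ≠ 0) {a : ℤ}
    (ha : (N : ℝ) ≤ 4 * a.natAbs) :
    modeGreen C ξ a ≤ (d + 1) * N / 4 * ∏ i, farRatio d ^ torusNorm (ξ i) := by
  have hN : (0 : ℝ) < N := Nat.cast_pos.2 (NeZero.pos N)
  have hgap := modeGap_pos hξ
  obtain ⟨i, hi⟩ := Function.ne_iff.1 hξ
  have hnorm : (1 : ℝ) ≤ torusNorm (ξ i) := Nat.one_le_cast.2 (torusNorm_pos hi)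
  have hgap_ge : 4 / N ≤ modeGap ξ :=
    le_trans (by gcongr; linarith) (four_mul_torusNorm_div_le_modeGap ξ i)
  rw [modeGreen, if_neg hξ]
  refine mul_le_mul ?_ (modeRatio_pow_natAbs_le_prod hd ξ ha)
    (pow_nonneg (modeRatio_pos ξ).le _) (by positivity)
  rw [div_le_div_iff₀ hgap (by norm_num), mul_assoc]
  gcongr
  exact (div_le_iff₀' hN).1 hgap_ge

lemma sum_modeGreen_le_farConst_mul (hd : 1 ≤ d) (C : ℝ) {a : ℤ} (ha : (N : ℝ) ≤ 4 * a.natAbs) :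
    ∑ ξ ∈ Finset.univ.erase (0 : Fin d → ZMod N), modeGreen C ξ a ≤ farConst d * N := by
  have hr := farRatio_lt_one hd
  have hr0 := farRatio_pos d
  calc ∑ ξ ∈ Finset.univ.erase (0 : Fin d → ZMod N), modeGreen C ξ a
      ≤ ∑ ξ ∈ Finset.univ.erase (0 : Fin d → ZMod N),
          (d + 1) * N / 4 * ∏ i, farRatio d ^ torusNorm (ξ i) :=
        Finset.sum_le_sum fun ξ hξ =>
          modeGreen_le_prod_farRatio hd C (Finset.ne_of_mem_erase hξ) ha
    _ ≤ ∑ ξ : Fin d → ZMod N, (d + 1) * N / 4 * ∏ i, farRatio d ^ torusNorm (ξ i) :=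
        Finset.sum_le_sum_of_subset_of_nonneg (Finset.subset_univ _) fun ξ _ _ => by positivity
    _ = (d + 1) * N / 4 * (∑ k : ZMod N, farRatio d ^ torusNorm k) ^ d := by
        rw [← Finset.mul_sum, ← Fintype.prod_sum fun (_ : Fin d) k => farRatio d ^ torusNorm k]
        simp
    _ ≤ (d + 1) * N / 4 * (2 * (1 - farRatio d)⁻¹) ^ d := by
        gcongr
        refine (sum_comp_torusNorm_le fun v => pow_nonneg hr0.le v).trans ?_
        gcongr
        rw [← tsum_geometric_of_lt_one hr0.le hr]
        exact (summable_geometric_of_lt_one hr0.le hr).sum_le_tsum _ fun v _ => by positivity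
    _ = farConst d * N := by rw [farConst]; ring

lemma synth_eq_zero_mode_add (f : (Fin d → ZMod N) → ℤ → ℝ) (w : Cyl d N) :
    synth f w = ((N : ℝ) ^ d)⁻¹ * (f 0 w.2 +
      ∑ ξ ∈ Finset.univ.erase (0 : Fin d → ZMod N), modeCos ξ w.1 * f ξ w.2) := by
  rw [synth, ← Finset.add_sum_erase _ _ (Finset.mem_univ (0 : Fin d → ZMod N)),
    modeCos_zero_left, one_mul]

lemma abs_sum_modeCos_mul_modeGreen_le (hd : 1 ≤ d) (C : ℝ) {w : Cyl d N}
    (ha : (N : ℝ) ≤ 4 * w.2.natAbs) :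
    |∑ ξ ∈ Finset.univ.erase (0 : Fin d → ZMod N), modeCos ξ w.1 * modeGreen C ξ w.2| ≤
      farConst d * N := by
  refine (Finset.abs_sum_le_sum_abs _ _).trans <|
    (Finset.sum_le_sum fun ξ hξ => ?_).trans (sum_modeGreen_le_farConst_mul hd C ha)
  have hnonneg := modeGreen_nonneg C (Finset.ne_of_mem_erase hξ) w.2
  rw [abs_mul, abs_of_nonneg hnonneg]
  exact mul_le_of_le_one_left hnonneg (abs_modeCos_le_one ξ w.1)

/-- The value of `C` for which `cylGreen C` is used: large enough for `cylGreen C` to be nonnegative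
up to height `4 * N`. -/
noncomputable def greenHeight (d : ℕ) : ℝ := farConst d + 4

lemma greenHeight_pos (hd : 1 ≤ d) : 0 < greenHeight d := by
  have := farConst_nonneg hd
  unfold greenHeight
  linarith

lemma cylGreen_le_of_far (hd : 1 ≤ d) {w : Cyl d N} (ha : (N : ℝ) ≤ 4 * w.2.natAbs) :
    cylGreen (greenHeight d) w ≤ ((d + 1) * greenHeight d + farConst d) * N / N ^ d := by
  rw [cylGreen, synth_eq_zero_mode_add, mul_comm, ← div_eq_mul_inv]
  gcongr
  have hzero : modeGreen (greenHeight d) (0 : Fin d → ZMod N) w.2 ≤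
      (d + 1) * (greenHeight d * N) := by
    rw [modeGreen, if_pos rfl]
    gcongr
    exact sub_le_self _ (abs_nonneg _)
  linarith [le_of_abs_le (abs_sum_modeCos_mul_modeGreen_le hd (greenHeight d) ha)]

lemma cylGreen_nonneg_of_natAbs_snd_eq (hd : 1 ≤ d) {w : Cyl d N} (hw : w.2.natAbs = 4 * N) :
    0 ≤ cylGreen (greenHeight d) w := by
  have hfar : (N : ℝ) ≤ 4 * w.2.natAbs := by
    rw [hw]
    push_cast
    linarith [(Nat.cast_nonneg N : (0 : ℝ) ≤ N)]
  have hheight : |(w.2 : ℝ)| = 4 * N := by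
    rw [← Int.cast_abs, Int.abs_eq_natAbs, hw]
    push_cast
    rfl
  have hzero : modeGreen (greenHeight d) (0 : Fin d → ZMod N) w.2 =
      farConst d * N + d * (farConst d * N) := by
    rw [modeGreen, if_pos rfl, hheight, greenHeight]
    ring
  have hconst := farConst_nonneg hd
  rw [cylGreen, synth_eq_zero_mode_add, hzero]
  refine mul_nonneg (by positivity) ?_
  have hrest := neg_le_of_abs_le (abs_sum_modeCos_mul_modeGreen_le hd (greenHeight d) hfar)
  have : 0 ≤ (d : ℝ) * (farConst d * N) := by positivity
  linarith

lemma cylGreen_nonneg (hd : 1 ≤ d) {w : Cyl d N} (hw : w.2.natAbs ≤ 4 * N) :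
    0 ≤ cylGreen (greenHeight d) w := by
  rcases hw.eq_or_lt with h | h
  · exact cylGreen_nonneg_of_natAbs_snd_eq hd h
  let S : Set (Cyl d N) := {z | z.2.natAbs < 4 * N}
  have hS : S.Finite := (finite_setOf_abs_snd_sub_le d N 0 (4 * N)).subset fun z hz => by
    have : |z.2| ≤ (4 * N : ℕ) := by
      rw [Int.abs_eq_natAbs]
      exact_mod_cast (show z.2.natAbs < 4 * N from hz).le
    simpa using (Int.cast_le (R := ℝ)).2 this
  refine neg_nonpos.1 (nonpos_of_le_nbrMean (f := fun z => -cylGreen (greenHeight d) z)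
    (not_isOfFinAddOrder_cylDir_last d N) hS (fun z _ => ?_) (fun z hz v hv hvS => ?_) w h)
  · have hmul := nbrMean_const_mul (cylDir d N) (-1) (cylGreen (greenHeight d)) z
    have hgreen := cylGreen_sub_nbrMean (greenHeight d) z
    simp only [neg_one_mul] at hmul
    rw [hmul]
    split_ifs at hgreen <;> linarith
  · have hstep := abs_le.1 (abs_snd_sub_le_one_of_isNbr hv)
    have hz : z.2.natAbs < 4 * N := hz
    have hv : ¬ v.2.natAbs < 4 * N := hvS
    exact neg_nonpos.2 (cylGreen_nonneg_of_natAbs_snd_eq hd (by omega))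

end Far

/-! ### Estimates on the modes near the pole -/

lemma exp_neg_le_rpow_neg {x p : ℝ} (hx : 0 < x) (hp : 0 ≤ p) (hp1 : p ≤ 1) :
    Real.exp (-x) ≤ x ^ (-p) := by
  rw [Real.exp_neg, Real.rpow_neg hx.le]
  gcongr
  rcases le_total x 1 with h | h
  · exact (Real.rpow_le_one hx.le h hp).trans (Real.one_le_exp hx.le)
  · calc x ^ p ≤ x ^ (1 : ℝ) := Real.rpow_le_rpow_of_exponent_le h hp1
      _ = x := Real.rpow_one x
      _ ≤ Real.exp x := (le_add_of_nonneg_right zero_le_one).trans (Real.add_one_le_exp x)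

lemma sum_rpow_sub_one_le {p : ℝ} (hp : 0 < p) (hp1 : p ≤ 1) (M : ℕ) :
    p * ∑ v ∈ Finset.range M, ((v : ℝ) + 1) ^ (p - 1) ≤ (M : ℝ) ^ p := by
  induction M with
  | zero => simp [hp.ne']
  | succ M ih =>
    have hM : (0 : ℝ) < M + 1 := by positivity
    have hbernoulli : (M / (M + 1) : ℝ) ^ p ≤ 1 - p / (M + 1) := by
      have hs : -1 ≤ -(1 / ((M : ℝ) + 1)) :=
        neg_le_neg ((div_le_one hM).2 (le_add_of_nonneg_left M.cast_nonneg))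
      have := rpow_one_add_le_one_add_mul_self hs hp.le hp1
      rwa [show 1 + -(1 / ((M : ℝ) + 1)) = M / (M + 1) by field_simp; ring,
        show 1 + p * -(1 / ((M : ℝ) + 1)) = 1 - p / (M + 1) by ring] at this
    rw [Real.div_rpow M.cast_nonneg hM.le, div_le_iff₀ (by positivity)] at hbernoulli
    rw [Finset.sum_range_succ, mul_add, Real.rpow_sub_one hM.ne', Nat.cast_add, Nat.cast_one]
    calc p * ∑ v ∈ Finset.range M, ((v : ℝ) + 1) ^ (p - 1) + p * (((M : ℝ) + 1) ^ p / (M + 1))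
        ≤ (1 - p / (M + 1)) * ((M : ℝ) + 1) ^ p + p * (((M : ℝ) + 1) ^ p / (M + 1)) :=
          add_le_add_left (ih.trans hbernoulli) _
      _ = ((M : ℝ) + 1) ^ p := by ring

section NearModes

variable {d N : ℕ}

/-- The contribution of one torus direction to a product majorant of negative powers of
`modeEnergy`. The exponent is less than `1`, which makes `torusMajorant / N` summable, and at least
`5 / 6`, as required by the two slab dimensions to be treated. -/
noncomputable def torusMajorant (k : ZMod N) : ℝ := (N / (1 + torusNorm k)) ^ (5 / 6 : ℝ)

lemma torusMajorant_nonneg (k : ZMod N) : 0 ≤ torusMajorant k := by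
  unfold torusMajorant
  positivity

variable [NeZero N]

lemma sum_torusMajorant_le : ∑ k : ZMod N, (N : ℝ)⁻¹ * torusMajorant k ≤ 24 := by
  have hN1 : (1 : ℝ) ≤ N := Nat.one_le_cast.2 (NeZero.pos N)
  have hN : (0 : ℝ) < N := zero_lt_one.trans_le hN1
  have hterm (v : ℕ) : (N : ℝ)⁻¹ * (N / (1 + v)) ^ (5 / 6 : ℝ) =
      (N : ℝ) ^ (-(1 / 6) : ℝ) * ((v : ℝ) + 1) ^ (1 / 6 - 1 : ℝ) := by
    rw [Real.div_rpow hN.le (by positivity), add_comm 1 (v : ℝ),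
      show (1 / 6 - 1 : ℝ) = -(5 / 6) by norm_num, Real.rpow_neg (x := (v : ℝ) + 1) (by positivity),
      div_eq_mul_inv, ← mul_assoc, ← Real.rpow_neg_one N, ← Real.rpow_add hN]
    norm_num
  have hpow : ((N + 1 : ℕ) : ℝ) ^ (1 / 6 : ℝ) ≤ 2 * (N : ℝ) ^ (1 / 6 : ℝ) := by
    calc ((N + 1 : ℕ) : ℝ) ^ (1 / 6 : ℝ) ≤ (2 * N : ℝ) ^ (1 / 6 : ℝ) := by
          push_cast
          gcongr
          linarith
      _ = (2 : ℝ) ^ (1 / 6 : ℝ) * (N : ℝ) ^ (1 / 6 : ℝ) := Real.mul_rpow zero_le_two hN.le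
      _ ≤ 2 * (N : ℝ) ^ (1 / 6 : ℝ) := by
          gcongr
          exact Real.rpow_le_self_of_one_le one_le_two (by norm_num)
  calc ∑ k : ZMod N, (N : ℝ)⁻¹ * torusMajorant k
      ≤ 2 * ∑ v ∈ Finset.range (N + 1), (N : ℝ)⁻¹ * (N / (1 + v)) ^ (5 / 6 : ℝ) :=
        sum_comp_torusNorm_le (φ := fun v => (N : ℝ)⁻¹ * (N / (1 + v)) ^ (5 / 6 : ℝ))
          fun v => by positivity
    _ = 12 * ((N : ℝ) ^ (-(1 / 6) : ℝ) *
          (1 / 6 * ∑ v ∈ Finset.range (N + 1), ((v : ℝ) + 1) ^ (1 / 6 - 1 : ℝ))) := by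
        simp only [hterm, ← Finset.mul_sum]
        ring
    _ ≤ 12 * ((N : ℝ) ^ (-(1 / 6) : ℝ) * (2 * (N : ℝ) ^ (1 / 6 : ℝ))) := by
        gcongr 12 * (_ * ?_)
        exact (sum_rpow_sub_one_le (by norm_num) (by norm_num) _).trans hpow
    _ = 24 := by
        rw [mul_left_comm _ (2 : ℝ), ← Real.rpow_add hN]
        norm_num

lemma one_add_torusNorm_sq_div_le_modeEnergy {ξ : Fin d → ZMod N} (hξ : ξ ≠ 0) (i : Fin d) :
    (1 + torusNorm (ξ i) : ℝ) ^ 2 / N ^ 2 ≤ modeEnergy ξ := by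
  obtain ⟨l, hl⟩ := Function.ne_iff.1 hξ
  obtain ⟨l, hl, hle⟩ : ∃ l, ξ l ≠ 0 ∧ torusNorm (ξ i) ≤ torusNorm (ξ l) := by
    by_cases hi : ξ i = 0
    · exact ⟨l, hl, by simp [hi, torusNorm]⟩
    · exact ⟨i, hi, le_rfl⟩
  have hle : (torusNorm (ξ i) : ℝ) ≤ torusNorm (ξ l) := Nat.cast_le.2 hle
  have hone : (1 : ℝ) ≤ torusNorm (ξ l) := Nat.one_le_cast.2 (torusNorm_pos hl)
  refine le_trans ?_ (eight_mul_torusNorm_sq_div_le_modeEnergy ξ l)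
  gcongr
  nlinarith [(torusNorm (ξ i)).cast_nonneg (α := ℝ)]

lemma modeEnergy_rpow_neg_le (hN : 2 ≤ N) {J : Finset (Fin d)} (hJ : J.Nonempty) {t : ℝ}
    (ht : 0 ≤ t) (htJ : 2 * t ≤ 5 / 6 * J.card) {ξ : Fin d → ZMod N} (hξ : ξ ≠ 0) :
    modeEnergy ξ ^ (-t) ≤ ∏ i ∈ J, torusMajorant (ξ i) := by
  have henergy := modeEnergy_pos hξ
  obtain ⟨i, -, hmin⟩ := J.exists_min_image (fun i => (N : ℝ) / (1 + torusNorm (ξ i))) hJ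
  set L := (N : ℝ) / (1 + torusNorm (ξ i)) with hL
  have hL1 : 1 ≤ L := by
    have := two_mul_torusNorm_le (ξ i)
    rw [hL, one_le_div (by positivity)]
    exact_mod_cast (by omega : 1 + torusNorm (ξ i) ≤ N)
  have hLsq : (modeEnergy ξ)⁻¹ ≤ L ^ 2 := by
    have : (0 : ℝ) < N := Nat.cast_pos.2 (NeZero.pos N)
    rw [hL, div_pow, inv_le_comm₀ henergy (by positivity), inv_div]
    exact one_add_torusNorm_sq_div_le_modeEnergy hξ i
  calc modeEnergy ξ ^ (-t) = ((modeEnergy ξ)⁻¹) ^ t := by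
        rw [Real.rpow_neg henergy.le, Real.inv_rpow henergy.le]
    _ ≤ (L ^ 2) ^ t := by gcongr
    _ = L ^ (2 * t) := by rw [← Real.rpow_natCast_mul (by positivity), Nat.cast_ofNat]
    _ ≤ L ^ (5 / 6 * J.card : ℝ) := Real.rpow_le_rpow_of_exponent_le hL1 htJ
    _ = ∏ _i ∈ J, L ^ (5 / 6 : ℝ) := by
        rw [Finset.prod_const, Real.rpow_mul_natCast (by positivity)]
    _ ≤ ∏ i ∈ J, torusMajorant (ξ i) := by
        unfold torusMajorant
        gcongr with l hl
        exact hmin l hl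

/-- The action on Fourier modes of the averaging operator of the lazy walk, which stays put with
probability `1 / 2`. -/
noncomputable def lazyMean (f : (Fin d → ZMod N) → ℤ → ℝ) (ξ : Fin d → ZMod N) (a : ℤ) : ℝ :=
  (f ξ a + modeMean f ξ a) / 2

lemma synth_lazyMean (f : (Fin d → ZMod N) → ℤ → ℝ) (w : Cyl d N) :
    synth (lazyMean f) w = (synth f w + nbrMean (cylDir d N) (synth f) w) / 2 := by
  simp only [nbrMean_synth, synth, lazyMean, ← mul_add, ← Finset.sum_add_distrib, mul_div_assoc,
    Finset.sum_div]

lemma abs_lazyMean_le (f : (Fin d → ZMod N) → ℤ → ℝ) (ξ : Fin d → ZMod N) (a : ℤ) :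
    |lazyMean f ξ a| ≤ (2 * d + 1 - modeEnergy ξ) / (2 * (d + 1)) * |f ξ a| +
      1 / (4 * (d + 1)) * (|f ξ (a + 1)| + |f ξ (a - 1)|) := by
  have hstay : 0 ≤ (2 * d + 1 - modeEnergy ξ) / (2 * (d + 1)) :=
    div_nonneg (by linarith [modeEnergy_le ξ]) (by positivity)
  have hmove : (0 : ℝ) ≤ 1 / (4 * (d + 1)) := by positivity
  have hsplit : lazyMean f ξ a = (2 * d + 1 - modeEnergy ξ) / (2 * (d + 1)) * f ξ a +
      1 / (4 * (d + 1)) * (f ξ (a + 1) + f ξ (a - 1)) := by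
    unfold lazyMean modeMean
    field_simp
    ring
  calc |lazyMean f ξ a| ≤ _ := hsplit ▸ abs_add_le _ _
    _ ≤ _ := by
        rw [abs_mul, abs_mul, abs_of_nonneg hstay, abs_of_nonneg hmove]
        gcongr
        exact abs_add_le _ _

lemma sum_abs_lazyMean_le {f : (Fin d → ZMod N) → ℤ → ℝ} {ξ : Fin d → ZMod N} {W : Finset ℤ}
    {a : ℤ} {B : ℝ} (h : ∀ b : ℤ, |b - a| ≤ 1 → ∑ a' ∈ W, |f ξ (b - a')| ≤ B) :
    ∑ a' ∈ W, |lazyMean f ξ (a - a')| ≤ (1 - modeEnergy ξ / (2 * (d + 1))) * B := by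
  have hstay : 0 ≤ (2 * d + 1 - modeEnergy ξ) / (2 * (d + 1)) :=
    div_nonneg (by linarith [modeEnergy_le ξ]) (by positivity)
  calc ∑ a' ∈ W, |lazyMean f ξ (a - a')|
      ≤ ∑ a' ∈ W, ((2 * d + 1 - modeEnergy ξ) / (2 * (d + 1)) * |f ξ (a - a')| +
          1 / (4 * (d + 1)) * (|f ξ (a + 1 - a')| + |f ξ (a - 1 - a')|)) := by
        refine Finset.sum_le_sum fun a' _ => ?_
        rw [add_sub_right_comm a 1 a', sub_right_comm a 1 a']
        exact abs_lazyMean_le f ξ (a - a')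
    _ = (2 * d + 1 - modeEnergy ξ) / (2 * (d + 1)) * ∑ a' ∈ W, |f ξ (a - a')| +
          1 / (4 * (d + 1)) * (∑ a' ∈ W, |f ξ (a + 1 - a')| + ∑ a' ∈ W, |f ξ (a - 1 - a')|) := by
        rw [Finset.sum_add_distrib, ← Finset.mul_sum, ← Finset.mul_sum, Finset.sum_add_distrib]
    _ ≤ (2 * d + 1 - modeEnergy ξ) / (2 * (d + 1)) * B + 1 / (4 * (d + 1)) * (B + B) := by
        gcongr <;> exact h _ (by simp)
    _ = (1 - modeEnergy ξ / (2 * (d + 1))) * B := by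
        field_simp
        ring

lemma sum_abs_lazyMean_iterate_le {f : (Fin d → ZMod N) → ℤ → ℝ} {ξ : Fin d → ZMod N}
    {W : Finset ℤ} {B : ℝ} (h : ∀ a : ℤ, ∑ a' ∈ W, |f ξ (a - a')| ≤ B) (n : ℕ) (a : ℤ) :
    ∑ a' ∈ W, |lazyMean^[n] f ξ (a - a')| ≤ (1 - modeEnergy ξ / (2 * (d + 1))) ^ n * B := by
  induction n generalizing a with
  | zero => simpa using h a
  | succ n ih =>
    rw [Function.iterate_succ_apply', pow_succ', mul_assoc]
    exact sum_abs_lazyMean_le fun b _ => ih b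

lemma abs_lazyMean_iterate_le {f : (Fin d → ZMod N) → ℤ → ℝ} {ξ : Fin d → ZMod N} {b c : ℝ}
    (hc : 0 ≤ c) (h : ∀ a : ℤ, |f ξ a| ≤ c * (b + |(a : ℝ)|)) (n : ℕ) (a : ℤ) :
    |lazyMean^[n] f ξ a| ≤ c * (b + |(a : ℝ)| + n) := by
  induction n generalizing a with
  | zero => simpa using h a
  | succ n ih =>
    set B := c * (b + |(a : ℝ)| + (n + 1 : ℕ)) with hB
    have hstep : ∀ b' : ℤ, |b' - a| ≤ 1 → ∑ a' ∈ {0}, |lazyMean^[n] f ξ (b' - a')| ≤ B := by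
      intro b' hb'
      rw [Finset.sum_singleton, sub_zero, hB]
      refine (ih b').trans ?_
      have hdist : |(b' : ℝ) - a| ≤ 1 := by exact_mod_cast hb'
      have := abs_sub_abs_le_abs_sub (b' : ℝ) a
      push_cast
      gcongr ?_ * ?_
      linarith
    have hB0 : 0 ≤ B := (Finset.sum_nonneg fun _ _ => abs_nonneg _).trans (hstep a (by simp))
    have hlazy := sum_abs_lazyMean_le hstep
    rw [Finset.sum_singleton, sub_zero] at hlazy
    rw [Function.iterate_succ_apply']
    refine hlazy.trans (mul_le_of_le_one_left hB0 (sub_le_self _ ?_))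
    exact div_nonneg (modeEnergy_nonneg ξ) (by positivity)

lemma modeRatio_lt_one {ξ : Fin d → ZMod N} (hξ : ξ ≠ 0) : modeRatio ξ < 1 := by
  rw [modeRatio_eq_inv]
  exact inv_lt_one_of_one_lt₀ (by linarith [modeEnergy_nonneg ξ, modeGap_pos hξ])

lemma abs_modeGreen_zero_le {C : ℝ} (hC : 0 ≤ C) (a : ℤ) :
    |modeGreen C (0 : Fin d → ZMod N) a| ≤ (d + 1) * (C * N + |(a : ℝ)|) := by
  rw [modeGreen, if_pos rfl, abs_mul, abs_of_nonneg (by positivity : (0 : ℝ) ≤ d + 1)]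
  gcongr
  refine (abs_sub _ _).trans_eq ?_
  rw [abs_of_nonneg (by positivity : 0 ≤ C * N), abs_abs]

lemma abs_modeGreen_le (C : ℝ) {ξ : Fin d → ZMod N} (hξ : ξ ≠ 0) (a : ℤ) :
    |modeGreen C ξ a| ≤ (d + 1) * modeEnergy ξ ^ (-(1 / 2) : ℝ) := by
  have henergy := modeEnergy_pos hξ
  have hgap : Real.sqrt (modeEnergy ξ) ≤ modeGap ξ := Real.sqrt_le_sqrt (by nlinarith)
  have hpow : modeRatio ξ ^ a.natAbs ≤ 1 :=
    pow_le_one₀ (modeRatio_pos ξ).le (modeRatio_lt_one hξ).le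
  have := modeGap_pos hξ
  rw [abs_of_nonneg (modeGreen_nonneg C hξ a), modeGreen, if_neg hξ]
  calc (d + 1) / modeGap ξ * modeRatio ξ ^ a.natAbs ≤ (d + 1) / modeGap ξ :=
        mul_le_of_le_one_right (by positivity) hpow
    _ ≤ (d + 1) / Real.sqrt (modeEnergy ξ) := by gcongr
    _ = (d + 1) * modeEnergy ξ ^ (-(1 / 2) : ℝ) := by
        rw [Real.rpow_neg henergy.le, ← Real.sqrt_eq_rpow, div_eq_mul_inv]

lemma sum_natAbs_sub_le_two_mul_tsum {φ : ℕ → ℝ} (hφ : ∀ v, 0 ≤ φ v) (hs : Summable φ)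
    (W : Finset ℤ) (a : ℤ) : ∑ a' ∈ W, φ (a - a').natAbs ≤ 2 * ∑' v, φ v := by
  have hinj {S : Finset ℤ} (hS : Set.InjOn (fun a' : ℤ => (a - a').natAbs) S) :
      ∑ a' ∈ S, φ (a - a').natAbs ≤ ∑' v, φ v := by
    rw [← Finset.sum_image (f := φ) hS]
    exact hs.sum_le_tsum _ fun v _ => hφ v
  rw [← Finset.sum_filter_add_sum_filter_not W (fun a' => a' ≤ a), two_mul]
  refine add_le_add (hinj ?_) (hinj ?_) <;>
  · intro x hx y hy h
    simp only [Finset.coe_filter, Set.mem_ofPred_eq] at hx hy h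
    omega

lemma inv_one_sub_modeRatio_le {ξ : Fin d → ZMod N} (hξ : ξ ≠ 0) :
    (1 - modeRatio ξ)⁻¹ ≤ modeGap ξ / modeEnergy ξ := by
  have henergy := modeEnergy_pos hξ
  have hratio := modeRatio_pos ξ
  have hlt := modeRatio_lt_one hξ
  rw [inv_le_comm₀ (sub_pos.2 hlt) (div_pos (modeGap_pos hξ) henergy), inv_div,
    div_le_iff₀ (modeGap_pos hξ)]
  rw [modeRatio] at hratio ⊢
  nlinarith [modeGap_sq ξ]

lemma sum_abs_modeGreen_le (C : ℝ) {ξ : Fin d → ZMod N} (hξ : ξ ≠ 0) (W : Finset ℤ) (a : ℤ) :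
    ∑ a' ∈ W, |modeGreen C ξ (a - a')| ≤ 2 * (d + 1) * modeEnergy ξ ^ (-1 : ℝ) := by
  have hgap := modeGap_pos hξ
  have hratio := modeRatio_pos ξ
  have hlt := modeRatio_lt_one hξ
  calc ∑ a' ∈ W, |modeGreen C ξ (a - a')|
      = (d + 1) / modeGap ξ * ∑ a' ∈ W, modeRatio ξ ^ (a - a').natAbs := by
        rw [Finset.mul_sum]
        refine Finset.sum_congr rfl fun a' _ => ?_
        rw [abs_of_nonneg (modeGreen_nonneg C hξ _), modeGreen, if_neg hξ]
    _ ≤ (d + 1) / modeGap ξ * (2 * (modeGap ξ / modeEnergy ξ)) := by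
        have hgeom := sum_natAbs_sub_le_two_mul_tsum (fun v => pow_nonneg hratio.le v)
          (summable_geometric_of_lt_one hratio.le hlt) W a
        rw [tsum_geometric_of_lt_one hratio.le hlt] at hgeom
        gcongr
        exact hgeom.trans (mul_le_mul_of_nonneg_left (inv_one_sub_modeRatio_le hξ) zero_le_two)
    _ = 2 * (d + 1) * modeEnergy ξ ^ (-1 : ℝ) := by
        rw [Real.rpow_neg_one]
        field_simp

end NearModes

/-! ### Sums over slabs -/

section Slabs

variable {d N : ℕ}

/-- A bound for the Fourier coefficient at `ξ` of the indicator function of a slab: only the modes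
constant along the free directions of the slab contribute. -/
noncomputable def slabWeight (J : Finset (Fin d)) (ξ : Fin d → ZMod N) : ℝ :=
  ∏ i, if i ∈ J then (N : ℝ)⁻¹ else if ξ i = 0 then 1 else 0

lemma slabWeight_nonneg (J : Finset (Fin d)) (ξ : Fin d → ZMod N) : 0 ≤ slabWeight J ξ :=
  Finset.prod_nonneg fun i _ => by split_ifs <;> positivity

lemma slabWeight_zero (J : Finset (Fin d)) :
    slabWeight J (0 : Fin d → ZMod N) = (N : ℝ)⁻¹ ^ J.card := by
  simp [slabWeight]

variable [NeZero N]

/-- The values of the `i`-th torus coordinate allowed in a slab: the coordinates in `J` are frozen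
to those of `y`, the others are free. -/
noncomputable def slabCoords (J : Finset (Fin d)) (y : Fin d → ZMod N) (i : Fin d) :
    Finset (ZMod N) := if i ∈ J then {y i} else Finset.univ

/-- The slab of the points whose height is in `W` and whose torus coordinates in `J` agree with
those of `y`. The trace on `C_j` of an affine lattice image is contained in such a slab. -/
noncomputable def slab (J : Finset (Fin d)) (y : Fin d → ZMod N) (W : Finset ℤ) :
    Finset (Cyl d N) := Fintype.piFinset (slabCoords J y) ×ˢ W

lemma inv_mul_abs_sum_torusCos_le (J : Finset (Fin d)) (y : Fin d → ZMod N) (i : Fin d)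
    (k w : ZMod N) : (N : ℝ)⁻¹ * |∑ t ∈ slabCoords J y i, torusCos k (w - t)| ≤
      if i ∈ J then (N : ℝ)⁻¹ else if k = 0 then 1 else 0 := by
  have hN : (N : ℝ) ≠ 0 := Nat.cast_ne_zero.2 (NeZero.ne N)
  unfold slabCoords
  by_cases hi : i ∈ J
  · rw [if_pos hi, if_pos hi, Finset.sum_singleton]
    exact mul_le_of_le_one_right (by positivity) (abs_torusCos_le_one _ _)
  · rw [if_neg hi, if_neg hi,
      Fintype.sum_equiv (Equiv.subLeft w) (fun t => torusCos k (w - t)) (torusCos k) fun _ => rfl,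
      sum_torusCos_right]
    split_ifs <;> simp [hN]

lemma sum_slab_synth_eq (f : (Fin d → ZMod N) → ℤ → ℝ) (J : Finset (Fin d))
    (y : Fin d → ZMod N) (W : Finset ℤ) (z : Cyl d N) :
    ∑ x ∈ slab J y W, synth f (z - x) =
      ∑ ξ : Fin d → ZMod N,
        (∏ i, ((N : ℝ)⁻¹ * ∑ t ∈ slabCoords J y i, torusCos (ξ i) (z.1 i - t))) *
          ∑ a' ∈ W, f ξ (z.2 - a') := by
  unfold synth
  rw [← Finset.mul_sum, Finset.sum_comm, Finset.mul_sum]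
  refine Finset.sum_congr rfl fun ξ _ => ?_
  rw [Finset.prod_mul_distrib, Finset.prod_const, Finset.card_univ, Fintype.card_fin,
    Finset.prod_univ_sum, inv_pow, mul_assoc, Finset.sum_mul_sum, slab, Finset.sum_product]
  rfl

lemma sum_slab_synth_le (f : (Fin d → ZMod N) → ℤ → ℝ) (J : Finset (Fin d))
    (y : Fin d → ZMod N) (W : Finset ℤ) (z : Cyl d N) :
    ∑ x ∈ slab J y W, synth f (z - x) ≤
      ∑ ξ : Fin d → ZMod N, slabWeight J ξ * ∑ a' ∈ W, |f ξ (z.2 - a')| := by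
  rw [sum_slab_synth_eq]
  refine Finset.sum_le_sum fun ξ _ => (le_abs_self _).trans ?_
  rw [abs_mul, Finset.abs_prod]
  refine mul_le_mul ?_ (Finset.abs_sum_le_sum_abs _ _) (abs_nonneg _) (slabWeight_nonneg J ξ)
  refine Finset.prod_le_prod (fun _ _ => abs_nonneg _) fun i _ => ?_
  rw [abs_mul, abs_of_nonneg (by positivity : 0 ≤ (N : ℝ)⁻¹)]
  exact inv_mul_abs_sum_torusCos_le J y i (ξ i) (z.1 i)

lemma sum_slabWeight_mul_prod_torusMajorant_le (J : Finset (Fin d)) :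
    ∑ ξ : Fin d → ZMod N, slabWeight J ξ * ∏ i ∈ J, torusMajorant (ξ i) ≤ 24 ^ d := by
  have hfactor (ξ : Fin d → ZMod N) : slabWeight J ξ * ∏ i ∈ J, torusMajorant (ξ i) =
      ∏ i, if i ∈ J then (N : ℝ)⁻¹ * torusMajorant (ξ i) else if ξ i = 0 then 1 else 0 := by
    rw [slabWeight, ← Finset.univ_inter J, ← Finset.prod_ite_mem, ← Finset.prod_mul_distrib]
    refine Finset.prod_congr rfl fun i _ => ?_
    by_cases hi : i ∈ J <;> simp [hi]
  simp only [hfactor]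
  rw [← Fintype.prod_sum fun i k =>
    if i ∈ J then (N : ℝ)⁻¹ * torusMajorant k else if k = 0 then 1 else 0]
  calc _ ≤ ∏ _i : Fin d, (24 : ℝ) := by
        refine Finset.prod_le_prod (fun i _ => Finset.sum_nonneg fun k _ => ?_) fun i _ => ?_
        · have := torusMajorant_nonneg k
          split_ifs <;> positivity
        · by_cases hi : i ∈ J
          · simpa only [hi, if_true] using sum_torusMajorant_le
          · simp [hi]
    _ = 24 ^ d := by simp

lemma one_sub_modeEnergy_pow_le {ξ : Fin d → ZMod N} (hξ : ξ ≠ 0) {n : ℕ} (hn : 1 ≤ n) :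
    (1 - modeEnergy ξ / (2 * (d + 1))) ^ n ≤
      ((n : ℝ) / (2 * (d + 1))) ^ (-(1 / 4) : ℝ) * modeEnergy ξ ^ (-(1 / 4) : ℝ) := by
  have henergy := modeEnergy_pos hξ
  have : (0 : ℝ) < n := Nat.cast_pos.2 hn
  have hbase : 0 ≤ 1 - modeEnergy ξ / (2 * (d + 1)) := by
    rw [sub_nonneg, div_le_one (by positivity)]
    linarith [modeEnergy_le ξ]
  calc (1 - modeEnergy ξ / (2 * (d + 1))) ^ n
      ≤ Real.exp (-(modeEnergy ξ / (2 * (d + 1)))) ^ n :=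
        pow_le_pow_left₀ hbase (Real.one_sub_le_exp_neg _) n
    _ = Real.exp (-(n / (2 * (d + 1)) * modeEnergy ξ)) := by
        rw [← Real.exp_nat_mul]
        congr 1
        ring
    _ ≤ (n / (2 * (d + 1)) * modeEnergy ξ) ^ (-(1 / 4) : ℝ) :=
        exp_neg_le_rpow_neg (by positivity) (by norm_num) (by norm_num)
    _ = _ := Real.mul_rpow (by positivity) henergy.le

/-- The error made when `n` steps of the lazy walk replace the Green function summed over a slab:
the first term is the contribution of the zero mode, the second that of all other modes. -/
noncomputable def nearError (d : ℕ) (C : ℝ) (N n : ℕ) : ℝ :=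
  3 * (d + 1) * (C + 5) / N +
    2 * (d + 1) * ((n : ℝ) / (2 * (d + 1))) ^ (-(1 / 4) : ℝ) * 24 ^ d

variable {C s : ℝ} {J : Finset (Fin d)} {W : Finset ℤ} {z : Cyl d N} {n : ℕ}

lemma sum_abs_lazyMean_iterate_modeGreen_le (hN : 2 ≤ N) (hn : 1 ≤ n) (hJ : J.Nonempty)
    (hs : 0 ≤ s) (hsJ : 2 * (s + 1 / 4) ≤ 5 / 6 * J.card) {ξ : Fin d → ZMod N} (hξ : ξ ≠ 0)
    (hB : ∀ a : ℤ, ∑ a' ∈ W, |modeGreen C ξ (a - a')| ≤ 2 * (d + 1) * modeEnergy ξ ^ (-s))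
    (a : ℤ) : ∑ a' ∈ W, |lazyMean^[n] (modeGreen C) ξ (a - a')| ≤
      2 * (d + 1) * ((n : ℝ) / (2 * (d + 1))) ^ (-(1 / 4) : ℝ) *
        ∏ i ∈ J, torusMajorant (ξ i) := by
  have henergy := modeEnergy_pos hξ
  calc _ ≤ (1 - modeEnergy ξ / (2 * (d + 1))) ^ n * (2 * (d + 1) * modeEnergy ξ ^ (-s)) :=
        sum_abs_lazyMean_iterate_le hB n a
    _ ≤ ((n : ℝ) / (2 * (d + 1))) ^ (-(1 / 4) : ℝ) * modeEnergy ξ ^ (-(1 / 4) : ℝ) *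
          (2 * (d + 1) * modeEnergy ξ ^ (-s)) := by
        gcongr
        exact one_sub_modeEnergy_pow_le hξ hn
    _ = 2 * (d + 1) * ((n : ℝ) / (2 * (d + 1))) ^ (-(1 / 4) : ℝ) *
          modeEnergy ξ ^ (-(s + 1 / 4)) := by
        rw [neg_add, Real.rpow_add henergy]
        ring
    _ ≤ _ := by
        gcongr
        exact modeEnergy_rpow_neg_le hN hJ (by linarith) hsJ hξ

lemma sum_abs_lazyMean_iterate_modeGreen_zero_le (hC : 0 ≤ C) (hnN : n ≤ N) {a : ℤ}
    (ha : ∀ a' ∈ W, |a - a'| ≤ 4 * N) :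
    ∑ a' ∈ W, |lazyMean^[n] (modeGreen C) (0 : Fin d → ZMod N) (a - a')| ≤
      W.card * ((d + 1) * ((C + 5) * N)) := by
  rw [← nsmul_eq_mul]
  refine Finset.sum_le_card_nsmul _ _ _ fun a' ha' => ?_
  refine (abs_lazyMean_iterate_le (by positivity) (abs_modeGreen_zero_le hC) n _).trans ?_
  have hnN : (n : ℝ) ≤ N := Nat.cast_le.2 hnN
  have : |((a - a' : ℤ) : ℝ)| ≤ 4 * N := by exact_mod_cast ha a' ha'
  gcongr
  linarith

lemma sum_slab_synth_le_nearError (hC : 0 ≤ C) (hN : 2 ≤ N) (hn : 1 ≤ n) (hnN : n ≤ N)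
    (hJ : J.Nonempty) (hs : 0 ≤ s) (hsJ : 2 * (s + 1 / 4) ≤ 5 / 6 * J.card)
    (hB : ∀ ξ : Fin d → ZMod N, ξ ≠ 0 → ∀ a : ℤ,
      ∑ a' ∈ W, |modeGreen C ξ (a - a')| ≤ 2 * (d + 1) * modeEnergy ξ ^ (-s))
    (hW : (N : ℝ)⁻¹ ^ J.card * W.card ≤ 3 / N ^ 2) (y : Fin d → ZMod N)
    (hz : ∀ a' ∈ W, |z.2 - a'| ≤ 4 * N) :
    ∑ x ∈ slab J y W, synth (lazyMean^[n] (modeGreen C)) (z - x) ≤ nearError d C N n := by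
  have : (0 : ℝ) < N := Nat.cast_pos.2 (NeZero.pos N)
  refine (sum_slab_synth_le _ J y W z).trans ?_
  rw [← Finset.add_sum_erase _ _ (Finset.mem_univ (0 : Fin d → ZMod N)), nearError]
  refine add_le_add ?_ ?_
  · rw [slabWeight_zero]
    calc _ ≤ (N : ℝ)⁻¹ ^ J.card * (W.card * ((d + 1) * ((C + 5) * N))) := by
          gcongr
          exact sum_abs_lazyMean_iterate_modeGreen_zero_le hC hnN hz
      _ ≤ 3 / N ^ 2 * ((d + 1) * ((C + 5) * N)) := by
          rw [← mul_assoc]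
          gcongr
      _ = 3 * (d + 1) * (C + 5) / N := by field_simp
  · set M := 2 * ((d : ℝ) + 1) * ((n : ℝ) / (2 * (d + 1))) ^ (-(1 / 4) : ℝ)
    calc _ ≤ ∑ ξ ∈ Finset.univ.erase (0 : Fin d → ZMod N),
            slabWeight J ξ * (M * ∏ i ∈ J, torusMajorant (ξ i)) := by
          refine Finset.sum_le_sum fun ξ hξ =>
            mul_le_mul_of_nonneg_left ?_ (slabWeight_nonneg J ξ)
          have hξ := Finset.ne_of_mem_erase hξ
          exact sum_abs_lazyMean_iterate_modeGreen_le hN hn hJ hs hsJ hξ (hB ξ hξ) z.2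
      _ ≤ ∑ ξ : Fin d → ZMod N, slabWeight J ξ * (M * ∏ i ∈ J, torusMajorant (ξ i)) :=
          Finset.sum_le_sum_of_subset_of_nonneg (Finset.erase_subset _ _) fun ξ _ _ =>
            mul_nonneg (slabWeight_nonneg J ξ) (mul_nonneg (by positivity)
              (Finset.prod_nonneg fun i _ => torusMajorant_nonneg _))
      _ = M * ∑ ξ : Fin d → ZMod N, slabWeight J ξ * ∏ i ∈ J, torusMajorant (ξ i) := by
          rw [Finset.mul_sum]
          exact Finset.sum_congr rfl fun ξ _ => mul_left_comm _ _ _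
      _ ≤ M * 24 ^ d := by
          gcongr
          exact sum_slabWeight_mul_prod_torusMajorant_le J

lemma sum_slab_synth_le_nearError_of_card_le_one (hC : 0 ≤ C) (hN : 2 ≤ N) (hn : 1 ≤ n)
    (hnN : n ≤ N) (hJ : 2 ≤ J.card) (hW : W.card ≤ 1) (y : Fin d → ZMod N)
    (hz : ∀ a' ∈ W, |z.2 - a'| ≤ 4 * N) :
    ∑ x ∈ slab J y W, synth (lazyMean^[n] (modeGreen C)) (z - x) ≤ nearError d C N n := by
  have hN1 : (1 : ℝ) ≤ N := Nat.one_le_cast.2 (NeZero.pos N)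
  have hW : (W.card : ℝ) ≤ 1 := Nat.cast_le_one.2 hW
  have hcard : (2 : ℝ) ≤ J.card := Nat.ofNat_le_cast.2 hJ
  refine sum_slab_synth_le_nearError hC hN hn hnN (Finset.card_pos.1 (by omega)) (s := 1 / 2)
    (by norm_num) (by linarith) (fun ξ hξ a => ?_) ?_ y hz
  · have henergy := modeEnergy_pos hξ
    calc ∑ a' ∈ W, |modeGreen C ξ (a - a')|
        ≤ W.card • ((d + 1) * modeEnergy ξ ^ (-(1 / 2) : ℝ)) :=
          Finset.sum_le_card_nsmul _ _ _ fun a' _ => abs_modeGreen_le C hξ _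
      _ ≤ 2 * ((d + 1) * modeEnergy ξ ^ (-(1 / 2) : ℝ)) := by
          rw [nsmul_eq_mul]
          gcongr
          linarith
      _ = 2 * (d + 1) * modeEnergy ξ ^ (-(1 / 2) : ℝ) := (mul_assoc _ _ _).symm
  · calc (N : ℝ)⁻¹ ^ J.card * W.card ≤ (N : ℝ)⁻¹ ^ 2 * 3 := by
          gcongr ?_ * ?_
          · exact pow_le_pow_of_le_one (by positivity) (inv_le_one_of_one_le₀ hN1) hJ
          · linarith
      _ = 3 / N ^ 2 := by rw [inv_pow, inv_mul_eq_div]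

lemma sum_slab_synth_le_nearError_of_card_le (hC : 0 ≤ C) (hN : 2 ≤ N) (hn : 1 ≤ n)
    (hnN : n ≤ N) (hJ : 3 ≤ J.card) (hW : W.card ≤ 3 * N) (y : Fin d → ZMod N)
    (hz : ∀ a' ∈ W, |z.2 - a'| ≤ 4 * N) :
    ∑ x ∈ slab J y W, synth (lazyMean^[n] (modeGreen C)) (z - x) ≤ nearError d C N n := by
  have hN1 : (1 : ℝ) ≤ N := Nat.one_le_cast.2 (NeZero.pos N)
  have hcard : (3 : ℝ) ≤ J.card := Nat.ofNat_le_cast.2 hJ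
  refine sum_slab_synth_le_nearError hC hN hn hnN (Finset.card_pos.1 (by omega)) zero_le_one
    (by linarith) (fun ξ hξ a => sum_abs_modeGreen_le C hξ W a) ?_ y hz
  calc (N : ℝ)⁻¹ ^ J.card * W.card ≤ (N : ℝ)⁻¹ ^ 3 * (3 * N) := by
        gcongr ?_ * ?_
        · exact pow_le_pow_of_le_one (by positivity) (inv_le_one_of_one_le₀ hN1) hJ
        · exact_mod_cast hW
    _ = 3 / N ^ 2 := by field_simp

end Slabs

/-! ### Green functions of coordinate planes -/

section PlaneGreen

lemma card_mul_nbrMean {ι E : Type*} [Fintype ι] [AddCommGroup E] (e : ι → E) (f : E → ℝ)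
    (z : E) : Fintype.card ι * nbrMean e f z = (∑ i, (f (z + e i) + f (z - e i))) / 2 := by
  rcases isEmpty_or_nonempty ι with _ | _
  · simp
  · have : (Fintype.card ι : ℝ) ≠ 0 := Nat.cast_ne_zero.2 Fintype.card_ne_zero
    rw [nbrMean]
    field_simp

variable {k n : ℕ} (g : Fin k ↪ Fin n)

lemma mul_nbrMean_comp_embedding (f : ZLat k → ℝ) (w : ZLat n) :
    n * nbrMean (latDir n) (fun w => f (w ∘ g)) w =
      (n - k) * f (w ∘ g) + k * nbrMean (latDir k) f (w ∘ g) := by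
  have hrange (l : Fin k) : (latDir n (g l) : ZLat n) ∘ g = latDir k l := by
    ext l'
    simp [latDir, Pi.single_apply]
  have hcompl (i : Fin n) (hi : i ∈ (Finset.univ.map g)ᶜ) : (latDir n i : ZLat n) ∘ g = 0 := by
    ext l
    refine Pi.single_eq_of_ne (fun h => ?_) _
    simp [← h] at hi
  have hcard : ((Finset.univ.map g)ᶜ.card : ℝ) = n - k := by
    rw [eq_sub_iff_add_eq, ← Nat.cast_add]
    simpa using congrArg (Nat.cast (R := ℝ)) (Finset.card_compl_add_card (Finset.univ.map g))
  have hn := card_mul_nbrMean (latDir n) (fun w => f (w ∘ g)) w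
  have hk := card_mul_nbrMean (latDir k) f (w ∘ g)
  rw [Fintype.card_fin] at hn hk
  rw [hn, hk, ← Finset.sum_compl_add_sum (Finset.univ.map g), Finset.sum_map, add_div, ← hcard]
  simp only [Pi.add_comp, Pi.sub_comp, hrange]
  rw [Finset.sum_congr rfl fun i hi => by rw [hcompl i hi, add_zero, sub_zero], Finset.sum_const,
    nsmul_eq_mul]
  ring

/-- The Green function, for the walk on `ℤ^n`, of the plane where the coordinates selected by `g`
vanish. Only the moves of these `k` coordinates matter, which follow a walk on `ℤ^k` with law `L`;
the walk leaves the plane for ever with probability `k / n * (1 - retProb k L)` at each visit. -/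
noncomputable def planeGreen (L : ZLat k → Measure (ℕ → ZLat k)) (w : ZLat n) : ℝ :=
  hitProb L 0 (w ∘ g) / (k / n * (1 - retProb k L))

variable {L : ZLat k → Measure (ℕ → ZLat k)}

lemma planeGreen_nonneg (hq : retProb k L ≤ 1) (w : ZLat n) : 0 ≤ planeGreen g L w :=
  div_nonneg measureReal_nonneg (mul_nonneg (by positivity) (sub_nonneg.2 hq))

lemma planeGreen_zero (hL : IsMarkovFamily (nbrStep (latDir k)) L) :
    planeGreen g L 0 = (k / n * (1 - retProb k L))⁻¹ := by
  rw [planeGreen, Pi.zero_comp, hitProb_self hL, one_div]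

lemma nbrMean_planeGreen_add (hL : IsMarkovFamily (nbrStep (latDir k)) L) (hk : k ≠ 0)
    (hq : retProb k L < 1) (w : ZLat n) :
    nbrMean (latDir n) (planeGreen g L) w + (if w ∘ g = 0 then 1 else 0) = planeGreen g L w := by
  have hn : (n : ℝ) ≠ 0 := by
    have := Fintype.card_le_of_embedding g
    simp only [Fintype.card_fin] at this
    exact Nat.cast_ne_zero.2 (by omega)
  have hk : (k : ℝ) ≠ 0 := Nat.cast_ne_zero.2 hk
  have hq : 1 - retProb k L ≠ 0 := (sub_pos.2 hq).ne'
  have hret : nbrMean (latDir k) (hitProb L 0) 0 = retProb k L := nbrMean_hitProb_self hL 0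
  have hmean := mul_nbrMean_comp_embedding g (hitProb L 0) w
  have hplane : planeGreen g L =
      fun w : ZLat n => (k / n * (1 - retProb k L))⁻¹ * hitProb L 0 (w ∘ g) :=
    funext fun w => div_eq_inv_mul _ _
  rw [hplane, nbrMean_const_mul, ← mul_right_inj' hn, mul_add, mul_left_comm, hmean]
  split_ifs with hw
  · simp only [hw, hret, hitProb_self hL]
    field_simp
    ring
  · rw [nbrMean_hitProb_of_ne hL hw]
    ring

end PlaneGreen

/-! ### Comparison of the cylinder with the lattice -/

section Comparison

variable {d N : ℕ}

lemma projE_add (d N : ℕ) (v w : Lat d) : projE d N (v + w) = projE d N v + projE d N w := by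
  ext <;> simp [projE]

lemma nbrMean_comp_projE (f : Cyl d N → ℝ) (v : Lat d) :
    nbrMean (latDir (d + 1)) (fun w => f (projE d N w)) v =
      nbrMean (cylDir d N) f (projE d N v) := by
  simp only [nbrMean, projE_add, projE_sub, cylDir]

variable [NeZero N] {C : ℝ} {S : Finset (Cyl d N)}

/-- The part of the Green function of `S` that is accumulated in `n` steps of the lazy walk, i.e.
half the expected number of visits to `S` at times less than `n`. -/
noncomputable def lazyGreen (C : ℝ) (S : Finset (Cyl d N)) (n : ℕ) (z : Cyl d N) : ℝ :=
  ∑ x ∈ S, (cylGreen C (z - x) - synth (lazyMean^[n] (modeGreen C)) (z - x))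

lemma lazyGreen_zero (z : Cyl d N) : lazyGreen C S 0 z = 0 := by
  simp [lazyGreen, cylGreen]

lemma nbrMean_lazyGreen (n : ℕ) (z : Cyl d N) :
    nbrMean (cylDir d N) (lazyGreen C S n) z =
      ∑ x ∈ S, (nbrMean (cylDir d N) (cylGreen C) (z - x) -
        nbrMean (cylDir d N) (synth (lazyMean^[n] (modeGreen C))) (z - x)) := by
  unfold lazyGreen
  rw [nbrMean_sum]
  refine Finset.sum_congr rfl fun x _ => ?_
  simp only [sub_eq_add_neg (cylGreen C _), ← neg_one_mul (synth _ _), nbrMean_add,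
    nbrMean_const_mul]
  rw [nbrMean_comp_sub_right, nbrMean_comp_sub_right, neg_one_mul, ← sub_eq_add_neg]

lemma lazyGreen_succ (n : ℕ) (z : Cyl d N) :
    lazyGreen C S (n + 1) z = (lazyGreen C S n z + nbrMean (cylDir d N) (lazyGreen C S n) z +
      if z ∈ S then 1 else 0) / 2 := by
  have hsource : (if z ∈ S then (1 : ℝ) else 0) = ∑ x ∈ S, if z - x = 0 then (1 : ℝ) else 0 := by
    simp only [sub_eq_zero, Finset.sum_ite_eq]
  rw [hsource, nbrMean_lazyGreen, lazyGreen, lazyGreen, ← Finset.sum_add_distrib,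
    ← Finset.sum_add_distrib, Finset.sum_div]
  refine Finset.sum_congr rfl fun x _ => ?_
  rw [Function.iterate_succ_apply', synth_lazyMean, ← cylGreen_sub_nbrMean C (z - x)]
  ring

omit [NeZero N] in
lemma abs_le_add_one_of_isNbr {ν : ℕ} {w w' : ZLat ν} (h : IsNbr (latDir ν) w w') (l : Fin ν) :
    |w' l| ≤ |w l| + 1 := by
  have hdir (i : Fin ν) : |latDir ν i l| ≤ 1 := by
    rw [latDir, Pi.single_apply]
    split_ifs <;> simp
  obtain ⟨i, rfl | rfl⟩ := h
  · exact (abs_add_le _ _).trans (by gcongr; exact hdir i)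
  · exact (abs_sub _ _).trans (by gcongr; exact hdir i)

/- The lazy walk on the cylinder lifts to the lattice and, as long as it has made fewer than `N`
steps, it only sees the lift of `S` within distance `N` of its starting point. -/
lemma lazyGreen_projE_le {U : Lat d → ℝ} {O : Lat d → Prop} [DecidablePred O]
    (hU : ∀ w, 0 ≤ U w)
    (hsource : ∀ w, nbrMean (latDir (d + 1)) U w + (if O w then 1 else 0) ≤ U w) {v : Lat d}
    (hS : ∀ w : Lat d, (∀ i, |w i| < N) → projE d N (v + w) ∈ S → O w) (n : ℕ) {w : Lat d}
    (hw : ∀ i, |w i| + n < N) : lazyGreen C S n (projE d N (v + w)) ≤ U w := by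
  induction n generalizing w with
  | zero => exact (lazyGreen_zero _).trans_le (hU w)
  | succ n ih =>
    push_cast at hw
    have hstay := ih (w := w) fun i => by linarith [hw i]
    have hmove : nbrMean (cylDir d N) (lazyGreen C S n) (projE d N (v + w)) ≤
        nbrMean (latDir (d + 1)) U w := by
      have hshift : nbrMean (cylDir d N) (lazyGreen C S n) (projE d N (v + w)) =
          nbrMean (latDir (d + 1)) (fun w => lazyGreen C S n (projE d N (v + w))) w := by
        rw [← nbrMean_comp_projE]
        simp only [nbrMean, add_assoc, add_sub_assoc]
      rw [hshift]
      refine nbrMean_mono fun w' hw' => ih fun i => ?_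
      linarith [hw i, abs_le_add_one_of_isNbr hw' i]
    have hmem : (if projE d N (v + w) ∈ S then (1 : ℝ) else 0) ≤ if O w then 1 else 0 := by
      by_cases h : projE d N (v + w) ∈ S
      · rw [if_pos h, if_pos (hS w (fun i => by linarith [hw i]) h)]
      · rw [if_neg h]
        split_ifs <;> norm_num
    rw [lazyGreen_succ]
    linarith [hsource w]

end Comparison

/-! ### The Green function of an admissible set -/

section PlaneSlab

variable {d : ℕ}

/-- The torus coordinates that are constant on the affine lattices with free coordinates `I`. -/
def frozenCoords (I : Finset (Fin (d + 1))) : Finset (Fin d) :=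
  Finset.univ.filter fun i => i.castSucc ∉ I

lemma card_compl_eq_card_frozenCoords_add (I : Finset (Fin (d + 1))) :
    Iᶜ.card = (frozenCoords I).card + if Fin.last d ∈ I then 0 else 1 := by
  have hcompl : Iᶜ = Finset.univ.filter fun i => i ∉ I := by ext; simp
  rw [hcompl, Finset.card_filter, Fin.sum_univ_castSucc, frozenCoords, Finset.card_filter, ite_not]

/-- The heights of the points of `Cblk d N j` that lie on the affine lattice through `y` with free
coordinates `I`. -/
noncomputable def planeHeights (N : ℕ) (j : ℤ) (I : Finset (Fin (d + 1))) (y : Lat d) :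
    Finset ℤ :=
  if Fin.last d ∈ I then Finset.Icc ⌈((j : ℝ) - 3 / 4) * N⌉ ⌊((j : ℝ) + 3 / 4) * N⌋
  else {y (Fin.last d)}

variable {N : ℕ} {j : ℤ} {I : Finset (Fin (d + 1))} {y : Lat d}

lemma card_planeHeights_of_notMem (hI : Fin.last d ∉ I) : (planeHeights N j I y).card = 1 := by
  rw [planeHeights, if_neg hI, Finset.card_singleton]

lemma card_planeHeights_le (hN : 1 ≤ N) : (planeHeights N j I y).card ≤ 3 * N := by
  by_cases hI : Fin.last d ∈ I
  · rw [planeHeights, if_pos hI, Int.card_Icc, Int.toNat_le, ← Int.cast_le (R := ℝ)]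
    have hfloor := Int.floor_le (((j : ℝ) + 3 / 4) * N)
    have hceil := Int.le_ceil (((j : ℝ) - 3 / 4) * N)
    have hN : (1 : ℝ) ≤ N := Nat.one_le_cast.2 hN
    push_cast
    linarith
  · rw [card_planeHeights_of_notMem hI]
    omega

lemma abs_sub_le_of_mem_planeHeights {a b : ℤ} (ha : a ∈ planeHeights N j I y)
    (hb : b ∈ planeHeights N j I y) : |a - b| ≤ 4 * N := by
  unfold planeHeights at ha hb
  split_ifs at ha hb
  · rw [Finset.mem_Icc, Int.ceil_le, Int.le_floor] at ha hb
    rw [← Int.cast_le (R := ℝ)]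
    push_cast
    rw [abs_le]
    constructor <;> linarith
  · rw [Finset.mem_singleton] at ha hb
    simp [ha, hb]

variable [NeZero N]

/-- The slab that contains the trace on `Cblk d N j` of the affine lattice through `y` with free
coordinates `I`. -/
noncomputable def planeSlab (N : ℕ) [NeZero N] (j : ℤ) (I : Finset (Fin (d + 1))) (y : Lat d) :
    Finset (Cyl d N) := slab (frozenCoords I) (projE d N y).1 (planeHeights N j I y)

lemma snd_mem_planeHeights {x : Cyl d N} (hx : x ∈ planeSlab N j I y) :
    x.2 ∈ planeHeights N j I y := (Finset.mem_product.1 hx).2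

lemma fst_eq_of_mem_planeSlab {x : Cyl d N} (hx : x ∈ planeSlab N j I y) {i : Fin d}
    (hi : i.castSucc ∉ I) : x.1 i = (y i.castSucc : ZMod N) := by
  have hfrozen : i ∈ frozenCoords I := by simpa [frozenCoords] using hi
  have := Fintype.mem_piFinset.1 (Finset.mem_product.1 hx).1 i
  rwa [slabCoords, if_pos hfrozen, Finset.mem_singleton] at this

lemma subset_planeSlab {A : Finset (Cyl d N)} (hC : ↑A ⊆ Cblk d N j)
    (hF : ↑A ⊆ (fun v => projE d N (y + v)) '' {v | ∀ i ∉ I, v i = 0}) :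
    A ⊆ planeSlab N j I y := by
  intro x hx
  obtain ⟨v, hv, rfl⟩ := hF hx
  refine Finset.mem_product.2 ⟨Fintype.mem_piFinset.2 fun i => ?_, ?_⟩
  · by_cases hi : i.castSucc ∈ I
    · simp [slabCoords, frozenCoords, hi]
    · simp [slabCoords, frozenCoords, hi, projE, hv _ hi]
  · by_cases hl : Fin.last d ∈ I
    · rw [planeHeights, if_pos hl, Finset.mem_Icc, Int.ceil_le, Int.le_floor]
      exact hC hx
    · simp [planeHeights, hl, projE, hv _ hl]

lemma apply_eq_zero_of_projE_mem_planeSlab {v w : Lat d} (hv : projE d N v ∈ planeSlab N j I y)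
    (hvw : projE d N (v + w) ∈ planeSlab N j I y) (hw : ∀ i, |w i| < N) : ∀ i ∉ I, w i = 0 := by
  refine Fin.lastCases (fun hl => ?_) fun i hi => ?_
  · have := Finset.card_le_one.1 (card_planeHeights_of_notMem hl).le _ (snd_mem_planeHeights hvw) _
      (snd_mem_planeHeights hv)
    simpa [projE] using this
  · have hmod : ((w i.castSucc : ℤ) : ZMod N) = 0 := by
      have := (fst_eq_of_mem_planeSlab hvw hi).trans (fst_eq_of_mem_planeSlab hv hi).symm
      simpa [projE] using this
    exact Int.eq_zero_of_abs_lt_dvd ((ZMod.intCast_zmod_eq_zero_iff_dvd _ _).1 hmod) (hw _)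

lemma sum_planeSlab_synth_le {C : ℝ} (hC : 0 ≤ C) (hI : 3 ≤ Iᶜ.card) (hN : 2 ≤ N) {n : ℕ}
    (hn : 1 ≤ n) (hnN : n ≤ N) {z : Cyl d N} (hz : z ∈ planeSlab N j I y) :
    ∑ x ∈ planeSlab N j I y, synth (lazyMean^[n] (modeGreen C)) (z - x) ≤ nearError d C N n := by
  have hclose : ∀ a ∈ planeHeights N j I y, |z.2 - a| ≤ 4 * N := fun a ha =>
    abs_sub_le_of_mem_planeHeights (snd_mem_planeHeights hz) ha
  rw [card_compl_eq_card_frozenCoords_add] at hI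
  split_ifs at hI with hl
  · exact sum_slab_synth_le_nearError_of_card_le hC hN hn hnN hI (card_planeHeights_le (by omega))
      _ hclose
  · exact sum_slab_synth_le_nearError_of_card_le_one hC hN hn hnN (by omega)
      (card_planeHeights_of_notMem hl).le _ hclose

end PlaneSlab

section AdmissibleGreen

variable {d N : ℕ} [NeZero N] {j : ℤ}

lemma lazyGreen_planeSlab_le {C : ℝ} {I : Finset (Fin (d + 1))} {y : Lat d} {k : ℕ}
    (hk : Iᶜ.card = k) (hk0 : k ≠ 0) {Q : ZLat k → Measure (ℕ → ZLat k)}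
    (hQ : IsMarkovFamily (nbrStep (latDir k)) Q) (hq : retProb k Q < 1) {n : ℕ} (hn : n < N)
    {v : Lat d} (hv : projE d N v ∈ planeSlab N j I y) :
    lazyGreen C (planeSlab N j I y) n (projE d N v) ≤
      ((k : ℝ) / (d + 1) * (1 - retProb k Q))⁻¹ := by
  let g : Fin k ↪ Fin (d + 1) := (Iᶜ.orderEmbOfFin hk).toEmbedding
  have hg (l : Fin k) : g l ∉ I := Finset.mem_compl.1 (Finset.orderEmbOfFin_mem Iᶜ hk l)
  have hle := lazyGreen_projE_le (C := C) (S := planeSlab N j I y) (O := fun w => w ∘ g = 0)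
    (planeGreen_nonneg g hq.le) (fun w => (nbrMean_planeGreen_add g hQ hk0 hq w).le) (v := v)
    (fun w hw hvw => funext fun l => apply_eq_zero_of_projE_mem_planeSlab hv hvw hw _ (hg l)) n
    (w := 0) (by simpa using hn)
  rwa [add_zero, planeGreen_zero g hQ, Nat.cast_succ] at hle

lemma sum_cylGreen_le_of_mem_Adm {m : ℕ} (hm : m + 2 ≤ d) (hN : 2 ≤ N)
    {A : Finset (Cyl d N)} (hA : A ∈ Adm d N j m)
    {Q : ZLat (d + 1 - m) → Measure (ℕ → ZLat (d + 1 - m))}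
    (hQ : IsMarkovFamily (nbrStep (latDir (d + 1 - m))) Q) (hq : retProb (d + 1 - m) Q < 1) {n : ℕ}
    (hn : 1 ≤ n) (hnN : n < N) {z : Cyl d N} (hz : z ∈ A) :
    ∑ x ∈ A, cylGreen (greenHeight d) (z - x) ≤
      (((d + 1 - m : ℕ) : ℝ) / (d + 1) * (1 - retProb (d + 1 - m) Q))⁻¹ +
        nearError d (greenHeight d) N n := by
  have hd : 1 ≤ d := by omega
  obtain ⟨-, hAC, _, ⟨I, hI, y, rfl⟩, hAF⟩ := hA
  have hk : Iᶜ.card = d + 1 - m := by rw [Finset.card_compl, hI, Fintype.card_fin]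
  have hAS := subset_planeSlab hAC hAF
  have hzS := hAS hz
  have hmono : ∑ x ∈ A, cylGreen (greenHeight d) (z - x) ≤
      ∑ x ∈ planeSlab N j I y, cylGreen (greenHeight d) (z - x) := by
    refine Finset.sum_le_sum_of_subset_of_nonneg hAS fun x hx _ => cylGreen_nonneg hd ?_
    have := abs_sub_le_of_mem_planeHeights (snd_mem_planeHeights hzS) (snd_mem_planeHeights hx)
    rw [Prod.snd_sub, ← Nat.cast_le (α := ℤ), Int.natCast_natAbs]
    exact_mod_cast this
  have hfar := sum_planeSlab_synth_le (greenHeight_pos hd).le (by omega) hN hn hnN.le hzS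
  obtain ⟨v, -, hvz⟩ := hAF hz
  have hvz : projE d N (y + v) = z := hvz
  have hnear := lazyGreen_planeSlab_le (C := greenHeight d) hk (by omega) hQ hq hnN (hvz ▸ hzS)
  rw [hvz, lazyGreen, Finset.sum_sub_distrib] at hnear
  linarith

end AdmissibleGreen

section EventualBound

variable {d m : ℕ} {q lam : ℝ}

/-- The probability that the walk, at a point of an affine lattice with `m` free directions, makes
its next step inside the lattice or leaves it and comes back, where `q` is the return probability
in the remaining directions. Thus `χ(λ) = exp λ * stayProb d m q`. -/
noncomputable def stayProb (d m : ℕ) (q : ℝ) : ℝ := (m : ℝ) / (d + 1) + (1 - (m : ℝ) / (d + 1)) * q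

lemma one_sub_stayProb (hm : m ≤ d + 1) (q : ℝ) :
    1 - stayProb d m q = ((d + 1 - m : ℕ) : ℝ) / (d + 1) * (1 - q) := by
  rw [stayProb, Nat.cast_sub hm]
  push_cast
  field_simp
  ring

lemma stayProb_pos (hm : 1 ≤ m) (hmd : m ≤ d + 1) (hq : 0 ≤ q) : 0 < stayProb d m q := by
  have : (0 : ℝ) < m := Nat.cast_pos.2 hm
  have hmd : (m : ℝ) / (d + 1) ≤ 1 := (div_le_one (by positivity)).2 (by exact_mod_cast hmd)
  have := sub_nonneg.2 hmd
  unfold stayProb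
  positivity

lemma inv_one_sub_lt {a p : ℝ} (ha : 1 < a) (hp : 0 < p) (hap : a * p < 1) :
    (1 - p)⁻¹ < 1 + a * p / (a - 1) := by
  have hp1 : 0 < 1 - p := by nlinarith
  have ha1 : 0 < a - 1 := sub_pos.2 ha
  rw [inv_lt_iff_one_lt_mul₀ hp1, one_add_div ha1.ne', div_mul_eq_mul_div, one_lt_div ha1]
  nlinarith

lemma tendsto_nearError_succ (d : ℕ) (C : ℝ) :
    Tendsto (fun n => nearError d C (n + 1) n) atTop (nhds 0) := by
  have hfirst : Tendsto (fun n : ℕ => 3 * (d + 1) * (C + 5) / ((n + 1 : ℕ) : ℝ)) atTop (nhds 0) :=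
    tendsto_const_nhds.div_atTop (tendsto_natCast_atTop_atTop.comp (tendsto_add_atTop_nat 1))
  have hpow : Tendsto (fun n : ℕ => ((n : ℝ) / (2 * (d + 1))) ^ (-(1 / 4) : ℝ)) atTop (nhds 0) :=
    (tendsto_rpow_neg_atTop (by norm_num)).comp
      (tendsto_natCast_atTop_atTop.atTop_div_const (by positivity))
  simpa [nearError] using hfirst.add ((hpow.const_mul (2 * (d + 1) : ℝ)).mul_const (24 ^ d : ℝ))

lemma nearError_anti {C : ℝ} (hC : 0 ≤ C) {M N : ℕ} (hM : 1 ≤ M) (hMN : M ≤ N) (n : ℕ) :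
    nearError d C N n ≤ nearError d C M n := by
  have : (0 : ℝ) < M := Nat.cast_pos.2 hM
  have hMN : (M : ℝ) ≤ N := Nat.cast_le.2 hMN
  unfold nearError
  gcongr

lemma eventually_sum_cylGreen_le (hm1 : 1 ≤ m) (hmd : m + 2 ≤ d)
    {Q : ZLat (d + 1 - m) → Measure (ℕ → ZLat (d + 1 - m))}
    (hQ : IsMarkovFamily (nbrStep (latDir (d + 1 - m))) Q) (hlam : 0 < lam)
    (hχ : Real.exp lam * stayProb d m (retProb (d + 1 - m) Q) < 1) :
    ∀ᶠ N : ℕ in atTop, ∀ [NeZero N], ∀ j, ∀ A ∈ Adm d N j m, ∀ z ∈ A,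
      ∑ x ∈ A, cylGreen (greenHeight d) (z - x) ≤
        1 + Real.exp lam * stayProb d m (retProb (d + 1 - m) Q) / (Real.exp lam - 1) := by
  set p := stayProb d m (retProb (d + 1 - m) Q) with hp
  have hexp : 1 < Real.exp lam := Real.one_lt_exp_iff.2 hlam
  have hp0 : 0 < p := stayProb_pos hm1 (by omega) ENNReal.toReal_nonneg
  have hp1 : 0 < ((d + 1 - m : ℕ) : ℝ) / (d + 1) * (1 - retProb (d + 1 - m) Q) := by
    rw [← one_sub_stayProb (by omega)]
    nlinarith
  have hq : retProb (d + 1 - m) Q < 1 := sub_pos.1 (pos_of_mul_pos_right hp1 (by positivity))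
  have hgap := inv_one_sub_lt hexp hp0 hχ
  obtain ⟨n, hn, hnear⟩ := ((eventually_ge_atTop 1).and ((tendsto_nearError_succ d
    (greenHeight d)).eventually (gt_mem_nhds (sub_pos.2 hgap)))).exists
  filter_upwards [eventually_ge_atTop (n + 1)] with N hN _ j A hA z hz
  have hbound := sum_cylGreen_le_of_mem_Adm hmd (by omega) hA hQ hq hn hN hz
  rw [← one_sub_stayProb (by omega), ← hp] at hbound
  have := nearError_anti (d := d) (greenHeight_pos (d := d) (by omega)).le (by omega) hN n
  linarith

end EventualBound

/-! ### Exponential moments -/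

section Moments

variable {d N : ℕ} [NeZero N] {j : ℤ} {A : Finset (Cyl d N)} {κ lam : ℝ}

/-- The excursion supersolution of `A`, an affine function of the Green function of `A`. -/
noncomputable def greenPotential (κ : ℝ) (A : Finset (Cyl d N)) (z : Cyl d N) : ℝ :=
  1 + κ * ∑ x ∈ A, cylGreen (greenHeight d) (z - x)

lemma nbrMean_greenPotential_add (κ : ℝ) (A : Finset (Cyl d N)) (z : Cyl d N) :
    nbrMean (cylDir d N) (greenPotential κ A) z + (if z ∈ A then κ else 0) =
      greenPotential κ A z := by
  have hmean : nbrMean (cylDir d N) (greenPotential κ A) z =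
      1 + κ * ∑ x ∈ A, nbrMean (cylDir d N) (cylGreen (greenHeight d)) (z - x) := by
    unfold greenPotential
    rw [nbrMean_add, nbrMean_const, nbrMean_const_mul, nbrMean_sum]
    simp only [nbrMean_comp_sub_right]
  have hsource : (if z ∈ A then κ else 0) = κ * ∑ x ∈ A, if z - x = 0 then (1 : ℝ) else 0 := by
    simp only [sub_eq_zero, Finset.sum_ite_eq, mul_ite, mul_one, mul_zero]
  rw [hmean, hsource, add_assoc, ← mul_add, ← Finset.sum_add_distrib, greenPotential]
  simp only [← cylGreen_sub_nbrMean (greenHeight d), add_sub_cancel]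

lemma one_le_greenPotential (hd : 1 ≤ d) (hκ : 0 ≤ κ) (hA : ↑A ⊆ Cblk d N j) {z : Cyl d N}
    (hz : z ∈ BtlClosure d N j) : 1 ≤ greenPotential κ A z := by
  refine le_add_of_nonneg_right (mul_nonneg hκ (Finset.sum_nonneg fun x hx => ?_))
  obtain ⟨hlow, hhigh⟩ := hA hx
  have hz1 : (((j - 2) * N : ℤ) : ℝ) ≤ z.2 := Int.cast_le.2 hz.1
  have hz2 : (z.2 : ℝ) ≤ ((j + 2) * N : ℤ) := Int.cast_le.2 hz.2
  push_cast at hz1 hz2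
  refine cylGreen_nonneg hd ?_
  rw [Prod.snd_sub, ← Nat.cast_le (α := ℝ), Nat.cast_natAbs]
  push_cast
  rw [abs_le]
  constructor <;> linarith

lemma greenPotential_le_of_boundary (hd : 1 ≤ d) (hκ : 0 ≤ κ) (hA : ↑A ⊆ Cblk d N j)
    {z : Cyl d N} (hz : z.2 = (j - 1) * N ∨ z.2 = (j + 1) * N) :
    greenPotential κ A z ≤
      1 + κ * (A.card * (((d + 1) * greenHeight d + farConst d) * N / N ^ d)) := by
  unfold greenPotential
  gcongr
  rw [← nsmul_eq_mul]
  refine Finset.sum_le_card_nsmul _ _ _ fun x hx => cylGreen_le_of_far hd ?_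
  obtain ⟨hlow, hhigh⟩ := hA hx
  rw [Prod.snd_sub, Nat.cast_natAbs]
  push_cast
  rcases hz with hz | hz <;> rw [hz] <;> push_cast
  · linarith [neg_le_abs (((j : ℝ) - 1) * N - x.2)]
  · linarith [le_abs_self (((j : ℝ) + 1) * N - x.2)]

lemma Cblk_subset_Bblk (d N : ℕ) (j : ℤ) : Cblk d N j ⊆ Bblk d N j := by
  rintro x ⟨hlow, hhigh⟩
  have : (0 : ℝ) ≤ N := Nat.cast_nonneg N
  constructor <;> rw [← Int.cast_le (R := ℝ)] <;> push_cast <;> linarith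

lemma isExcursionSupersolution_greenPotential (hd : 1 ≤ d) (hκ : 0 ≤ κ) (hA : ↑A ⊆ Cblk d N j)
    (hexp : ∀ z ∈ A, (Real.exp lam - 1) * greenPotential κ A z ≤ Real.exp lam * κ) :
    IsExcursionSupersolution d N j A lam
      (κ * (A.card * (((d + 1) * greenHeight d + farConst d) * N / N ^ d)))
      (greenPotential κ A) where
  subset_Bblk z hz := Cblk_subset_Bblk d N j (hA hz)
  one_le z hz := one_le_greenPotential hd hκ hA hz
  nbrMean_le z _ := by
    have : 0 ≤ if z ∈ A then κ else 0 := by split_ifs <;> simp [hκ]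
    linarith [nbrMean_greenPotential_add κ A z]
  exp_mul_nbrMean_le z hz := by
    have hmean := nbrMean_greenPotential_add κ A z
    rw [if_pos hz] at hmean
    rw [eq_sub_of_add_eq hmean, mul_sub]
    linarith [hexp z hz]
  le_one_add z hz := greenPotential_le_of_boundary hd hκ hA hz

lemma sum_greenPotential_le (hd : 1 ≤ d) (hκ : 0 ≤ κ) (A : Finset (Cyl d N)) (a : ℤ) :
    ∑ y : Fin d → ZMod N, greenPotential κ A (y, a) ≤
      (N : ℝ) ^ d * (1 + κ * (A.card * ((d + 1) * greenHeight d * N / N ^ d))) := by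
  have hN : (0 : ℝ) < N := Nat.cast_pos.2 (NeZero.pos N)
  have hrow : ∀ x ∈ A, ∑ y : Fin d → ZMod N, cylGreen (greenHeight d) ((y, a) - x) ≤
      (d + 1) * (greenHeight d * N) := by
    intro x _
    have hshift : ∑ y : Fin d → ZMod N, cylGreen (greenHeight d) ((y, a) - x) =
        ∑ y : Fin d → ZMod N, cylGreen (greenHeight d) (y, a - x.2) :=
      Fintype.sum_equiv (Equiv.subRight x.1) _ _ fun _ => rfl
    rw [hshift, sum_cylGreen]
    gcongr
    exact sub_le_self _ (abs_nonneg _)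
  calc ∑ y : Fin d → ZMod N, greenPotential κ A (y, a)
      = N ^ d + κ * ∑ x ∈ A, ∑ y : Fin d → ZMod N, cylGreen (greenHeight d) ((y, a) - x) := by
        simp [greenPotential, Finset.sum_add_distrib, ← Finset.mul_sum, ZMod.card,
          Finset.sum_comm (s := A)]
    _ ≤ N ^ d + κ * (A.card • ((d + 1) * (greenHeight d * N))) := by
        gcongr
        exact Finset.sum_le_card_nsmul _ _ _ hrow
    _ = _ := by
        rw [nsmul_eq_mul]
        field_simp

lemma log_le_of_le_mul_pow {x δ ε : ℝ} (hx : 0 ≤ x) (hδ : 0 ≤ δ) (hε : 0 ≤ ε) {k : ℕ}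
    (h : x ≤ (1 + δ) * (1 + ε) ^ k) : Real.log x ≤ δ + k * ε := by
  rcases hx.eq_or_lt with rfl | hx
  · rw [Real.log_zero]
    positivity
  · calc Real.log x ≤ Real.log (1 + δ) + k * Real.log (1 + ε) := by
          rw [← Real.log_pow, ← Real.log_mul (by positivity) (by positivity)]
          exact Real.log_le_log hx h
      _ ≤ δ + k * ε := by
          have hδ := Real.log_le_sub_one_of_pos (show 0 < 1 + δ by positivity)
          have hε := Real.log_le_sub_one_of_pos (show 0 < 1 + ε by positivity)
          gcongr <;> linarith

variable {Pl : Cyl d N → Measure (ℕ → Cyl d N)}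

lemma log_integral_exp_hitCount_le (hd : 1 ≤ d) (hκ : 0 ≤ κ) (hA : ↑A ⊆ Cblk d N j)
    (hP : IsMarkovFamily (nbrStep (cylDir d N)) Pl) (hlam : 0 ≤ lam)
    (hexp : ∀ z ∈ A, (Real.exp lam - 1) * greenPotential κ A z ≤ Real.exp lam * κ) {k : ℕ}
    (hk : k ≠ 0) :
    Real.log (∫ ω, Real.exp (lam * hitCount j A k ω) ∂(lawP d N Pl)) ≤
      κ * (A.card * ((d + 1) * greenHeight d * N / N ^ d)) +
        k * (κ * (A.card * (((d + 1) * greenHeight d + farConst d) * N / N ^ d))) := by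
  have hgreen := greenHeight_pos hd
  have hfar := farConst_nonneg hd
  obtain ⟨k, rfl⟩ := Nat.exists_eq_succ_of_ne_zero hk
  have hsuper := isExcursionSupersolution_greenPotential hd hκ hA hexp
  exact log_le_of_le_mul_pow (integral_nonneg fun ω => (Real.exp_pos _).le) (by positivity)
    (by positivity) (hsuper.integral_exp_hitCount_le hP hlam (by positivity) k (by positivity)
      fun a _ _ => sum_greenPotential_le hd hκ A a)

/-- The constant `c` of the theorem: the starting slab and each excursion contribute one term. -/
noncomputable def momentConst (d : ℕ) : ℝ :=
  (d + 1) * greenHeight d + ((d + 1) * greenHeight d + farConst d)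

lemma momentConst_pos (hd : 1 ≤ d) : 0 < momentConst d := by
  have hgreen := greenHeight_pos hd
  have hfar := farConst_nonneg hd
  unfold momentConst
  positivity

lemma exp_sub_one_mul_greenPotential_le (hlam : 0 < lam) {χ : ℝ} (hχ : 0 < 1 - χ)
    (hκ : κ = (Real.exp lam - 1) / (1 - χ)) {z : Cyl d N}
    (hG : ∑ x ∈ A, cylGreen (greenHeight d) (z - x) ≤ 1 + χ / (Real.exp lam - 1)) :
    (Real.exp lam - 1) * greenPotential κ A z ≤ Real.exp lam * κ := by
  have hexp : 0 < Real.exp lam - 1 := sub_pos.2 (Real.one_lt_exp_iff.2 hlam)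
  have hκ0 : 0 ≤ κ := hκ ▸ (div_pos hexp hχ).le
  calc (Real.exp lam - 1) * greenPotential κ A z
      ≤ (Real.exp lam - 1) * (1 + κ * (1 + χ / (Real.exp lam - 1))) := by
        unfold greenPotential
        gcongr
    _ = Real.exp lam * κ := by
        rw [hκ]
        field_simp
        ring

lemma inv_card_mul_log_integral_exp_hitCount_le (hd : 1 ≤ d) (hAne : A.Nonempty)
    (hA : ↑A ⊆ Cblk d N j) (hP : IsMarkovFamily (nbrStep (cylDir d N)) Pl) (hlam : 0 < lam) {χ : ℝ}
    (hχ : χ < 1)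
    (hG : ∀ z ∈ A, ∑ x ∈ A, cylGreen (greenHeight d) (z - x) ≤ 1 + χ / (Real.exp lam - 1))
    {u : ℝ} (hu : 1 ≤ u * (N : ℝ) ^ (d - 1)) :
    (A.card : ℝ)⁻¹ * Real.log (∫ ω, Real.exp (lam * hitCount j A ⌊u * (N : ℝ) ^ (d - 1)⌋₊ ω)
      ∂(lawP d N Pl)) ≤ momentConst d * u * (Real.exp lam - 1) / (1 - χ) := by
  have hN : (0 : ℝ) < N := Nat.cast_pos.2 (NeZero.pos N)
  have hgreen := greenHeight_pos hd
  have hfar := farConst_nonneg hd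
  have hcard : (0 : ℝ) < A.card := Nat.cast_pos.2 hAne.card_pos
  have hexp : 0 < Real.exp lam - 1 := sub_pos.2 (Real.one_lt_exp_iff.2 hlam)
  have hχ : 0 < 1 - χ := sub_pos.2 hχ
  set κ := (Real.exp lam - 1) / (1 - χ) with hκ
  have hκ0 : 0 < κ := div_pos hexp hχ
  have hpot := fun z hz => exp_sub_one_mul_greenPotential_le hlam hχ hκ (hG z hz)
  set k := ⌊u * (N : ℝ) ^ (d - 1)⌋₊
  have hlog := log_integral_exp_hitCount_le hd hκ0.le hA hP hlam.le hpot
    (Nat.floor_pos.2 hu).ne' (k := k)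
  have hscale : u * (N : ℝ) ^ (d - 1) * (N / N ^ d) = u := by
    obtain ⟨d, rfl⟩ := Nat.exists_eq_add_of_le' hd
    rw [Nat.add_sub_cancel, pow_succ]
    field_simp
  have hfirst : (N : ℝ) / N ^ d ≤ u := by
    simpa [hscale] using mul_le_mul_of_nonneg_right hu (show (0 : ℝ) ≤ N / N ^ d by positivity)
  have hrest : (k : ℝ) * (N / N ^ d) ≤ u := by
    refine (mul_le_mul_of_nonneg_right (Nat.floor_le ?_) (by positivity)).trans_eq hscale
    linarith
  calc (A.card : ℝ)⁻¹ * Real.log (∫ ω, Real.exp (lam * hitCount j A k ω) ∂(lawP d N Pl))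
      ≤ (A.card : ℝ)⁻¹ * (κ * (A.card * ((d + 1) * greenHeight d * N / N ^ d)) +
          k * (κ * (A.card * (((d + 1) * greenHeight d + farConst d) * N / N ^ d)))) := by gcongr
    _ = κ * ((d + 1) * greenHeight d * (N / N ^ d) +
          ((d + 1) * greenHeight d + farConst d) * (k * (N / N ^ d))) := by field_simp
    _ ≤ κ * ((d + 1) * greenHeight d * u + ((d + 1) * greenHeight d + farConst d) * u) := by gcongr
    _ = _ := by rw [hκ, momentConst]; ring

end Moments

/- The limsup of a real sequence that tends to `-∞` has the junk value `0`. -/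
lemma limsup_le_of_nonneg_of_eventually_le {f : ℕ → ℝ} {b : ℝ} (hb : 0 ≤ b)
    (h : ∀ᶠ n in atTop, f n ≤ b) : limsup f atTop ≤ b := by
  rw [limsup_eq]
  by_cases hbdd : BddBelow {a | ∀ᶠ n in atTop, f n ≤ a}
  · exact csInf_le hbdd h
  · rwa [Real.sInf_of_not_bddBelow hbdd]

/-- **Theorem 1.2, part 1.** Exponential moment bound: there is a constant `c`
depending only on `d` such that for all admissible `m`, `λ` with `χ(λ) < 1` and all
`u > 0`,
`limsup_N sup_{j,A∈A^j_m} |A|⁻¹ log E[exp(λ Σ_{x∈A} 1{H_x ≤ D^j_{uN^{d-1}}})]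
  ≤ c u (e^λ - 1)/(1 - χ(λ))`. -/
theorem statement_3 (d : ℕ) (hd : 3 ≤ d) :
    ∃ c : ℝ, 0 < c ∧
      ∀ m : ℕ, 1 ≤ m → m ≤ d - 2 →
      ∀ Q : ZLat (d + 1 - m) → Measure (ℕ → ZLat (d + 1 - m)), IsLatRW (d + 1 - m) Q →
      ∀ lam : ℝ, 0 < lam →
        Real.exp lam * ((m : ℝ) / (d + 1) + (1 - (m : ℝ) / (d + 1)) * retProb (d + 1 - m) Q)
          < 1 →
      ∀ Pl : ∀ N : ℕ, Cyl d N → Measure (ℕ → Cyl d N), (∀ N : ℕ, IsCylRW d N (Pl N)) →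
      ∀ u : ℝ, 0 < u →
        limsup (fun N : ℕ =>
            sSup {r : ℝ | ∃ j : ℤ, ∃ A ∈ Adm d N j m,
              r = (A.card : ℝ)⁻¹ *
                Real.log (∫ ω,
                  Real.exp (lam * ∑ x ∈ A,
                    if entT {x} ω ≤ DD d N j ⌊u * (N : ℝ) ^ (d - 1)⌋₊ ω then (1 : ℝ) else 0)
                  ∂(lawP d N (Pl N)))}) atTop
          ≤ c * u * (Real.exp lam - 1) /
              (1 - Real.exp lam *
                ((m : ℝ) / (d + 1) + (1 - (m : ℝ) / (d + 1)) * retProb (d + 1 - m) Q)) := by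
  have hd1 : 1 ≤ d := by omega
  refine ⟨momentConst d, momentConst_pos hd1, fun m hm1 hm2 Q hQ lam hlam hχ Pl hP u hu => ?_⟩
  have hexp : 0 ≤ Real.exp lam - 1 := sub_nonneg.2 (Real.one_le_exp hlam.le)
  have hbound : 0 ≤ momentConst d * u * (Real.exp lam - 1) /
      (1 - Real.exp lam * stayProb d m (retProb (d + 1 - m) Q)) :=
    div_nonneg (mul_nonneg (mul_pos (momentConst_pos hd1) hu).le hexp) (sub_pos.2 hχ).le
  have hexcursions : Tendsto (fun N : ℕ => u * (N : ℝ) ^ (d - 1)) atTop atTop :=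
    ((tendsto_pow_atTop (by omega)).comp tendsto_natCast_atTop_atTop).const_mul_atTop hu
  refine limsup_le_of_nonneg_of_eventually_le hbound ?_
  filter_upwards [eventually_gt_atTop 0, hexcursions.eventually_ge_atTop 1,
    eventually_sum_cylGreen_le hm1 (by omega) hQ.isMarkovFamily hlam hχ] with N hN hNu hgreen
  have : NeZero N := ⟨hN.ne'⟩
  refine Real.sSup_le ?_ hbound
  rintro _ ⟨j, A, hA, rfl⟩
  exact inv_card_mul_log_integral_exp_hitCount_le hd1 hA.1 hA.2.1 (hP N).isMarkovFamily hlam hχ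
    (hgreen j A hA) hNu

end DiscCyl
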